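/- Let (v,u,θ) be a classical solution of the one-dimensional compressible Navier–Stokes system on ℝ whose initial data are (M,m)-bounded for some M, m > 0 and which is K-volume-bounded for some K ≥ 1. Then for every p ∈ (2,∞), lim_{t→∞} ( ‖v(·,t)−1‖_{L^p(ℝ)} + ‖u(·,t)‖_{L^p(ℝ)} + ‖θ(·,t)−1‖_{L^p(ℝ)} ) = 0; the same holds with the L^p norm replaced by the supremum norm over ℝ; and moreover lim_{t→∞} ( ‖v_x(·,t)‖_{L²(ℝ)} + ‖u_x(·,t)‖_{L²(ℝ)} + ‖θ_x(·,t)‖_{L²(ℝ)} ) = 0. -/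

import Mathlib

/-!
The proof is an energy method for the 1-D compressible Navier–Stokes system, carried out on time
slices (`NSLT.Sl`) and integrated in time along the solution (`NSLT.Sol`).

* The relative entropy `E = ∫ u²/2 + R η(v) + c_v η(θ)`, `η(s) = s - log s - 1`, is nonincreasing
  with dissipation `D = ∫ u_x²/θ + θ_x²/θ²` (`entropy_int`).
* `D` has weights in `θ`, which is not yet known to be bounded. Testing the temperature equation
  with a truncation supported in large `θ` turns the viscous heating into a bound for `∫∫ u_x²`
  (`heating_int`); a truncated square of the total energy `c_v θ + u²/2`, corrected by a multiple of
  `∫ u⁴`, then bounds `∫∫ θ_x²` (`energy_int`).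
* Since `(log v)_{xt} = (u_x/v)_x`, the effective velocity `μ v_x/v - u` satisfies a damped equation;
  this bounds `‖v_x‖₂` uniformly in time and `∫∫ θ v_x²` (`volume_int`).
* The quantities `∫ u_x²` and `∫ θ_x²` are now integrable in time and have integrable growth
  (`velocity_int`, `temperature_int`), hence tend to zero (`tendsto_zero_of_growth`). The
  interpolation `‖f‖_∞⁴ ≤ 4 ‖f‖₂² ‖f_x‖₂²` (`pow4_le`) then gives `θ → 1` uniformly, so `θ ≥ 1/2` for
  large times, `∫ v_x²` is integrable in time as well, and it tends to zero by the same criterion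
  (`l_int`).
* The same interpolation gives decay in the supremum norm, and `‖f‖_p^p ≤ ‖f‖_∞^{p-2} ‖f‖₂²` gives
  decay in `L^p` for `p > 2`.

Mixed derivatives such as `u_{xt}` need not exist for a classical solution, so the evolution of
the quadratic quantities in first derivatives is derived through difference quotients
(`time_int_dx`). The lower bound on `θ` on each time slice, which makes the entropy integrals
finite, follows from positivity and the far-field condition.
-/

open MeasureTheory Filter Set

noncomputable section

/-- Partial derivative in the spatial variable. -/
def pdx (f : ℝ → ℝ → ℝ) (x t : ℝ) : ℝ := deriv (fun y => f y t) x

/-- Partial derivative in the time variable. -/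
def pdt (f : ℝ → ℝ → ℝ) (x t : ℝ) : ℝ := deriv (fun s => f x s) t

/-- The `L²(ℝ)` norm, valued in `ℝ≥0∞`. -/
def L2 (f : ℝ → ℝ) : ENNReal := eLpNorm f 2 volume

/-- The `H¹(ℝ)` norm, valued in `ℝ≥0∞`. -/
def H1 (f : ℝ → ℝ) : ENNReal := L2 f + L2 (deriv f)

/-- The `H²(ℝ)` norm, valued in `ℝ≥0∞`. -/
def H2 (f : ℝ → ℝ) : ENNReal := L2 f + L2 (deriv f) + L2 (deriv (deriv f))

/-- A classical solution of the 1-D compressible Navier–Stokes system in Lagrangian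
coordinates on `ℝ`, together with the regularity and far-field conditions. -/
structure IsClassicalSolution (μ κ R cv : ℝ) (v u θ : ℝ → ℝ → ℝ) : Prop where
  v_pos : ∀ x t : ℝ, 0 ≤ t → 0 < v x t
  θ_pos : ∀ x t : ℝ, 0 ≤ t → 0 < θ x t
  smooth_x_v : ∀ t : ℝ, 0 ≤ t → ContDiff ℝ 2 (fun x => v x t)
  smooth_x_u : ∀ t : ℝ, 0 ≤ t → ContDiff ℝ 2 (fun x => u x t)
  smooth_x_θ : ∀ t : ℝ, 0 ≤ t → ContDiff ℝ 2 (fun x => θ x t)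
  smooth_t_v : ∀ x t : ℝ, 0 ≤ t → DifferentiableAt ℝ (fun s => v x s) t
  smooth_t_u : ∀ x t : ℝ, 0 ≤ t → DifferentiableAt ℝ (fun s => u x s) t
  smooth_t_θ : ∀ x t : ℝ, 0 ≤ t → DifferentiableAt ℝ (fun s => θ x s) t
  eq_mass : ∀ x t : ℝ, 0 ≤ t → pdt v x t = pdx u x t
  eq_momentum : ∀ x t : ℝ, 0 ≤ t →
    pdt u x t + pdx (fun y s => R * θ y s / v y s) x t
      = μ * pdx (fun y s => pdx u y s / v y s) x t
  eq_energy : ∀ x t : ℝ, 0 ≤ t →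
    cv * pdt θ x t + (R * θ x t / v x t) * pdx u x t
      = κ * pdx (fun y s => pdx θ y s / v y s) x t + μ * (pdx u x t) ^ 2 / v x t
  reg_H1 : ∀ T : ℝ, 0 ≤ T → ∃ B : ℝ, ∀ t ∈ Icc (0 : ℝ) T,
    H1 (fun x => v x t - 1) + H1 (fun x => u x t) + H1 (fun x => θ x t - 1)
      ≤ ENNReal.ofReal B
  reg_H2 : ∀ T : ℝ, 0 < T →
    (∫⁻ t in Icc (0 : ℝ) T,
      (H2 (fun x => u x t) ^ 2 + H2 (fun x => θ x t - 1) ^ 2)) < ⊤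
  farfield_v : ∀ t : ℝ, 0 ≤ t → Tendsto (fun x => v x t) (cocompact ℝ) (nhds 1)
  farfield_u : ∀ t : ℝ, 0 ≤ t → Tendsto (fun x => u x t) (cocompact ℝ) (nhds 0)
  farfield_θ : ∀ t : ℝ, 0 ≤ t → Tendsto (fun x => θ x t) (cocompact ℝ) (nhds 1)

/-- The initial data of `(v, u, θ)` are `(M, m)`-bounded. -/
def InitBounded (M m : ℝ) (v u θ : ℝ → ℝ → ℝ) : Prop :=
  H1 (fun x => v x 0 - 1) + H1 (fun x => u x 0) + H1 (fun x => θ x 0 - 1)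
      ≤ ENNReal.ofReal M
    ∧ (∀ x : ℝ, m ≤ v x 0) ∧ (∀ x : ℝ, m ≤ θ x 0)

/-- The solution is `K`-volume-bounded. -/
def VolBounded (K : ℝ) (v : ℝ → ℝ → ℝ) : Prop :=
  ∀ x t : ℝ, 0 ≤ t → K⁻¹ ≤ v x t ∧ v x t ≤ K

end

namespace NSLT

/-! ### Square-integrable functions -/

lemma int_mul {α : Type*} [MeasurableSpace α] {m : Measure α} {f g : α → ℝ}
    (hf : MemLp f 2 m) (hg : MemLp g 2 m) : Integrable (fun x => f x * g x) m :=
  hf.integrable_mul hg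

lemma int_abs_mul {α : Type*} [MeasurableSpace α] {m : Measure α} {f g : α → ℝ}
    (hf : MemLp f 2 m) (hg : MemLp g 2 m) : Integrable (fun x => |f x * g x|) m :=
  (int_mul hf hg).abs

/-- A bounded multiple of an `L²` function is in `L²`. -/
lemma memT2 {α : Type*} [MeasurableSpace α] {m : Measure α} {b f : α → ℝ}
    (hb : MemLp b ⊤ m) (hf : MemLp f 2 m) : MemLp (fun x => b x * f x) 2 m :=
  hf.mul hb

lemma memTT {α : Type*} [MeasurableSpace α] {m : Measure α} {b f : α → ℝ}
    (hb : MemLp b ⊤ m) (hf : MemLp f ⊤ m) : MemLp (fun x => b x * f x) ⊤ m :=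
  hf.mul hb

lemma int_mul3 {α : Type*} [MeasurableSpace α] {m : Measure α} {b f g : α → ℝ}
    (hb : MemLp b ⊤ m) (hf : MemLp f 2 m) (hg : MemLp g 2 m) :
    Integrable (fun x => b x * f x * g x) m :=
  (memT2 hb hf).integrable_mul hg

lemma int_sq {α : Type*} [MeasurableSpace α] {m : Measure α} {f : α → ℝ}
    (hf : MemLp f 2 m) : Integrable (fun x => f x ^ 2) m := hf.integrable_sq

lemma memLp_two_of_abs_le {α : Type*} [MeasurableSpace α] {m : Measure α} {f g : α → ℝ} (C : ℝ)
    (hg : MemLp g 2 m) (hf : AEStronglyMeasurable f m) (h : ∀ᵐ x ∂m, |f x| ≤ C * |g x|) :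
    MemLp f 2 m :=
  hg.of_le_mul hf (c := C) (by simpa using h)

/-- The Cauchy–Schwarz inequality. -/
lemma cauchy_schwarz {α : Type*} [MeasurableSpace α] {m : Measure α} {f g : α → ℝ}
    (hf : MemLp f 2 m) (hg : MemLp g 2 m) :
    (∫ x, |f x * g x| ∂m) ^ 2 ≤ (∫ x, f x ^ 2 ∂m) * ∫ x, g x ^ 2 ∂m := by
  have key : ∀ a : ℝ, 0 ≤ (∫ x, f x ^ 2 ∂m) * (a * a) + (-2 * ∫ x, |f x * g x| ∂m) * a
      + ∫ x, g x ^ 2 ∂m := by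
    intro a
    have h1 : 0 ≤ ∫ x, (a * |f x| - |g x|) ^ 2 ∂m := integral_nonneg fun x => sq_nonneg _
    have h2 : ∀ x, (a * |f x| - |g x|) ^ 2
        = (a * a) * f x ^ 2 + (-2 * a) * |f x * g x| + g x ^ 2 := by
      intro x
      rw [abs_mul, ← sq_abs (f x), ← sq_abs (g x)]; ring
    simp_rw [h2] at h1
    have i1 : Integrable (fun x => (a * a) * f x ^ 2) m := (int_sq hf).const_mul _
    have i2 : Integrable (fun x => (-2 * a) * |f x * g x|) m := (int_abs_mul hf hg).const_mul _
    have i3 : Integrable (fun x => (a * a) * f x ^ 2 + (-2 * a) * |f x * g x|) m := i1.add i2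
    rw [integral_add i3 (int_sq hg), integral_add i1 i2, integral_const_mul,
      integral_const_mul] at h1
    linarith
  have := discrim_le_zero key
  unfold discrim at this
  nlinarith

/-! ### One-dimensional Sobolev inequalities -/

lemma abs_le_integral_deriv {f f' : ℝ → ℝ} (hd : ∀ x, HasDerivAt f (f' x) x)
    (h0 : Tendsto f atBot (nhds 0)) (hi : Integrable f') (x : ℝ) : |f x| ≤ ∫ y, |f' y| := by
  have h := integral_Iic_of_hasDerivAt_of_tendsto (a := x) (hd x).continuousAt.continuousWithinAt
    (fun y _ => hd y) hi.integrableOn h0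
  rw [sub_zero] at h
  rw [← h]
  calc |∫ y in Iic x, f' y| ≤ ∫ y in Iic x, |f' y| := abs_integral_le_integral_abs
    _ ≤ ∫ y, |f' y| := setIntegral_le_integral hi.abs (Eventually.of_forall fun y => abs_nonneg _)

lemma tendsto_sq_atBot {f f' : ℝ → ℝ} (hd : ∀ x, HasDerivAt f (f' x) x)
    (hf : MemLp f 2) (hf' : MemLp f' 2) : Tendsto (fun x => f x ^ 2) atBot (nhds 0) := by
  refine tendsto_zero_of_hasDerivAt_of_integrableOn_Iic (a := 0) (f' := fun x => 2 * (f x * f' x))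
    (fun x _ => ?_) ((int_mul hf hf').const_mul 2).integrableOn (int_sq hf).integrableOn
  have := (hd x).pow 2
  refine this.congr_deriv ?_
  simp; ring

lemma sq_le_int {f f' : ℝ → ℝ} (hd : ∀ x, HasDerivAt f (f' x) x)
    (hf : MemLp f 2) (hf' : MemLp f' 2) (x : ℝ) : f x ^ 2 ≤ 2 * ∫ y, |f y * f' y| := by
  have hd2 : ∀ x, HasDerivAt (fun x => f x ^ 2) (2 * (f x * f' x)) x := by
    intro x
    refine ((hd x).pow 2).congr_deriv ?_
    simp; ring
  have := abs_le_integral_deriv hd2 (tendsto_sq_atBot hd hf hf') ((int_mul hf hf').const_mul 2) x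
  rw [abs_of_nonneg (sq_nonneg _)] at this
  refine this.trans (le_of_eq ?_)
  rw [← integral_const_mul]
  congr 1; ext y; rw [abs_mul]; simp

/-- Agmon's inequality `‖f‖_∞⁴ ≤ 4 ‖f‖₂² ‖f'‖₂²`. -/
lemma pow4_le {f f' : ℝ → ℝ} (hd : ∀ x, HasDerivAt f (f' x) x)
    (hf : MemLp f 2) (hf' : MemLp f' 2) (x : ℝ) :
    f x ^ 4 ≤ 4 * ((∫ y, f y ^ 2) * ∫ y, f' y ^ 2) := by
  have h1 := sq_le_int hd hf hf' x
  have h2 := cauchy_schwarz hf hf'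
  have h3 : 0 ≤ ∫ y, |f y * f' y| := integral_nonneg fun _ => abs_nonneg _
  nlinarith [sq_nonneg (f x)]

lemma sq_le_add {f f' : ℝ → ℝ} (hd : ∀ x, HasDerivAt f (f' x) x)
    (hf : MemLp f 2) (hf' : MemLp f' 2) {a : ℝ} (ha : 0 < a) (x : ℝ) :
    f x ^ 2 ≤ a * (∫ y, f' y ^ 2) + a⁻¹ * ∫ y, f y ^ 2 := by
  have h1 := pow4_le hd hf hf' x
  set A := ∫ y, f y ^ 2
  set B := ∫ y, f' y ^ 2
  have hA : 0 ≤ A := integral_nonneg fun _ => sq_nonneg _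
  have hB : 0 ≤ B := integral_nonneg fun _ => sq_nonneg _
  have h2 : 0 ≤ a * B + a⁻¹ * A := by positivity
  refine abs_le_of_sq_le_sq' ?_ h2 |>.2
  have h3 : (a * B + a⁻¹ * A) ^ 2 = (a * B - a⁻¹ * A) ^ 2 + 4 * (A * B) := by
    field_simp; ring
  rw [h3]
  nlinarith [sq_nonneg (a * B - a⁻¹ * A)]

lemma memLp_top_of_H1 {f f' : ℝ → ℝ} (hd : ∀ x, HasDerivAt f (f' x) x)
    (hf : MemLp f 2) (hf' : MemLp f' 2) : MemLp f ⊤ := by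
  refine memLp_top_of_bound hf.1 (Real.sqrt (2 * ∫ y, |f y * f' y|)) (Eventually.of_forall ?_)
  intro x
  rw [Real.norm_eq_abs]
  exact Real.abs_le_sqrt (sq_le_int hd hf hf' x)

/-- Integration by parts on the line, for two `H¹` functions. -/
lemma int_parts {f f' g g' : ℝ → ℝ} (hd : ∀ x, HasDerivAt f (f' x) x)
    (hg : ∀ x, HasDerivAt g (g' x) x) (f2 : MemLp f 2) (f2' : MemLp f' 2)
    (g2 : MemLp g 2) (g2' : MemLp g' 2) : ∫ x, (f' x * g x + f x * g' x) = 0 :=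
  integral_eq_zero_of_hasDerivAt_of_integrable (fun x => (hd x).mul (hg x))
    ((int_mul f2' g2).add (int_mul f2 g2')) (int_mul f2 g2)

/-! ### Difference quotients -/

/-- The forward difference quotient. -/
noncomputable def dq (h : ℝ) (f : ℝ → ℝ) (x : ℝ) : ℝ := (f (x + h) - f x) / h

lemma memLp_shift {f : ℝ → ℝ} (hf : MemLp f 2) (h : ℝ) : MemLp (fun x => f (x + h)) 2 :=
  hf.comp_measurePreserving (measurePreserving_add_right volume h)

lemma memLp_dq {f : ℝ → ℝ} (hf : MemLp f 2) (h : ℝ) : MemLp (dq h f) 2 := by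
  have := ((memLp_shift hf h).sub hf).mul_const h⁻¹
  refine this.ae_eq (Eventually.of_forall fun x => ?_)
  simp [dq, div_eq_mul_inv]

/-- Difference quotients do not increase the `L²` norm beyond that of the derivative. -/
lemma dq_sq_le {f f' : ℝ → ℝ} (hd : ∀ x, HasDerivAt f (f' x) x) (hc : Continuous f')
    (hf : MemLp f 2) (hf' : MemLp f' 2) {h : ℝ} (hh : 0 < h) :
    ∫ x, dq h f x ^ 2 ≤ ∫ x, f' x ^ 2 := by
  -- pointwise: `(f (x+h) - f x)² ≤ h ∫₀ʰ f'(x+r)² dr`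
  have hpt : ∀ x, dq h f x ^ 2 ≤ h⁻¹ * ∫ r in (0:ℝ)..h, f' (x + r) ^ 2 := by
    intro x
    have h1 : ∫ r in (0:ℝ)..h, f' (x + r) = f (x + h) - f x := by
      have := intervalIntegral.integral_eq_sub_of_hasDerivAt (a := 0) (b := h)
        (f := fun r => f (x + r)) (f' := fun r => f' (x + r))
        (fun r _ => by
          have := (hd (x + r)).comp_const_add x r
          exact this) ((by fun_prop : Continuous fun r => f' (x + r)).intervalIntegrable _ _)
      simpa using this
    set A := ∫ r in (0:ℝ)..h, f' (x + r) ^ 2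
    set d := dq h f x
    have hd' : ∫ r in (0:ℝ)..h, f' (x + r) = h * d := by
      rw [h1]; simp only [d, dq]; field_simp
    have h2 : 0 ≤ ∫ r in (0:ℝ)..h, (f' (x + r) - d) ^ 2 :=
      intervalIntegral.integral_nonneg hh.le fun _ _ => sq_nonneg _
    have h3 : ∫ r in (0:ℝ)..h, (f' (x + r) - d) ^ 2 = A - 2 * d * (h * d) + h * d ^ 2 := by
      have e : ∀ r, (f' (x + r) - d) ^ 2 = f' (x + r) ^ 2 - 2 * d * f' (x + r) + d ^ 2 := by
        intro r; ring
      simp_rw [e]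
      rw [intervalIntegral.integral_add, intervalIntegral.integral_sub,
        intervalIntegral.integral_const_mul, hd', intervalIntegral.integral_const]
      · simp [A]
      all_goals exact Continuous.intervalIntegrable (by fun_prop) _ _
    rw [h3] at h2
    have : h * d ^ 2 ≤ A := by nlinarith
    rw [inv_mul_eq_div, le_div_iff₀ hh]; linarith
  have hmeas : Measurable fun p : ℝ × ℝ => f' (p.1 + p.2) ^ 2 :=
    (by fun_prop : Continuous fun p : ℝ × ℝ => f' (p.1 + p.2) ^ 2).measurable
  have hI : Integrable (fun p : ℝ × ℝ => f' (p.1 + p.2) ^ 2)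
      (volume.prod (volume.restrict (Ioc 0 h))) := by
    rw [integrable_prod_iff' hmeas.aestronglyMeasurable]
    constructor
    · exact Eventually.of_forall fun y => int_sq (memLp_shift hf' y)
    · have : ∀ y : ℝ, ∫ x, ‖f' (x + y) ^ 2‖ = ∫ x, f' x ^ 2 := by
        intro y
        simp only [norm_pow, Real.norm_eq_abs, sq_abs]
        exact integral_add_right_eq_self (fun x => f' x ^ 2) y
      simp_rw [this]
      exact integrable_const _
  have hI2 := hI.integral_prod_left
  calc ∫ x, dq h f x ^ 2 ≤ ∫ x, h⁻¹ * ∫ r in Ioc 0 h, f' (x + r) ^ 2 := by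
        refine integral_mono (int_sq (memLp_dq hf h)) (hI2.const_mul _) fun x => ?_
        have := hpt x
        rwa [intervalIntegral.integral_of_le hh.le] at this
    _ = h⁻¹ * ∫ r in Ioc 0 h, ∫ x, f' (x + r) ^ 2 := by
        rw [integral_const_mul, ← integral_prod _ hI, integral_prod_symm _ hI]
    _ = ∫ x, f' x ^ 2 := by
        have : ∀ y : ℝ, ∫ x, f' (x + y) ^ 2 = ∫ x, f' x ^ 2 := fun y =>
          integral_add_right_eq_self (fun x => f' x ^ 2) y
        simp_rw [this]
        simp [hh.le]
        field_simp

/-- The symmetric second difference quotient. -/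
noncomputable def dq2 (h : ℝ) (f : ℝ → ℝ) (x : ℝ) : ℝ := (f (x + h) - 2 * f x + f (x - h)) / h ^ 2

lemma memLp_dq2 {f : ℝ → ℝ} (hf : MemLp f 2) (h : ℝ) : MemLp (dq2 h f) 2 := by
  have h1 : MemLp (fun x => f (x - h)) 2 := by simpa [sub_eq_add_neg] using memLp_shift hf (-h)
  have := (((memLp_shift hf h).sub (hf.const_mul 2)).add h1).mul_const (h ^ 2)⁻¹
  refine this.ae_eq (Eventually.of_forall fun x => ?_)
  simp [dq2, div_eq_mul_inv]

lemma dq2_eq (h : ℝ) (f : ℝ → ℝ) (x : ℝ) :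
    dq2 h f x = dq h (fun y => dq h f (y - h)) x := by
  simp only [dq2, dq]
  by_cases hh : h = 0
  · simp [hh]
  · field_simp; simp; ring

lemma dq2_sq_le {f f' f'' : ℝ → ℝ} (hd : ∀ x, HasDerivAt f (f' x) x)
    (hd' : ∀ x, HasDerivAt f' (f'' x) x) (hc : Continuous f'')
    (hf : MemLp f 2) (hf' : MemLp f' 2) (hf'' : MemLp f'' 2) {h : ℝ} (hh : 0 < h) :
    ∫ x, dq2 h f x ^ 2 ≤ ∫ x, f'' x ^ 2 := by
  have hcf' : Continuous f' := continuous_iff_continuousAt.2 fun x => (hd' x).continuousAt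
  simp_rw [dq2_eq]
  have hshift : ∀ {g : ℝ → ℝ}, MemLp g 2 → MemLp (fun x => g (x - h)) 2 := fun hg => by
    simpa [sub_eq_add_neg] using memLp_shift hg (-h)
  have hD : ∀ x, HasDerivAt (fun y => dq h f (y - h)) (dq h f' (x - h)) x := by
    intro x
    simp only [dq]
    have e1 : HasDerivAt (fun y => f (y - h + h)) (f' (x - h + h)) x := by
      simpa using hd x
    have e2 : HasDerivAt (fun y => f (y - h)) (f' (x - h)) x := by
      simpa using (hd (x - h)).comp_sub_const x h
    exact (e1.sub e2).div_const h
  refine (dq_sq_le hD (by unfold dq; fun_prop) (hshift (memLp_dq hf h))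
    (hshift (memLp_dq hf' h)) hh).trans ?_
  have : ∫ x, dq h f' (x - h) ^ 2 = ∫ x, dq h f' x ^ 2 :=
    integral_sub_right_eq_self (fun x => dq h f' x ^ 2) h
  rw [this]
  exact dq_sq_le hd' hc hf' hf'' hh

lemma dq_sum_parts {f g : ℝ → ℝ} (hf : MemLp f 2) (hg : MemLp g 2) (h : ℝ) :
    ∫ x, dq h f x * dq h g x = - ∫ x, dq2 h f x * g x := by
  have hfm : MemLp (fun x => f (x - h)) 2 := by simpa [sub_eq_add_neg] using memLp_shift hf (-h)
  have hfp := memLp_shift hf h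
  have hgp := memLp_shift hg h
  have e1 : ∫ x, f (x + h) * g (x + h) = ∫ x, f x * g x :=
    integral_add_right_eq_self (fun x => f x * g x) h
  have e2 : ∫ x, f x * g (x + h) = ∫ x, f (x - h) * g x := by
    rw [← integral_add_right_eq_self (fun x => f (x - h) * g x) h]; simp
  have a1 : ∀ x, dq h f x * dq h g x = (h ^ 2)⁻¹ * (f (x + h) * g (x + h) - f (x + h) * g x
      - f x * g (x + h) + f x * g x) := by
    intro x; simp only [dq]
    by_cases hh : h = 0
    · simp [hh]
    · field_simp; ring
  have a2 : ∀ x, dq2 h f x * g x = (h ^ 2)⁻¹ * (f (x + h) * g x - 2 * (f x * g x)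
      + f (x - h) * g x) := by
    intro x; simp only [dq2, div_eq_mul_inv]; ring
  simp_rw [a1, a2]
  rw [integral_const_mul, integral_const_mul, integral_add, integral_sub, integral_sub,
    integral_add, integral_sub, integral_const_mul, e1, e2]
  · ring
  · exact int_mul hfp hg
  · exact (int_mul hf hg).const_mul 2
  · exact (int_mul hfp hg).sub ((int_mul hf hg).const_mul 2)
  · exact int_mul hfm hg
  · exact int_mul hfp hgp
  · exact int_mul hfp hg
  · exact (int_mul hfp hgp).sub (int_mul hfp hg)
  · exact int_mul hf hgp
  · exact ((int_mul hfp hgp).sub (int_mul hfp hg)).sub (int_mul hf hgp)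
  · exact int_mul hf hg

/-- The null sequence of step sizes used for difference quotients. -/
noncomputable def hs (n : ℕ) : ℝ := 1 / ((n : ℝ) + 1)

lemma hs_pos (n : ℕ) : 0 < hs n := by unfold hs; positivity

lemma hs_tendsto : Tendsto hs atTop (nhds 0) := tendsto_one_div_add_atTop_nhds_zero_nat

lemma dq_tendsto {f : ℝ → ℝ} {d x : ℝ} (hd : HasDerivAt f d x) :
    Tendsto (fun n => dq (hs n) f x) atTop (nhds d) := by
  have h1 := hasDerivAt_iff_tendsto_slope_zero.1 hd
  have h2 : Tendsto hs atTop (nhdsWithin 0 {0}ᶜ) :=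
    tendsto_nhdsWithin_iff.2 ⟨hs_tendsto, Eventually.of_forall fun n => (hs_pos n).ne'⟩
  refine (h1.comp h2).congr fun n => ?_
  simp [dq, div_eq_inv_mul]

lemma dq2_tendsto {f f' f'' : ℝ → ℝ} (hd : ∀ x, HasDerivAt f (f' x) x)
    (hd' : ∀ x, HasDerivAt f' (f'' x) x) (hc : Continuous f'') (x : ℝ) :
    Tendsto (fun n => dq2 (hs n) f x) atTop (nhds (f'' x)) := by
  -- two applications of the mean value theorem
  have hmvt : ∀ n, ∃ z, |z - x| ≤ hs n ∧ dq2 (hs n) f x = f'' z := by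
    intro n
    set h := hs n
    have hh : 0 < h := hs_pos n
    have hD : ∀ y, HasDerivAt (fun y => dq h f (y - h)) (dq h f' (y - h)) y := by
      intro y
      simp only [dq]
      have e1 : HasDerivAt (fun y => f (y - h + h)) (f' (y - h + h)) y := by
        simpa using hd y
      have e2 : HasDerivAt (fun y => f (y - h)) (f' (y - h)) y := by
        simpa using (hd (y - h)).comp_sub_const y h
      exact (e1.sub e2).div_const h
    obtain ⟨y, hy, hy'⟩ := exists_hasDerivAt_eq_slope _ _ (show x < x + h by linarith)
      (fun z _ => (hD z).continuousAt.continuousWithinAt) (fun z _ => hD z)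
    obtain ⟨z, hz, hz'⟩ := exists_hasDerivAt_eq_slope f' f'' (show y - h < y by linarith)
      (fun z _ => (hd' z).continuousAt.continuousWithinAt) (fun z _ => hd' z)
    refine ⟨z, ?_, ?_⟩
    · rw [abs_le]; constructor <;> linarith [hy.1, hy.2, hz.1, hz.2]
    · rw [dq2_eq, hz']
      have : dq h f' (y - h) = (f' y - f' (y - h)) / (y - (y - h)) := by simp [dq]
      rw [← this, hy']; simp [dq]
  choose z hz hz' using hmvt
  have hzx : Tendsto z atTop (nhds x) := by
    rw [tendsto_iff_dist_tendsto_zero]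
    exact squeeze_zero (fun _ => dist_nonneg) (fun n => by rw [Real.dist_eq]; exact hz n) hs_tendsto
  simp_rw [hz']
  exact (hc.tendsto x).comp hzx

/-! ### Passing to the limit under the integral -/

lemma fatou_eventually {α : Type*} [MeasurableSpace α] {m : Measure α} {F : ℕ → α → ℝ} {f : α → ℝ}
    (hF : ∀ n, Integrable (F n) m) (hf : Integrable f m) (h0 : ∀ n, ∀ᵐ x ∂m, 0 ≤ F n x)
    (hlim : ∀ᵐ x ∂m, Tendsto (fun n => F n x) atTop (nhds (f x))) {ε : ℝ} (hε : 0 < ε) :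
    ∀ᶠ n in atTop, ∫ x, f x ∂m - ε < ∫ x, F n x ∂m := by
  have hf0 : ∀ᵐ x ∂m, 0 ≤ f x := by
    filter_upwards [ae_all_iff.2 h0, hlim] with x h1 h2
    exact ge_of_tendsto' h2 h1
  by_cases hc : ∫ x, f x ∂m - ε < 0
  · exact Eventually.of_forall fun n => hc.trans_le (integral_nonneg_of_ae (h0 n))
  push Not at hc
  have h1 : ∫⁻ x, ENNReal.ofReal (f x) ∂m
      ≤ liminf (fun n => ∫⁻ x, ENNReal.ofReal (F n x) ∂m) atTop := by
    refine le_trans (le_of_eq ?_) (lintegral_liminf_le' fun n =>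
      (hF n).aestronglyMeasurable.aemeasurable.ennreal_ofReal)
    refine lintegral_congr_ae ?_
    filter_upwards [hlim] with x hx
    exact ((ENNReal.continuous_ofReal.tendsto _).comp hx).liminf_eq.symm
  have e : ∀ n, ∫⁻ x, ENNReal.ofReal (F n x) ∂m = ENNReal.ofReal (∫ x, F n x ∂m) := fun n =>
    (ofReal_integral_eq_lintegral_ofReal (hF n) (h0 n)).symm
  rw [← ofReal_integral_eq_lintegral_ofReal hf hf0] at h1
  simp_rw [e] at h1
  have h2 : ENNReal.ofReal (∫ x, f x ∂m - ε)
      < liminf (fun n => ENNReal.ofReal (∫ x, F n x ∂m)) atTop := by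
    refine lt_of_lt_of_le ?_ h1
    rw [ENNReal.ofReal_lt_ofReal_iff (by linarith)]; linarith
  filter_upwards [eventually_lt_of_lt_liminf h2] with n hn
  by_contra hcon
  push Not at hcon
  exact absurd (ENNReal.ofReal_le_ofReal hcon) (not_le.2 hn)

/-- Pratt's generalised dominated convergence theorem. -/
lemma pratt {α : Type*} [MeasurableSpace α] {m : Measure α} {F G : ℕ → α → ℝ} {f g : α → ℝ}
    (hF : ∀ n, Integrable (F n) m) (hf : Integrable f m)
    (hG : ∀ n, Integrable (G n) m) (hg : Integrable g m)
    (hFG : ∀ n, ∀ᵐ x ∂m, |F n x| ≤ G n x)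
    (hFl : ∀ᵐ x ∂m, Tendsto (fun n => F n x) atTop (nhds (f x)))
    (hGl : ∀ᵐ x ∂m, Tendsto (fun n => G n x) atTop (nhds (g x)))
    (hGi : Tendsto (fun n => ∫ x, G n x ∂m) atTop (nhds (∫ x, g x ∂m))) :
    Tendsto (fun n => ∫ x, F n x ∂m) atTop (nhds (∫ x, f x ∂m)) := by
  rw [Metric.tendsto_atTop']
  intro ε hε
  have h1 := fatou_eventually (fun n => (hG n).add (hF n)) (hg.add hf)
    (fun n => by
      filter_upwards [hFG n] with x hx
      have := (abs_le.1 hx).1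
      simp only [Pi.add_apply]; linarith)
    (by filter_upwards [hFl, hGl] with x h1 h2 using h2.add h1) (half_pos hε)
  have h2 := fatou_eventually (fun n => (hG n).sub (hF n)) (hg.sub hf)
    (fun n => by
      filter_upwards [hFG n] with x hx
      have := (abs_le.1 hx).2
      simp only [Pi.sub_apply]; linarith)
    (by filter_upwards [hFl, hGl] with x h1 h2 using h2.sub h1) (half_pos hε)
  have h3 := Metric.tendsto_nhds.1 hGi (ε / 2) (half_pos hε)
  have h4 := h1.and (h2.and h3)
  obtain ⟨N, hN⟩ := eventually_atTop.1 h4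
  refine ⟨N, fun n hn => ?_⟩
  obtain ⟨a, b, c⟩ := hN n hn.le
  simp only [Pi.add_apply, Pi.sub_apply] at a b
  rw [integral_add hg hf, integral_add (hG n) (hF n)] at a
  rw [integral_sub hg hf, integral_sub (hG n) (hF n)] at b
  rw [Real.dist_eq, abs_lt] at c ⊢
  constructor <;> linarith [c.1, c.2]

/-- Convergence of `L²` norms along an a.e. convergent sequence whose norms do not exceed that of
the limit. -/
lemma tendsto_int_sq {α : Type*} [MeasurableSpace α] {m : Measure α} {F : ℕ → α → ℝ} {f : α → ℝ}
    (hF : ∀ n, MemLp (F n) 2 m) (hf : MemLp f 2 m)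
    (hlim : ∀ᵐ x ∂m, Tendsto (fun n => F n x) atTop (nhds (f x)))
    (hle : ∀ n, ∫ x, F n x ^ 2 ∂m ≤ ∫ x, f x ^ 2 ∂m) :
    Tendsto (fun n => ∫ x, F n x ^ 2 ∂m) atTop (nhds (∫ x, f x ^ 2 ∂m)) := by
  rw [Metric.tendsto_atTop']
  intro ε hε
  obtain ⟨N, hN⟩ := eventually_atTop.1 (fatou_eventually (fun n => int_sq (hF n)) (int_sq hf)
    (fun n => Eventually.of_forall fun x => sq_nonneg _)
    (by filter_upwards [hlim] with x hx using hx.pow 2) hε)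
  refine ⟨N, fun n hn => ?_⟩
  have := hN n hn.le
  rw [Real.dist_eq, abs_lt]
  constructor <;> linarith [hle n]

lemma tendsto_int_mul {α : Type*} [MeasurableSpace α] {m : Measure α} {F G : ℕ → α → ℝ}
    {f g : α → ℝ}
    (hF : ∀ n, MemLp (F n) 2 m) (hf : MemLp f 2 m)
    (hlim : ∀ᵐ x ∂m, Tendsto (fun n => F n x) atTop (nhds (f x)))
    (hle : ∀ n, ∫ x, F n x ^ 2 ∂m ≤ ∫ x, f x ^ 2 ∂m)
    (hG : ∀ n, MemLp (G n) 2 m) (hg : MemLp g 2 m)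
    (hlim' : ∀ᵐ x ∂m, Tendsto (fun n => G n x) atTop (nhds (g x)))
    (hle' : ∀ n, ∫ x, G n x ^ 2 ∂m ≤ ∫ x, g x ^ 2 ∂m) :
    Tendsto (fun n => ∫ x, F n x * G n x ∂m) atTop (nhds (∫ x, f x * g x ∂m)) := by
  refine pratt (fun n => int_mul (hF n) (hG n)) (int_mul hf hg)
    (G := fun n x => F n x ^ 2 + G n x ^ 2) (g := fun x => f x ^ 2 + g x ^ 2)
    (fun n => (int_sq (hF n)).add (int_sq (hG n))) ((int_sq hf).add (int_sq hg)) ?_ ?_ ?_ ?_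
  · intro n
    refine Eventually.of_forall fun x => ?_
    rw [abs_le]
    constructor <;> nlinarith [sq_nonneg (F n x + G n x), sq_nonneg (F n x - G n x),
      sq_nonneg (F n x), sq_nonneg (G n x)]
  · filter_upwards [hlim, hlim'] with x h1 h2 using h1.mul h2
  · filter_upwards [hlim, hlim'] with x h1 h2 using (h1.pow 2).add (h2.pow 2)
  · have e : ∀ n, ∫ x, (F n x ^ 2 + G n x ^ 2) ∂m = ∫ x, F n x ^ 2 ∂m + ∫ x, G n x ^ 2 ∂m :=
      fun n => integral_add (int_sq (hF n)) (int_sq (hG n))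
    simp_rw [e]
    rw [integral_add (int_sq hf) (int_sq hg)]
    exact (tendsto_int_sq hF hf hlim hle).add (tendsto_int_sq hG hg hlim' hle')

end NSLT

namespace NSLT

/-! ### Scalar inequalities for the entropy density -/

/-- The convex function `s - log s - 1`, which measures the distance of `s` from `1` in the
relative entropy. -/
noncomputable def eta (s : ℝ) : ℝ := s - Real.log s - 1

lemma eta_lower {s : ℝ} (hs : 0 < s) : (Real.sqrt s - 1) ^ 2 ≤ eta s := by
  have h1 : Real.log s = 2 * Real.log (Real.sqrt s) := by
    rw [Real.log_sqrt hs.le]; ring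
  have h2 := Real.log_le_sub_one_of_pos (Real.sqrt_pos.2 hs)
  have h3 := Real.sq_sqrt hs.le
  unfold eta
  nlinarith

lemma eta_nonneg {s : ℝ} (hs : 0 < s) : 0 ≤ eta s := (sq_nonneg _).trans (eta_lower hs)

lemma eta_upper {s : ℝ} (hs : 0 < s) : eta s ≤ (s - 1) ^ 2 / s := by
  have h := Real.log_le_sub_one_of_pos (inv_pos.2 hs)
  rw [Real.log_inv] at h
  have : (s - 1) ^ 2 / s = s - 2 + s⁻¹ := by field_simp; ring
  unfold eta
  linarith

lemma sq_le_eta {s B : ℝ} (hs : 0 < s) (hB : s ≤ B) : (s - 1) ^ 2 ≤ 2 * (B + 1) * eta s := by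
  have h1 := eta_lower hs
  have h3 := Real.sq_sqrt hs.le
  have h4 : (s - 1) ^ 2 = (Real.sqrt s - 1) ^ 2 * (Real.sqrt s + 1) ^ 2 := by
    nth_rw 1 [← h3]; ring
  have h5 : (Real.sqrt s + 1) ^ 2 ≤ 2 * (B + 1) := by
    nlinarith [sq_nonneg (Real.sqrt s - 1)]
  rw [h4, mul_comm]
  exact mul_le_mul h5 h1 (sq_nonneg _) (by linarith)

lemma le_eta {s : ℝ} (hs : 4 ≤ s) : s ≤ 4 * eta s := by
  have h1 := eta_lower (by linarith : 0 < s)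
  have h2 : 2 ≤ Real.sqrt s := Real.le_sqrt_of_sq_le (by linarith)
  have h3 := Real.sq_sqrt (by linarith : 0 ≤ s)
  nlinarith

lemma hasDerivAt_eta {s : ℝ} (hs : 0 < s) : HasDerivAt eta (1 - 1 / s) s := by
  have h : HasDerivAt (fun s => s - Real.log s - 1) (1 - s⁻¹) s :=
    ((hasDerivAt_id' s).sub (Real.hasDerivAt_log hs.ne')).sub_const 1
  rw [one_div]
  exact h

/-! ### Truncated powers -/

/-- The positive part of `s - c`. -/
noncomputable def rp (c s : ℝ) : ℝ := max (s - c) 0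

lemma rp_nonneg (c s : ℝ) : 0 ≤ rp c s := le_max_right _ _

lemma rp_of_le {c s : ℝ} (h : s ≤ c) : rp c s = 0 := max_eq_right (by linarith)

lemma rp_of_ge {c s : ℝ} (h : c ≤ s) : rp c s = s - c := max_eq_left (by linarith)

lemma rp_le {c s : ℝ} (hc : 0 ≤ c) (hs : 0 ≤ s) : rp c s ≤ s := max_le (by linarith) hs

lemma continuous_rp (c : ℝ) : Continuous (rp c) := by unfold rp; fun_prop

lemma hasDerivAt_rp_pow (c : ℝ) (n : ℕ) (s : ℝ) :
    HasDerivAt (fun s => rp c s ^ (n + 2)) ((n + 2 : ℝ) * rp c s ^ (n + 1)) s := by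
  rcases lt_trichotomy s c with h | h | h
  · have e : (fun s => rp c s ^ (n + 2)) =ᶠ[nhds s] fun _ => (0 : ℝ) := by
      filter_upwards [Iio_mem_nhds h] with y hy
      rw [rp_of_le (le_of_lt hy)]; simp
    rw [rp_of_le h.le]
    simpa using (hasDerivAt_const s (0 : ℝ)).congr_of_eventuallyEq e
  · subst h
    rw [rp_of_le le_rfl]
    simp only [ne_eq, Nat.add_eq_zero_iff, one_ne_zero, and_false, not_false_eq_true, zero_pow,
      mul_zero]
    -- `|rp| ≤ |y - s|`, so the power is `O(|y - s|²)`
    have hO : (fun y => rp s y ^ (n + 2)) =O[nhds s] fun y => ‖y - s‖ ^ (n + 2) := by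
      refine Asymptotics.IsBigO.of_bound 1 (Eventually.of_forall fun y => ?_)
      rw [one_mul, norm_pow, norm_pow, norm_norm]
      refine pow_le_pow_left₀ (norm_nonneg _) ?_ _
      rw [Real.norm_eq_abs, abs_of_nonneg (rp_nonneg _ _), Real.norm_eq_abs]
      exact max_le (le_abs_self _) (abs_nonneg _)
    exact (hO.hasFDerivAt (by omega)).hasDerivAt |>.congr_deriv (by simp)
  · have e : (fun s => rp c s ^ (n + 2)) =ᶠ[nhds s] fun s => (s - c) ^ (n + 2) := by
      filter_upwards [Ioi_mem_nhds h] with y hy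
      rw [rp_of_ge (le_of_lt hy)]
    rw [rp_of_ge h.le]
    have := ((hasDerivAt_id s).sub_const c).pow (n + 2)
    refine HasDerivAt.congr_of_eventuallyEq (this.congr_deriv ?_) e
    simp

/-- The relative truncation `a = (s - c)₊ / s ∈ [0, 1)`. -/
noncomputable def ra (c s : ℝ) : ℝ := rp c s / s

lemma ra_nonneg {c s : ℝ} (hs : 0 < s) : 0 ≤ ra c s := div_nonneg (rp_nonneg _ _) hs.le

lemma ra_le_one {c s : ℝ} (hc : 0 ≤ c) (hs : 0 < s) : ra c s ≤ 1 :=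
  (div_le_one hs).2 (rp_le hc hs.le)

lemma ra_of_le {c s : ℝ} (h : s ≤ c) : ra c s = 0 := by simp [ra, rp_of_le h]

lemma half_le_ra {c s : ℝ} (hc : 0 < c) (h : 2 * c ≤ s) : 1 / 2 ≤ ra c s := by
  rw [ra, rp_of_ge (by linarith), le_div_iff₀ (by linarith)]; linarith

lemma ra_mul_one_sub {c s : ℝ} (hc : 0 < c) (hs : 0 < s) : ra c s * (1 - ra c s) ≤ c / s := by
  rcases le_total s c with h | h
  · rw [ra_of_le h]; simp; positivity
  · have : 1 - ra c s = c / s := by rw [ra, rp_of_ge h]; field_simp; ring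
    rw [this]
    exact mul_le_of_le_one_left (by positivity) (ra_le_one hc.le hs)

/-- A bounded-slope truncation: vanishes for `s ≤ c`, grows linearly. -/
noncomputable def G (c s : ℝ) : ℝ := rp c s ^ 2 / s

lemma hasDerivAt_G {c s : ℝ} (hs : 0 < s) :
    HasDerivAt (G c) (2 * ra c s - ra c s ^ 2) s := by
  have h1 := (hasDerivAt_rp_pow c 0 s).div (hasDerivAt_id s) hs.ne'
  refine h1.congr_deriv ?_
  simp only [ra, id]; push_cast; field_simp; ring

lemma G_lower {c s : ℝ} (hc : 0 < c) (h : 2 * c ≤ s) : s / 4 ≤ G c s := by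
  have hs : 0 < s := by linarith
  have := half_le_ra hc h
  have e : G c s = s * ra c s ^ 2 := by simp only [G, ra]; field_simp
  rw [e]
  nlinarith [mul_le_mul_of_nonneg_left this hs.le]

/-- A convex truncated quadratic, `(s - c)₊³ / s`. -/
noncomputable def FQ (c s : ℝ) : ℝ := rp c s ^ 3 / s

/-- The derivative of `FQ c`. -/
noncomputable def FQ1 (c s : ℝ) : ℝ := 3 * rp c s ^ 2 / s - rp c s ^ 3 / s ^ 2

/-- The second derivative of `FQ c`. -/
noncomputable def FQ2 (c s : ℝ) : ℝ := 2 * (1 - (1 - ra c s) ^ 3)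

lemma hasDerivAt_FQ {c s : ℝ} (hs : 0 < s) : HasDerivAt (FQ c) (FQ1 c s) s := by
  refine ((hasDerivAt_rp_pow c 1 s).div (hasDerivAt_id s) hs.ne').congr_deriv ?_
  simp only [FQ1, id]; push_cast; field_simp; ring

lemma hasDerivAt_FQ1 {c s : ℝ} (hs : 0 < s) : HasDerivAt (FQ1 c) (FQ2 c s) s := by
  have h1 := ((hasDerivAt_rp_pow c 0 s).const_mul 3).div (hasDerivAt_id s) hs.ne'
  have h2 := (hasDerivAt_rp_pow c 1 s).div ((hasDerivAt_id s).pow 2) (by simpa using hs.ne')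
  refine (h1.sub h2).congr_deriv ?_
  simp only [FQ2, ra, id, Pi.pow_apply]; push_cast; field_simp; ring

lemma FQ_nonneg {c s : ℝ} (hs : 0 < s) : 0 ≤ FQ c s :=
  div_nonneg (pow_nonneg (rp_nonneg _ _) 3) hs.le

lemma FQ_le {c s : ℝ} (hc : 0 ≤ c) (hs : 0 < s) : FQ c s ≤ rp c s ^ 2 := by
  rw [FQ, div_le_iff₀ hs]
  nlinarith [rp_le hc hs.le, sq_nonneg (rp c s)]

lemma abs_FQ1_le {c s : ℝ} (hc : 0 ≤ c) (hs : 0 < s) : |FQ1 c s| ≤ 3 * rp c s := by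
  have e : FQ1 c s = rp c s * (3 * ra c s - ra c s ^ 2) := by
    simp only [FQ1, ra]; field_simp
  have h0 := ra_nonneg (c := c) hs
  have h1 := ra_le_one hc hs
  rw [e, abs_mul, abs_of_nonneg (rp_nonneg _ _), abs_of_nonneg (by nlinarith), mul_comm]
  exact mul_le_mul_of_nonneg_right (by nlinarith) (rp_nonneg _ _)

lemma FQ2_nonneg {c s : ℝ} (hc : 0 ≤ c) (hs : 0 < s) : 0 ≤ FQ2 c s := by
  have h0 := ra_nonneg (c := c) hs
  have h1 := ra_le_one hc hs
  have : (1 - ra c s) ^ 3 ≤ 1 := pow_le_one₀ (by linarith) (by linarith)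
  unfold FQ2; linarith

lemma FQ2_le {c s : ℝ} (hc : 0 ≤ c) (hs : 0 < s) : FQ2 c s ≤ 2 := by
  have h1 := ra_le_one hc hs
  have : 0 ≤ (1 - ra c s) ^ 3 := pow_nonneg (by linarith) 3
  unfold FQ2; linarith

lemma FQ2_of_le {c s : ℝ} (h : s ≤ c) : FQ2 c s = 0 := by simp [FQ2, ra_of_le h]

lemma one_le_FQ2 {c s : ℝ} (hc : 0 < c) (h : 2 * c ≤ s) : 1 ≤ FQ2 c s := by
  have h0 := half_le_ra hc h
  have h1 := ra_le_one hc.le (by linarith : 0 < s)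
  have : (1 - ra c s) ^ 3 ≤ (1 / 2) ^ 3 := pow_le_pow_left₀ (by linarith) (by linarith) 3
  unfold FQ2; norm_num at this; linarith

/-- A truncated function of linear growth, `(s - c)₊³ / s²`. -/
noncomputable def PQ (c s : ℝ) : ℝ := rp c s ^ 3 / s ^ 2

/-- The derivative of `PQ c`. -/
noncomputable def PQ1 (c s : ℝ) : ℝ := 3 * rp c s ^ 2 / s ^ 2 - 2 * rp c s ^ 3 / s ^ 3

/-- The second derivative of `PQ c`. -/
noncomputable def PQ2 (c s : ℝ) : ℝ := 6 * (ra c s * (1 - ra c s) ^ 2) / s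

lemma hasDerivAt_PQ {c s : ℝ} (hs : 0 < s) : HasDerivAt (PQ c) (PQ1 c s) s := by
  refine ((hasDerivAt_rp_pow c 1 s).div ((hasDerivAt_id s).pow 2)
    (by simpa using hs.ne')).congr_deriv ?_
  simp only [PQ1, id, Pi.pow_apply]; push_cast; field_simp; ring

lemma hasDerivAt_PQ1 {c s : ℝ} (hs : 0 < s) : HasDerivAt (PQ1 c) (PQ2 c s) s := by
  have h1 := ((hasDerivAt_rp_pow c 0 s).const_mul 3).div ((hasDerivAt_id s).pow 2)
    (by simpa using hs.ne')
  have h2 := ((hasDerivAt_rp_pow c 1 s).const_mul 2).div ((hasDerivAt_id s).pow 3)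
    (by simpa using hs.ne')
  refine (h1.sub h2).congr_deriv ?_
  simp only [PQ2, ra, id, Pi.pow_apply]; push_cast; field_simp; ring

lemma PQ1_eq {c s : ℝ} (hs : 0 < s) : PQ1 c s = ra c s ^ 2 * (3 - 2 * ra c s) := by
  simp only [PQ1, ra]; field_simp

lemma PQ1_nonneg {c s : ℝ} (hc : 0 ≤ c) (hs : 0 < s) : 0 ≤ PQ1 c s := by
  rw [PQ1_eq hs]
  exact mul_nonneg (sq_nonneg _) (by linarith [ra_le_one hc hs])

lemma PQ1_le {c s : ℝ} (hc : 0 ≤ c) (hs : 0 < s) : PQ1 c s ≤ 1 := by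
  rw [PQ1_eq hs]
  have h0 := ra_nonneg (c := c) hs
  have h1 := ra_le_one hc hs
  nlinarith [sq_nonneg (1 - ra c s)]

lemma PQ1_of_le {c s : ℝ} (h : s ≤ c) : PQ1 c s = 0 := by simp [PQ1, rp_of_le h]

lemma half_le_PQ1 {c s : ℝ} (hc : 0 < c) (h : 2 * c ≤ s) : 1 / 2 ≤ PQ1 c s := by
  have hs : 0 < s := by linarith
  have h0 := half_le_ra hc h
  have h1 := ra_le_one hc.le hs
  rw [PQ1_eq hs]
  nlinarith [mul_nonneg (sub_nonneg.2 h0) (sub_nonneg.2 h1), mul_nonneg (mul_nonneg (sub_nonneg.2 h0) (sub_nonneg.2 h1)) (by linarith : 0 ≤ ra c s)]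

lemma PQ2_nonneg {c s : ℝ} (hs : 0 < s) : 0 ≤ PQ2 c s := by
  have h0 := ra_nonneg (c := c) hs
  unfold PQ2; positivity

lemma PQ2_le {c s : ℝ} (hc : 0 < c) (hs : 0 < s) : PQ2 c s ≤ 6 * c / s ^ 2 := by
  have h0 := ra_nonneg (c := c) hs
  have h1 := ra_le_one hc.le hs
  have h2 := ra_mul_one_sub hc hs
  have h3 : ra c s * (1 - ra c s) ^ 2 ≤ c / s := by nlinarith [mul_nonneg h0 (sub_nonneg.2 h1)]
  have e : 6 * c / s ^ 2 = 6 * (c / s) / s := by field_simp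
  rw [e, PQ2]
  gcongr

lemma PQ_nonneg {c s : ℝ} : 0 ≤ PQ c s :=
  div_nonneg (pow_nonneg (rp_nonneg _ _) 3) (sq_nonneg _)

lemma PQ_le {c s : ℝ} (hc : 4 ≤ c) (hs : 0 < s) : PQ c s ≤ 4 * eta s := by
  rcases le_total s c with h | h
  · have := eta_nonneg hs
    simp [PQ, rp_of_le h]; linarith
  · refine le_trans ?_ (le_eta (hc.trans h))
    rw [PQ, div_le_iff₀ (by positivity)]
    calc rp c s ^ 3 ≤ s ^ 3 := pow_le_pow_left₀ (rp_nonneg _ _) (rp_le (by linarith) hs.le) 3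
      _ = s * s ^ 2 := by ring

/-! ### Decay of integrable functions with integrable growth -/

/-- A nonnegative integrable function whose increments are bounded above by those of an integral
with finite total mass tends to zero. -/
lemma tendsto_zero_of_growth {f g : ℝ → ℝ} {C : ℝ} (hf0 : ∀ t, 0 ≤ f t) (hg0 : ∀ t, 0 ≤ g t)
    (hf : ∀ T, IntervalIntegrable f volume 0 T) (hg : ∀ T, IntervalIntegrable g volume 0 T)
    (hfC : ∀ T, 0 ≤ T → ∫ t in (0:ℝ)..T, f t ≤ C) (hgC : ∀ T, 0 ≤ T → ∫ t in (0:ℝ)..T, g t ≤ C)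
    (hfg : ∀ s t, 0 ≤ s → s ≤ t → f t ≤ f s + ∫ τ in s..t, g τ) :
    Tendsto f atTop (nhds 0) := by
  have hf' : ∀ a b, IntervalIntegrable f volume a b := fun a b => (hf a).symm.trans (hf b)
  have hg' : ∀ a b, IntervalIntegrable g volume a b := fun a b => (hg a).symm.trans (hg b)
  set Q : ℝ → ℝ := fun t => (∫ τ in (0:ℝ)..t, f τ) + ∫ τ in (0:ℝ)..t, g τ
  have hQd : ∀ a b, Q b - Q a = (∫ τ in a..b, f τ) + ∫ τ in a..b, g τ := by
    intro a b
    have h1 := intervalIntegral.integral_interval_sub_left (hf b) (hf a)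
    have h2 := intervalIntegral.integral_interval_sub_left (hg b) (hg a)
    simp only [Q]; linarith
  have hmono : Monotone Q := by
    intro a b hab
    have := hQd a b
    have h1 := intervalIntegral.integral_nonneg (μ := volume) hab (fun τ _ => hf0 τ)
    have h2 := intervalIntegral.integral_nonneg (μ := volume) hab (fun τ _ => hg0 τ)
    linarith
  have hbdd : BddAbove (range Q) := by
    refine ⟨C + C, ?_⟩
    rintro _ ⟨t, rfl⟩
    refine (hmono (le_max_left t 0)).trans ?_
    exact add_le_add (hfC _ (le_max_right _ _)) (hgC _ (le_max_right _ _))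
  have hlim := tendsto_atTop_ciSup hmono hbdd
  have hlim1 : Tendsto (fun t => Q (t - 1)) atTop (nhds (⨆ t, Q t)) :=
    hlim.comp (tendsto_atTop_add_const_right _ (-1) tendsto_id)
  have hdiff : Tendsto (fun t => Q t - Q (t - 1)) atTop (nhds 0) := by
    simpa using hlim.sub hlim1
  refine squeeze_zero' (Eventually.of_forall hf0) ?_ hdiff
  filter_upwards [eventually_ge_atTop 1] with t ht
  rw [hQd]
  -- average the growth inequality over `s ∈ [t-1, t]`
  have hpt : ∀ s ∈ Icc (t - 1) t, f t - ∫ τ in (t-1)..t, g τ ≤ f s := by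
    intro s hs
    have h1 := hfg s t (by linarith [hs.1]) hs.2
    have h2 := intervalIntegral.integral_add_adjacent_intervals (hg' (t-1) s) (hg' s t)
    have h3 := intervalIntegral.integral_nonneg (μ := volume) hs.1 (fun τ _ => hg0 τ)
    linarith
  have := intervalIntegral.integral_mono_on (by linarith : t - 1 ≤ t)
    (intervalIntegrable_const (c := f t - ∫ τ in (t-1)..t, g τ)) (hf' _ _) hpt
  rw [intervalIntegral.integral_const] at this
  simp at this
  linarith

end NSLT

namespace NSLT

/-! ### Integrability classes, solved by instance search -/

/-- Essentially bounded functions. -/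
class LB {α : Type*} [MeasurableSpace α] (m : Measure α) (f : α → ℝ) : Prop where
  out : MemLp f ⊤ m

/-- Square-integrable functions. -/
class LS {α : Type*} [MeasurableSpace α] (m : Measure α) (f : α → ℝ) : Prop where
  out : MemLp f 2 m

/-- Integrable functions. -/
class LI {α : Type*} [MeasurableSpace α] (m : Measure α) (f : α → ℝ) : Prop where
  out : Integrable f m

section instances
variable {α : Type*} [MeasurableSpace α] {m : Measure α} {f g : α → ℝ}

instance LB.mul [hf : LB m f] [hg : LB m g] : LB m (fun x => f x * g x) := ⟨memTT hf.1 hg.1⟩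
instance LB.add [hf : LB m f] [hg : LB m g] : LB m (fun x => f x + g x) := ⟨hf.1.add hg.1⟩
instance LB.sub [hf : LB m f] [hg : LB m g] : LB m (fun x => f x - g x) := ⟨hf.1.sub hg.1⟩
instance LB.neg [hf : LB m f] : LB m (fun x => - f x) := ⟨hf.1.neg⟩
instance LB.const (c : ℝ) : LB m (fun _ => c) := ⟨memLp_top_const c⟩
instance LB.div [hf : LB m f] [hg : LB m (fun x => (g x)⁻¹)] : LB m (fun x => f x / g x) :=
  ⟨by simpa only [div_eq_mul_inv] using memTT hf.1 hg.1⟩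
instance LB.pow [hf : LB m f] (n : ℕ) : LB m (fun x => f x ^ n) := by
  induction n with
  | zero => simpa using LB.const (m := m) 1
  | succ n ih => simpa only [pow_succ] using LB.mul
instance LB.inv_pow [hf : LB m (fun x => (f x)⁻¹)] (n : ℕ) : LB m (fun x => (f x ^ n)⁻¹) := by
  simp only [← _root_.inv_pow]; infer_instance
instance LB.inv_mul [hf : LB m (fun x => (f x)⁻¹)] [hg : LB m (fun x => (g x)⁻¹)] :
    LB m (fun x => (f x * g x)⁻¹) := by
  simp only [_root_.mul_inv]; infer_instance

instance LS.mul_left [hf : LB m f] [hg : LS m g] : LS m (fun x => f x * g x) := ⟨memT2 hf.1 hg.1⟩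
instance LS.mul_right [hf : LS m f] [hg : LB m g] : LS m (fun x => f x * g x) :=
  ⟨by simpa only [mul_comm] using memT2 hg.1 hf.1⟩
instance LS.add [hf : LS m f] [hg : LS m g] : LS m (fun x => f x + g x) := ⟨hf.1.add hg.1⟩
instance LS.sub [hf : LS m f] [hg : LS m g] : LS m (fun x => f x - g x) := ⟨hf.1.sub hg.1⟩
instance LS.neg [hf : LS m f] : LS m (fun x => - f x) := ⟨hf.1.neg⟩
instance LS.div [hf : LS m f] [hg : LB m (fun x => (g x)⁻¹)] : LS m (fun x => f x / g x) :=
  ⟨by simpa only [div_eq_mul_inv] using (LS.mul_right (hf := hf) (hg := hg)).1⟩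
instance LS.sq [hf : LS m f] [hg : LB m f] : LS m (fun x => f x ^ 2) := by
  simp only [pow_two]; infer_instance
instance LS.cube [hf : LS m f] [hg : LB m f] : LS m (fun x => f x ^ 3) := by
  simp only [pow_succ, pow_zero, one_mul]; infer_instance

instance LI.mul_two [hf : LS m f] [hg : LS m g] : LI m (fun x => f x * g x) := ⟨int_mul hf.1 hg.1⟩
instance LI.mul_right [hf : LI m f] [hg : LB m g] : LI m (fun x => f x * g x) :=
  ⟨memLp_one_iff_integrable.1
    (hg.1.mul (memLp_one_iff_integrable.2 hf.1) : MemLp (f * g) 1 m)⟩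
instance LI.mul_left [hf : LB m f] [hg : LI m g] : LI m (fun x => f x * g x) :=
  ⟨by simpa only [mul_comm] using (LI.mul_right (hf := hg) (hg := hf)).1⟩
instance LI.add [hf : LI m f] [hg : LI m g] : LI m (fun x => f x + g x) := ⟨hf.1.add hg.1⟩
instance LI.sub [hf : LI m f] [hg : LI m g] : LI m (fun x => f x - g x) := ⟨hf.1.sub hg.1⟩
instance LI.neg [hf : LI m f] : LI m (fun x => - f x) := ⟨hf.1.neg⟩
instance LI.div [hf : LI m f] [hg : LB m (fun x => (g x)⁻¹)] : LI m (fun x => f x / g x) :=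
  ⟨by simpa only [div_eq_mul_inv] using (LI.mul_right (hf := hf) (hg := hg)).1⟩
instance LI.sq [hf : LS m f] : LI m (fun x => f x ^ 2) := ⟨int_sq hf.1⟩
instance LI.cube [hf : LS m f] [hg : LB m f] : LI m (fun x => f x ^ 3) := by
  simp only [pow_succ, pow_zero, one_mul]; infer_instance
instance LI.four [hf : LS m f] [hg : LB m f] : LI m (fun x => f x ^ 4) := by
  simp only [pow_succ, pow_zero, one_mul]; infer_instance

lemma li (f : α → ℝ) [hf : LI m f] : Integrable f m := hf.1

end instances

/-- The comparison principle behind all energy estimates: a pointwise bound modulo an exact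
derivative integrates to a bound. -/
lemma slice_ineq {A B F F' : ℝ → ℝ} [hA : LI volume A] [hB : LI volume B]
    [hF : LI volume F] [hF' : LI volume F'] (hd : ∀ x, HasDerivAt F (F' x) x)
    (h : ∀ x, A x ≤ B x + F' x) : ∫ x, A x ≤ ∫ x, B x := by
  have h0 : ∫ x, F' x = 0 := integral_eq_zero_of_hasDerivAt_of_integrable hd hF'.1 hF.1
  have h1 : ∫ x, A x ≤ ∫ x, (B x + F' x) :=
    integral_mono hA.1 (hB.1.add hF'.1) h
  rwa [integral_add hB.1 hF'.1, h0, add_zero] at h1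

/-! ### Time slices of a solution -/

/-- The physical constants, and the bound `K` on the specific volume. -/
structure Par where
  (μ κ R cv K : ℝ)
  hμ : 0 < μ
  hκ : 0 < κ
  hR : 0 < R
  hcv : 0 < cv
  hK : 1 ≤ K

/-- The state at a fixed time: the three unknowns with their spatial derivatives, and the
bounds and integrability available at every time. -/
structure Sl (P : Par) where
  (v u θ vx ux θx uxx θxx : ℝ → ℝ)
  vlo : ∀ x, P.K⁻¹ ≤ v x
  vhi : ∀ x, v x ≤ P.K
  θlo : ∃ a, 0 < a ∧ ∀ x, a ≤ θ x
  dv : ∀ x, HasDerivAt v (vx x) x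
  du : ∀ x, HasDerivAt u (ux x) x
  dθ : ∀ x, HasDerivAt θ (θx x) x
  dux : ∀ x, HasDerivAt ux (uxx x) x
  dθx : ∀ x, HasDerivAt θx (θxx x) x
  cvx : Continuous vx
  cuxx : Continuous uxx
  cθxx : Continuous θxx
  v2 : MemLp (fun x => v x - 1) 2
  u2 : MemLp u 2
  θ2 : MemLp (fun x => θ x - 1) 2
  vx2 : MemLp vx 2
  ux2 : MemLp ux 2
  θx2 : MemLp θx 2

/-- A slice whose second derivatives are square integrable; almost every time slice is good. -/
class Sl.Good {P : Par} (s : Sl P) : Prop where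
  uxx2 : MemLp s.uxx 2
  θxx2 : MemLp s.θxx 2

namespace Sl
variable {P : Par} (s : Sl P)

/-- The right-hand side of the momentum equation solved for `u_t`. -/
noncomputable def ut (x : ℝ) : ℝ :=
  -(P.R * s.θx x / s.v x - P.R * s.θ x * s.vx x / s.v x ^ 2)
    + P.μ * (s.uxx x / s.v x - s.ux x * s.vx x / s.v x ^ 2)

/-- The right-hand side of the energy equation solved for `θ_t`. -/
noncomputable def θt (x : ℝ) : ℝ :=
  (P.κ * (s.θxx x / s.v x - s.θx x * s.vx x / s.v x ^ 2) + P.μ * s.ux x ^ 2 / s.v x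
    - P.R * s.θ x / s.v x * s.ux x) / P.cv

lemma K0 (P : Par) : 0 < P.K := lt_of_lt_of_le one_pos P.hK

lemma v0 (x : ℝ) : 0 < s.v x := lt_of_lt_of_le (inv_pos.2 (K0 P)) (s.vlo x)

lemma θ0 (x : ℝ) : 0 < s.θ x := by
  obtain ⟨a, ha, h⟩ := s.θlo; exact ha.trans_le (h x)

lemma vinv_le (x : ℝ) : (s.v x)⁻¹ ≤ P.K := by
  have := inv_anti₀ (inv_pos.2 (K0 P)) (s.vlo x)
  rwa [inv_inv] at this

lemma le_vinv (x : ℝ) : P.K⁻¹ ≤ (s.v x)⁻¹ := inv_anti₀ (s.v0 x) (s.vhi x)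

lemma continuous_v : Continuous s.v := continuous_iff_continuousAt.2 fun x => (s.dv x).continuousAt
lemma continuous_u : Continuous s.u := continuous_iff_continuousAt.2 fun x => (s.du x).continuousAt
lemma continuous_θ : Continuous s.θ := continuous_iff_continuousAt.2 fun x => (s.dθ x).continuousAt
lemma continuous_ux : Continuous s.ux :=
  continuous_iff_continuousAt.2 fun x => (s.dux x).continuousAt
lemma continuous_θx : Continuous s.θx :=
  continuous_iff_continuousAt.2 fun x => (s.dθx x).continuousAt

end Sl

lemma memLp_top_of_abs_le {α : Type*} [MeasurableSpace α] {m : Measure α} {f : α → ℝ} (C : ℝ)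
    (hf : AEStronglyMeasurable f m) (h : ∀ x, |f x| ≤ C) : MemLp f ⊤ m :=
  memLp_top_of_bound hf C (Eventually.of_forall h)

namespace Sl
variable {P : Par} (s : Sl P)

instance iv : LB volume s.v :=
  ⟨memLp_top_of_abs_le P.K s.continuous_v.aestronglyMeasurable fun x => by
    rw [abs_of_pos (s.v0 x)]; exact s.vhi x⟩
instance ivi : LB volume (fun x => (s.v x)⁻¹) :=
  ⟨memLp_top_of_abs_le P.K (s.continuous_v.inv₀ fun x => (s.v0 x).ne').aestronglyMeasurable
    fun x => by rw [abs_of_pos (inv_pos.2 (s.v0 x))]; exact s.vinv_le x⟩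
instance iu : LB volume s.u := ⟨memLp_top_of_H1 s.du s.u2 s.ux2⟩
instance iθ1 : LB volume (fun x => s.θ x - 1) :=
  ⟨memLp_top_of_H1 (fun x => (s.dθ x).sub_const 1) s.θ2 s.θx2⟩
instance iθ : LB volume s.θ := by
  have : LB volume (fun x => (s.θ x - 1) + 1) := inferInstance
  simpa using this
instance iθi : LB volume (fun x => (s.θ x)⁻¹) := by
  obtain ⟨a, ha, h⟩ := s.θlo
  refine ⟨memLp_top_of_abs_le a⁻¹
    (s.continuous_θ.inv₀ fun x => (s.θ0 x).ne').aestronglyMeasurable fun x => ?_⟩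
  rw [abs_of_pos (inv_pos.2 (s.θ0 x))]
  exact inv_anti₀ ha (h x)
instance iv2 : LS volume (fun x => s.v x - 1) := ⟨s.v2⟩
instance iu2 : LS volume s.u := ⟨s.u2⟩
instance iθ2 : LS volume (fun x => s.θ x - 1) := ⟨s.θ2⟩
instance ivx2 : LS volume s.vx := ⟨s.vx2⟩
instance iux2 : LS volume s.ux := ⟨s.ux2⟩
instance iθx2 : LS volume s.θx := ⟨s.θx2⟩
instance iuxx2 [h : s.Good] : LS volume s.uxx := ⟨h.uxx2⟩
instance iθxx2 [h : s.Good] : LS volume s.θxx := ⟨h.θxx2⟩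
instance iux [h : s.Good] : LB volume s.ux := ⟨memLp_top_of_H1 s.dux s.ux2 h.uxx2⟩
instance iθx [h : s.Good] : LB volume s.θx := ⟨memLp_top_of_H1 s.dθx s.θx2 h.θxx2⟩

instance iut [s.Good] : LS volume s.ut := by unfold ut; infer_instance
instance iθt [s.Good] : LS volume s.θt := by unfold θt; infer_instance

end Sl
end NSLT

namespace NSLT

/-! ### Slice functionals and consequences of the entropy bound -/

/-- An integrable majorant makes a continuous function integrable. -/
lemma LI.of_le {f g : ℝ → ℝ} (hf : Continuous f) (hg : LI volume g) (h : ∀ x, |f x| ≤ g x) :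
    LI volume f :=
  ⟨hg.1.mono' hf.aestronglyMeasurable (Eventually.of_forall h)⟩

lemma LS.of_le {f g : ℝ → ℝ} (C : ℝ) (hf : Continuous f) (hg : LS volume g)
    (h : ∀ x, |f x| ≤ C * |g x|) : LS volume f :=
  ⟨memLp_two_of_abs_le C hg.1 hf.aestronglyMeasurable (Eventually.of_forall h)⟩

lemma continuousOn_eta : ContinuousOn eta (Ioi 0) := fun _ hs =>
  (hasDerivAt_eta hs).continuousAt.continuousWithinAt

namespace Sl
variable {P : Par} (s : Sl P)

instance iηv : LI volume (fun x => eta (s.v x)) := by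
  refine LI.of_le (g := fun x => (s.v x - 1) ^ 2 / s.v x)
    (continuousOn_eta.comp_continuous s.continuous_v s.v0) inferInstance fun x => ?_
  rw [abs_of_nonneg (eta_nonneg (s.v0 x))]; exact eta_upper (s.v0 x)

instance iηθ : LI volume (fun x => eta (s.θ x)) := by
  refine LI.of_le (g := fun x => (s.θ x - 1) ^ 2 / s.θ x)
    (continuousOn_eta.comp_continuous s.continuous_θ s.θ0) inferInstance fun x => ?_
  rw [abs_of_nonneg (eta_nonneg (s.θ0 x))]; exact eta_upper (s.θ0 x)

/-- The relative entropy density. -/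
noncomputable def ent (x : ℝ) : ℝ := s.u x ^ 2 / 2 + P.R * eta (s.v x) + P.cv * eta (s.θ x)

/-- The dissipation density of the entropy. -/
noncomputable def dis (x : ℝ) : ℝ := s.ux x ^ 2 / s.θ x + s.θx x ^ 2 / s.θ x ^ 2

instance ient : LI volume s.ent := by
  have : LI volume (fun x => s.u x ^ 2 * (1 / 2) + P.R * eta (s.v x) + P.cv * eta (s.θ x)) :=
    inferInstance
  simp only [mul_one_div] at this
  exact this

instance idis : LI volume s.dis := by unfold dis; infer_instance

/-- The total relative entropy. -/
noncomputable def E : ℝ := ∫ x, s.ent x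
/-- The entropy dissipation. -/
noncomputable def D : ℝ := ∫ x, s.dis x
/-- `‖u_x‖₂²`. -/
noncomputable def U1 : ℝ := ∫ x, s.ux x ^ 2
/-- `‖θ_x‖₂²`. -/
noncomputable def T1 : ℝ := ∫ x, s.θx x ^ 2
/-- `‖v_x‖₂²`. -/
noncomputable def V1 : ℝ := ∫ x, s.vx x ^ 2
/-- `∫ θ v_x²`, the dissipation coming from the pressure in the effective velocity equation. -/
noncomputable def W : ℝ := ∫ x, s.θ x * s.vx x ^ 2
/-- `‖u_xx‖₂²`. -/
noncomputable def U2 : ℝ := ∫ x, s.uxx x ^ 2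
/-- `‖θ_xx‖₂²`. -/
noncomputable def Th2 : ℝ := ∫ x, s.θxx x ^ 2
/-- `∫ θ_x²/θ`, intermediate between the dissipation `D` and `T1`. -/
noncomputable def N : ℝ := ∫ x, s.θx x ^ 2 / s.θ x

lemma U1_nonneg : 0 ≤ s.U1 := integral_nonneg fun _ => sq_nonneg _
lemma T1_nonneg : 0 ≤ s.T1 := integral_nonneg fun _ => sq_nonneg _
lemma V1_nonneg : 0 ≤ s.V1 := integral_nonneg fun _ => sq_nonneg _
lemma U2_nonneg : 0 ≤ s.U2 := integral_nonneg fun _ => sq_nonneg _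
lemma Th2_nonneg : 0 ≤ s.Th2 := integral_nonneg fun _ => sq_nonneg _
lemma W_nonneg : 0 ≤ s.W := integral_nonneg fun x => mul_nonneg (s.θ0 x).le (sq_nonneg _)
lemma N_nonneg : 0 ≤ s.N := integral_nonneg fun x => div_nonneg (sq_nonneg _) (s.θ0 x).le
lemma dis_nonneg (x : ℝ) : 0 ≤ s.dis x := by
  have := s.θ0 x; unfold dis; positivity
lemma D_nonneg : 0 ≤ s.D := integral_nonneg s.dis_nonneg

lemma ent_nonneg (x : ℝ) : 0 ≤ s.ent x := by
  have h1 := eta_nonneg (s.v0 x); have h2 := eta_nonneg (s.θ0 x)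
  have := P.hR; have := P.hcv
  unfold ent; positivity

lemma E_nonneg : 0 ≤ s.E := integral_nonneg s.ent_nonneg

lemma u_sq_le (x : ℝ) : s.u x ^ 2 ≤ 2 * s.ent x := by
  have h1 := mul_nonneg P.hR.le (eta_nonneg (s.v0 x))
  have h2 := mul_nonneg P.hcv.le (eta_nonneg (s.θ0 x))
  unfold ent; linarith

lemma eta_θ_le (x : ℝ) : eta (s.θ x) ≤ P.cv⁻¹ * s.ent x := by
  have h1 := mul_nonneg P.hR.le (eta_nonneg (s.v0 x))
  rw [inv_mul_eq_div, le_div_iff₀ P.hcv]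
  unfold ent; nlinarith [sq_nonneg (s.u x)]

lemma eta_v_le (x : ℝ) : eta (s.v x) ≤ P.R⁻¹ * s.ent x := by
  have h1 := mul_nonneg P.hcv.le (eta_nonneg (s.θ0 x))
  rw [inv_mul_eq_div, le_div_iff₀ P.hR]
  unfold ent; nlinarith [sq_nonneg (s.u x)]

lemma v_sq_le (x : ℝ) : (s.v x - 1) ^ 2 ≤ 2 * (P.K + 1) * P.R⁻¹ * s.ent x := by
  have h := sq_le_eta (s.v0 x) (s.vhi x)
  have h2 := mul_le_mul_of_nonneg_left (s.eta_v_le x)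
    (by have := K0 P; positivity : 0 ≤ 2 * (P.K + 1))
  linarith

lemma θ_sq_le (x : ℝ) {b : ℝ} (hb : s.θ x ≤ b) :
    (s.θ x - 1) ^ 2 ≤ 2 * (b + 1) * P.cv⁻¹ * s.ent x := by
  have h := sq_le_eta (s.θ0 x) hb
  have h2 := mul_le_mul_of_nonneg_left (s.eta_θ_le x)
    (by have := s.θ0 x; linarith : 0 ≤ 2 * (b + 1))
  linarith

lemma θ_le_ent (x : ℝ) (h : 4 ≤ s.θ x) : s.θ x ≤ 4 * P.cv⁻¹ * s.ent x := by
  have h1 := le_eta h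
  have h2 := s.eta_θ_le x
  linarith

lemma int_u_sq : ∫ x, s.u x ^ 2 ≤ 2 * s.E := by
  unfold E; rw [← integral_const_mul]
  exact integral_mono (li _) (li (fun x => 2 * s.ent x)) s.u_sq_le

lemma int_v_sq : ∫ x, (s.v x - 1) ^ 2 ≤ 2 * (P.K + 1) * P.R⁻¹ * s.E := by
  unfold E; rw [← integral_const_mul]
  exact integral_mono (li _) (li (fun x => 2 * (P.K + 1) * P.R⁻¹ * s.ent x)) s.v_sq_le

lemma int_θ_sq {b : ℝ} (hb : ∀ x, s.θ x ≤ b) :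
    ∫ x, (s.θ x - 1) ^ 2 ≤ 2 * (b + 1) * P.cv⁻¹ * s.E := by
  unfold E; rw [← integral_const_mul]
  exact integral_mono (li _) (li (fun x => 2 * (b + 1) * P.cv⁻¹ * s.ent x))
    fun x => s.θ_sq_le x (hb x)

lemma u_pow4 (x : ℝ) : s.u x ^ 4 ≤ 8 * s.E * s.U1 := by
  have h := pow4_le s.du s.u2 s.ux2 x
  have h1 : (∫ y, s.u y ^ 2) * (∫ y, s.ux y ^ 2) ≤ 2 * s.E * s.U1 :=
    mul_le_mul_of_nonneg_right s.int_u_sq s.U1_nonneg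
  linarith

lemma N_le {ε : ℝ} (hε : 0 < ε) : s.N ≤ ε * s.T1 + ε⁻¹ * s.D := by
  unfold N T1 D
  rw [← integral_const_mul, ← integral_const_mul,
    ← integral_add (li (fun x => ε * s.θx x ^ 2)) (li (fun x => ε⁻¹ * s.dis x))]
  refine integral_mono (li _) (li (fun x => ε * s.θx x ^ 2 + ε⁻¹ * s.dis x)) fun x => ?_
  have h0 := s.θ0 x
  have h1 : ε⁻¹ * (s.θx x ^ 2 / s.θ x ^ 2) ≤ ε⁻¹ * s.dis x := by
    unfold dis
    have : 0 ≤ s.ux x ^ 2 / s.θ x := by positivity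
    gcongr; linarith
  have h2 : s.θx x ^ 2 / s.θ x ≤ ε * s.θx x ^ 2 + ε⁻¹ * (s.θx x ^ 2 / s.θ x ^ 2) := by
    have : ε * s.θx x ^ 2 + ε⁻¹ * (s.θx x ^ 2 / s.θ x ^ 2) - s.θx x ^ 2 / s.θ x
        = s.θx x ^ 2 * ε⁻¹ * ((ε - 1 / (2 * s.θ x)) ^ 2 + 3 / (4 * s.θ x ^ 2)) := by
      field_simp; ring
    have h3 : 0 ≤ s.θx x ^ 2 * ε⁻¹ * ((ε - 1 / (2 * s.θ x)) ^ 2 + 3 / (4 * s.θ x ^ 2)) := by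
      positivity
    linarith
  simpa using h2.trans (by linarith)

lemma tendsto_θ : Tendsto s.θ atBot (nhds 1) := by
  have h := tendsto_sq_atBot (fun x => (s.dθ x).sub_const 1) s.θ2 s.θx2
  have h1 : Tendsto (fun x => |s.θ x - 1|) atBot (nhds 0) := by
    have := h.sqrt
    simpa [Real.sqrt_sq_eq_abs] using this
  have h2 := (tendsto_zero_iff_abs_tendsto_zero (fun x => s.θ x - 1)).2 h1
  simpa using h2.add_const 1

end Sl

/-- Values of a positive function far above a level `c` are controlled by the variation of the
function over the set where it exceeds `c`; `2 ra - ra²` is a cut-off supported there. -/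
lemma trunc_le {f f' : ℝ → ℝ} {c : ℝ} (hc : 1 < c) (h0 : ∀ x, 0 < f x)
    (hd : ∀ x, HasDerivAt f (f' x) x) (hl : Tendsto f atBot (nhds 1))
    (hi : Integrable (fun x => (2 * ra c (f x) - ra c (f x) ^ 2) * f' x)) {x : ℝ}
    (hx : 2 * c ≤ f x) : f x / 4 ≤ ∫ y, |(2 * ra c (f y) - ra c (f y) ^ 2) * f' y| := by
  have hG : Tendsto (fun x => G c (f x)) atBot (nhds 0) := by
    refine tendsto_const_nhds.congr' ?_
    filter_upwards [hl.eventually (gt_mem_nhds hc)] with y hy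
    simp [G, rp_of_le hy.le]
  have h := abs_le_integral_deriv (fun y => (hasDerivAt_G (c := c) (h0 y)).comp y (hd y)) hG hi x
  exact (G_lower (by linarith) hx).trans ((le_abs_self _).trans h)

lemma cut_nonneg {c s : ℝ} (hc : 0 ≤ c) (hs : 0 < s) : 0 ≤ 2 * ra c s - ra c s ^ 2 := by
  nlinarith [ra_nonneg (c := c) hs, ra_le_one hc hs]

lemma cut_le_one (c s : ℝ) : 2 * ra c s - ra c s ^ 2 ≤ 1 := by nlinarith [sq_nonneg (1 - ra c s)]

lemma continuous_cut {c : ℝ} {f : ℝ → ℝ} (hf : Continuous f) (h0 : ∀ x, 0 < f x) :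
    Continuous (fun x => 2 * ra c (f x) - ra c (f x) ^ 2) := by
  have : Continuous (fun x => ra c (f x)) :=
    ((continuous_rp c).comp hf).div hf fun x => (h0 x).ne'
  fun_prop

namespace Sl
variable {P : Par} (s : Sl P)

lemma continuous_sqrt : Continuous (fun x => Real.sqrt (s.θ x)) :=
  Real.continuous_sqrt.comp s.continuous_θ

lemma sqrt0 (x : ℝ) : 0 < Real.sqrt (s.θ x) := Real.sqrt_pos.2 (s.θ0 x)

instance isq : LB volume (fun x => Real.sqrt (s.θ x)) := by
  have : LB volume (fun x => s.θ x + 1) := inferInstance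
  refine ⟨this.1.mono s.continuous_sqrt.aestronglyMeasurable (Eventually.of_forall fun x => ?_)⟩
  have := s.θ0 x
  rw [Real.norm_of_nonneg (Real.sqrt_nonneg _), Real.norm_of_nonneg (by linarith),
    Real.sqrt_le_left (by linarith)]
  nlinarith

instance isqi : LB volume (fun x => (Real.sqrt (s.θ x))⁻¹) := by
  have : LB volume (fun x => (s.θ x)⁻¹ + 1) := inferInstance
  refine ⟨this.1.mono (s.continuous_sqrt.inv₀ fun x => (s.sqrt0 x).ne').aestronglyMeasurable
    (Eventually.of_forall fun x => ?_)⟩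
  have := inv_pos.2 (s.θ0 x)
  rw [Real.norm_of_nonneg (by positivity), Real.norm_of_nonneg (by linarith),
    ← Real.sqrt_inv, Real.sqrt_le_left (by linarith)]
  nlinarith

/-- A cut-off supported where `θ > 4` is square integrable, because the entropy controls the
measure of that set; the Cauchy–Schwarz inequality then exploits the entropy bound. -/
lemma cut_cauchy {φ : ℝ → ℝ} (hc : Continuous φ) (h0 : ∀ x, 0 ≤ φ x) (h1 : ∀ x, φ x ≤ 1)
    (h4 : ∀ x, s.θ x ≤ 4 → φ x = 0) :
    LS volume φ ∧ ∀ b : ℝ → ℝ, LS volume b →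
      (∫ x, |φ x * Real.sqrt (s.θ x) * b x|) ^ 2 ≤ 4 * P.cv⁻¹ * s.E * ∫ x, b x ^ 2 := by
  have hφ : LS volume φ := by
    refine LS.of_le 1 hc s.iθ2 fun x => ?_
    rw [abs_of_nonneg (h0 x), one_mul]
    rcases le_or_gt (s.θ x) 4 with h | h
    · rw [h4 x h]; exact abs_nonneg _
    · exact (h1 x).trans ((by linarith : 1 ≤ s.θ x - 1).trans (le_abs_self _))
  refine ⟨hφ, fun b hb => ?_⟩
  have hs : LS volume (fun x => φ x * Real.sqrt (s.θ x)) := inferInstance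
  refine (cauchy_schwarz hs.1 hb.1).trans
    (mul_le_mul_of_nonneg_right ?_ (integral_nonneg fun _ => sq_nonneg _))
  unfold E
  rw [← integral_const_mul]
  refine integral_mono (li _) (li (fun x => 4 * P.cv⁻¹ * s.ent x)) fun x => ?_
  simp only [mul_pow, Real.sq_sqrt (s.θ0 x).le]
  rcases le_or_gt (s.θ x) 4 with h | h
  · rw [h4 x h]
    have := s.ent_nonneg x; have := P.hcv
    simp only [ne_eq, OfNat.ofNat_ne_zero, not_false_eq_true, zero_pow, zero_mul]
    positivity
  · refine le_trans ?_ (s.θ_le_ent x h.le)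
    have : φ x ^ 2 ≤ 1 := by nlinarith [h0 x, h1 x]
    nlinarith [s.θ0 x]

/-- Where `θ` is large, `θ²` is bounded by `∫ θ_x² / θ`. -/
lemma θ_sq_le_N {x : ℝ} (hx : 16 ≤ s.θ x) : s.θ x ^ 2 ≤ 64 * P.cv⁻¹ * s.E * s.N := by
  obtain ⟨hφ, hb⟩ := s.cut_cauchy (φ := fun x => 2 * ra 4 (s.θ x) - ra 4 (s.θ x) ^ 2)
    (continuous_cut s.continuous_θ s.θ0) (fun x => cut_nonneg (by norm_num) (s.θ0 x))
    (fun x => cut_le_one _ _) (fun x h => by simp [ra_of_le h])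
  have h1 := trunc_le (c := 4) (by norm_num) s.θ0 s.dθ s.tendsto_θ
    (li (fun x => (2 * ra 4 (s.θ x) - ra 4 (s.θ x) ^ 2) * s.θx x)) (x := x) (by linarith)
  have h2 := hb (fun x => s.θx x / Real.sqrt (s.θ x)) inferInstance
  have h3 : ∀ y, (2 * ra 4 (s.θ y) - ra 4 (s.θ y) ^ 2) * Real.sqrt (s.θ y)
      * (s.θx y / Real.sqrt (s.θ y)) = (2 * ra 4 (s.θ y) - ra 4 (s.θ y) ^ 2) * s.θx y := fun y => by
    have := (s.sqrt0 y).ne'; field_simp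
  simp only [h3, div_pow, Real.sq_sqrt (s.θ0 _).le] at h2
  have h4 := pow_le_pow_left₀ (by have := s.θ0 x; positivity) h1 2
  unfold N
  nlinarith

/-- Where `θ` is large, it is bounded by the entropy dissipation. -/
lemma θ_le_D {x : ℝ} (hx : 16 ≤ s.θ x) : s.θ x ≤ 16 * P.cv⁻¹ * s.E * s.D := by
  have hi : LS volume (fun x => 1 / 2 * (s.θx x / s.θ x)) := inferInstance
  obtain ⟨hφ, hb⟩ := s.cut_cauchy
    (φ := fun x => 2 * ra 2 (Real.sqrt (s.θ x)) - ra 2 (Real.sqrt (s.θ x)) ^ 2)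
    (continuous_cut s.continuous_sqrt s.sqrt0) (fun x => cut_nonneg (by norm_num) (s.sqrt0 x))
    (fun x => cut_le_one _ _) (fun x h => by
      rw [ra_of_le (by rw [Real.sqrt_le_left (by norm_num)]; linarith)]; ring)
  have hl : Tendsto (fun x => Real.sqrt (s.θ x)) atBot (nhds 1) := by
    simpa using s.tendsto_θ.sqrt
  have h1 := trunc_le (c := 2) (by norm_num) s.sqrt0
    (fun x => (s.dθ x).sqrt (s.θ0 x).ne') hl
    (li (fun x => (2 * ra 2 (Real.sqrt (s.θ x)) - ra 2 (Real.sqrt (s.θ x)) ^ 2)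
      * (s.θx x / (2 * Real.sqrt (s.θ x))))) (x := x)
      (by apply Real.le_sqrt_of_sq_le; linarith)
  have h2 := hb _ hi
  have h3 : ∀ y, (2 * ra 2 (Real.sqrt (s.θ y)) - ra 2 (Real.sqrt (s.θ y)) ^ 2)
      * Real.sqrt (s.θ y) * (1 / 2 * (s.θx y / s.θ y))
      = (2 * ra 2 (Real.sqrt (s.θ y)) - ra 2 (Real.sqrt (s.θ y)) ^ 2)
        * (s.θx y / (2 * Real.sqrt (s.θ y))) := fun y => by
    have h5 := (s.sqrt0 y).ne'
    have h6 := Real.sq_sqrt (s.θ0 y).le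
    have h7 := (s.θ0 y).ne'
    rw [mul_assoc]
    congr 1
    field_simp
    linear_combination s.θx y * h6
  simp only [h3] at h2
  have h4 := pow_le_pow_left₀ (by positivity) h1 2
  rw [div_pow, Real.sq_sqrt (s.θ0 x).le] at h4
  have h5 : ∫ x, (1 / 2 * (s.θx x / s.θ x)) ^ 2 ≤ 1 / 4 * s.D := by
    unfold D
    rw [← integral_const_mul]
    refine integral_mono (li _) (li (fun x => 1 / 4 * s.dis x)) fun x => ?_
    have := s.θ0 x
    have h6 : 0 ≤ s.ux x ^ 2 / s.θ x := by positivity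
    have h7 : (1 / 2 * (s.θx x / s.θ x)) ^ 2 = 1 / 4 * (s.θx x ^ 2 / s.θ x ^ 2) := by
      field_simp; ring
    simp only [h7, dis]
    linarith
  have h6 : 0 ≤ 4 * P.cv⁻¹ * s.E := by
    have := P.hcv; have := s.E_nonneg; positivity
  have h7 := mul_le_mul_of_nonneg_left h5 h6
  linarith

end Sl
end NSLT

namespace NSLT
namespace Sl
variable {P : Par} (s : Sl P)

/-! ### Differential inequalities on a slice -/

/-- The derivative of `u_x / v`. -/
noncomputable def sx (x : ℝ) : ℝ := s.uxx x / s.v x - s.ux x * s.vx x / s.v x ^ 2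
/-- The derivative of `θ_x / v`. -/
noncomputable def qx (x : ℝ) : ℝ := s.θxx x / s.v x - s.θx x * s.vx x / s.v x ^ 2
/-- The derivative of the pressure `R θ / v`. -/
noncomputable def px (x : ℝ) : ℝ := P.R * s.θx x / s.v x - P.R * s.θ x * s.vx x / s.v x ^ 2
/-- The pressure minus its equilibrium value, in a form exhibiting square integrability. -/
noncomputable def pr (x : ℝ) : ℝ := P.R * (s.θ x - 1 - (s.v x - 1)) / s.v x

instance isx [s.Good] : LS volume s.sx := by unfold sx; infer_instance
instance iqx [s.Good] : LS volume s.qx := by unfold qx; infer_instance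
instance ipx : LS volume s.px := by unfold px; infer_instance
instance ipr : LS volume s.pr := by unfold pr; infer_instance
instance iprb : LB volume s.pr := by
  have : LB volume (fun x => P.R * (s.θ x - s.v x) / s.v x) := inferInstance
  convert this using 2; simp [pr]

lemma ut_eq (x : ℝ) : s.ut x = - s.px x + P.μ * s.sx x := rfl
lemma θt_eq (x : ℝ) : P.cv * s.θt x
    = P.κ * s.qx x + P.μ * s.ux x ^ 2 / s.v x - P.R * s.θ x / s.v x * s.ux x :=
  mul_div_cancel₀ _ P.hcv.ne'
lemma pr_eq (x : ℝ) : s.pr x = P.R * s.θ x / s.v x - P.R := by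
  have := (s.v0 x).ne'; unfold pr; field_simp; ring

lemma hasDerivAt_s (x : ℝ) : HasDerivAt (fun x => s.ux x / s.v x) (s.sx x) x := by
  have h := (s.dux x).div (s.dv x) (s.v0 x).ne'
  have := (s.v0 x).ne'
  refine h.congr_deriv ?_
  simp only [sx]; field_simp
lemma hasDerivAt_q (x : ℝ) : HasDerivAt (fun x => s.θx x / s.v x) (s.qx x) x := by
  have h := (s.dθx x).div (s.dv x) (s.v0 x).ne'
  have := (s.v0 x).ne'
  refine h.congr_deriv ?_
  simp only [qx]; field_simp
lemma hasDerivAt_p (x : ℝ) : HasDerivAt s.pr (s.px x) x := by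
  have h := ((((s.dθ x).sub_const 1).sub ((s.dv x).sub_const 1)).const_mul P.R).div (s.dv x)
    (s.v0 x).ne'
  have := (s.v0 x).ne'
  refine HasDerivAt.congr_deriv (f := s.pr) h ?_
  simp only [px, Pi.sub_apply]; field_simp; ring

/-- The smaller of the two diffusion constants after division by the upper bound on `v`. -/
lemma exists_lower (P : Par) : ∃ c, 0 < c ∧ c ≤ P.μ / P.K ∧ c ≤ P.κ / P.K :=
  ⟨min (P.μ / P.K) (P.κ / P.K),
    lt_min (div_pos P.hμ (K0 P)) (div_pos P.hκ (K0 P)), min_le_left _ _, min_le_right _ _⟩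

lemma le_div_v {a y : ℝ} (ha : 0 ≤ a) (hy : 0 ≤ y) (x : ℝ) : a / P.K * y ≤ a * y / s.v x := by
  have h := s.le_vinv x
  rw [div_eq_mul_inv, div_eq_mul_inv]
  nlinarith [mul_nonneg ha hy]

lemma div_v_le {y : ℝ} (hy : 0 ≤ y) (x : ℝ) : y / s.v x ≤ P.K * y := by
  have h := s.vinv_le x
  rw [div_eq_mul_inv]
  nlinarith

/-- Entropy production. -/
lemma entropy_ineq (P : Par) : ∃ c, 0 < c ∧ ∀ s : Sl P, s.Good →
    ∫ x, (s.u x * s.ut x + P.R * ((s.v x - 1) / s.v x * s.ux x)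
      + (s.θ x - 1) / s.θ x * (P.cv * s.θt x)) ≤ - (c * s.D) := by
  obtain ⟨c, hc, h1, h2⟩ := exists_lower P
  refine ⟨c, hc, fun s hs => ?_⟩
  unfold D
  rw [← neg_mul, ← integral_const_mul]
  refine slice_ineq (F := fun x => -(s.u x * s.pr x) + P.μ * (s.u x * (s.ux x / s.v x))
      + P.κ * ((s.θ x - 1) / s.θ x * (s.θx x / s.v x)))
    (F' := fun x => -(s.ux x * s.pr x + s.u x * s.px x)
      + P.μ * (s.ux x * (s.ux x / s.v x) + s.u x * s.sx x)
      + P.κ * (s.θx x / s.θ x ^ 2 * (s.θx x / s.v x) + (s.θ x - 1) / s.θ x * s.qx x))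
    (fun x => ?_) (fun x => ?_)
  · have h3 : HasDerivAt (fun x => (s.θ x - 1) / s.θ x) (s.θx x / s.θ x ^ 2) x := by
      refine HasDerivAt.congr_deriv (((s.dθ x).sub_const 1).div (s.dθ x) (s.θ0 x).ne') ?_
      have := (s.θ0 x).ne'; field_simp; ring
    exact (((s.du x).mul (s.hasDerivAt_p x)).neg.add
      (((s.du x).mul (s.hasDerivAt_s x)).const_mul P.μ)).add
      ((h3.mul (s.hasDerivAt_q x)).const_mul P.κ)
  · have hv := s.v0 x
    have hθ := s.θ0 x
    have h3 : c * (s.ux x ^ 2 / s.θ x) ≤ P.μ * (s.ux x ^ 2 / s.θ x) / s.v x :=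
      le_trans (mul_le_mul_of_nonneg_right h1 (by positivity))
        (s.le_div_v P.hμ.le (by positivity) x)
    have h4 : c * (s.θx x ^ 2 / s.θ x ^ 2) ≤ P.κ * (s.θx x ^ 2 / s.θ x ^ 2) / s.v x :=
      le_trans (mul_le_mul_of_nonneg_right h2 (by positivity))
        (s.le_div_v P.hκ.le (by positivity) x)
    rw [s.θt_eq, s.ut_eq, s.pr_eq]
    have h5 : s.u x * (-s.px x + P.μ * s.sx x) + P.R * ((s.v x - 1) / s.v x * s.ux x) +
        (s.θ x - 1) / s.θ x * (P.κ * s.qx x + P.μ * s.ux x ^ 2 / s.v x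
          - P.R * s.θ x / s.v x * s.ux x)
        = (-(s.ux x * (P.R * s.θ x / s.v x - P.R) + s.u x * s.px x)
      + P.μ * (s.ux x * (s.ux x / s.v x) + s.u x * s.sx x)
      + P.κ * (s.θx x / s.θ x ^ 2 * (s.θx x / s.v x) + (s.θ x - 1) / s.θ x * s.qx x))
        - P.μ * (s.ux x ^ 2 / s.θ x) / s.v x - P.κ * (s.θx x ^ 2 / s.θ x ^ 2) / s.v x := by
      field_simp; ring
    rw [h5]; unfold dis; linarith

end Sl
end NSLT

namespace NSLT

lemma int_lin2 {f g : ℝ → ℝ} (a b : ℝ) [hf : LI volume f] [hg : LI volume g] :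
    ∫ x, (a * f x + b * g x) = a * (∫ x, f x) + b * ∫ x, g x := by
  rw [integral_add (li (fun x => a * f x)) (li (fun x => b * g x)), integral_const_mul,
    integral_const_mul]

lemma int_lin3 {f g h : ℝ → ℝ} (a b c : ℝ) [hf : LI volume f] [hg : LI volume g]
    [hh : LI volume h] :
    ∫ x, (a * f x + b * g x + c * h x) = a * (∫ x, f x) + b * (∫ x, g x) + c * ∫ x, h x := by
  rw [integral_add (li (fun x => a * f x + b * g x)) (li (fun x => c * h x)), int_lin2,
    integral_const_mul]

lemma int_lin4 {f g h k : ℝ → ℝ} (a b c d : ℝ) [hf : LI volume f] [hg : LI volume g]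
    [hh : LI volume h] [hk : LI volume k] :
    ∫ x, (a * f x + b * g x + c * h x + d * k x)
      = a * (∫ x, f x) + b * (∫ x, g x) + c * (∫ x, h x) + d * ∫ x, k x := by
  rw [integral_add (li (fun x => a * f x + b * g x + c * h x)) (li (fun x => d * k x)), int_lin3,
    integral_const_mul]

lemma continuousOn_PQ1 (c : ℝ) : ContinuousOn (PQ1 c) (Ioi 0) := fun _ hs =>
  (hasDerivAt_PQ1 hs).continuousAt.continuousWithinAt

lemma continuousOn_ra (c : ℝ) : ContinuousOn (ra c) (Ioi 0) :=
  (continuous_rp c).continuousOn.div continuousOn_id fun _ hs => (ne_of_gt hs)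

lemma continuousOn_PQ2 (c : ℝ) : ContinuousOn (PQ2 c) (Ioi 0) := by
  have := continuousOn_ra c
  unfold PQ2
  exact ContinuousOn.div (by fun_prop) continuousOn_id fun _ hs => (ne_of_gt hs)

/-- Young's inequality. -/
lemma young (a b : ℝ) {ε : ℝ} (hε : 0 < ε) : a * b ≤ ε * a ^ 2 + b ^ 2 / (4 * ε) := by
  have : ε * a ^ 2 + b ^ 2 / (4 * ε) - a * b = (2 * ε * a - b) ^ 2 / (4 * ε) := by
    field_simp; ring
  have h : 0 ≤ (2 * ε * a - b) ^ 2 / (4 * ε) := by positivity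
  linarith

namespace Sl
variable {P : Par} (s : Sl P)

instance iPQ1b : LB volume (fun x => PQ1 16 (s.θ x)) :=
  ⟨memLp_top_of_abs_le 1 ((continuousOn_PQ1 16).comp_continuous s.continuous_θ
    s.θ0).aestronglyMeasurable fun x => by
    rw [abs_of_nonneg (PQ1_nonneg (by norm_num) (s.θ0 x))]
    exact PQ1_le (by norm_num) (s.θ0 x)⟩

instance iPQ1 : LS volume (fun x => PQ1 16 (s.θ x)) := by
  refine LS.of_le 1 ((continuousOn_PQ1 16).comp_continuous s.continuous_θ s.θ0) s.iθ2 fun x => ?_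
  rw [abs_of_nonneg (PQ1_nonneg (by norm_num) (s.θ0 x)), one_mul]
  rcases le_or_gt (s.θ x) 16 with h | h
  · rw [PQ1_of_le h]; exact abs_nonneg _
  · exact (PQ1_le (by norm_num) (s.θ0 x)).trans
      ((by linarith : 1 ≤ s.θ x - 1).trans (le_abs_self _))

instance iPQ2 : LB volume (fun x => PQ2 16 (s.θ x)) := by
  have h : LB volume (fun x => 96 / s.θ x ^ 2) := inferInstance
  refine ⟨h.1.mono ((continuousOn_PQ2 16).comp_continuous s.continuous_θ
    s.θ0).aestronglyMeasurable (Eventually.of_forall fun x => ?_)⟩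
  have := s.θ0 x
  rw [Real.norm_of_nonneg (PQ2_nonneg (s.θ0 x)), Real.norm_of_nonneg (by positivity)]
  have := PQ2_le (c := 16) (by norm_num) (s.θ0 x)
  linarith

/-- Viscous heating at large temperature controls the full `∫ u_x²`. -/
lemma heating_ineq (P : Par) (E0 : ℝ) : ∃ c C, 0 < c ∧ 0 ≤ C ∧ ∀ s : Sl P, s.Good → s.E ≤ E0 →
    ∫ x, -(PQ1 16 (s.θ x) * (P.cv * s.θt x)) ≤ - (c * s.U1) + C * s.D := by
  have hK := K0 P
  have hμ := P.hμ
  have hκ := P.hκ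
  have hR := P.hR
  have hcv := P.hcv
  set e : ℝ := P.μ / (2 * P.K) with he
  have he0 : 0 < e := by positivity
  set C1 : ℝ := e * 16 + 96 * P.K * P.κ with hC1
  set C2 : ℝ := (P.R * P.K) ^ 2 / (4 * e) * (64 * P.cv⁻¹ * P.cv⁻¹) with hC2
  have hC2' : 0 ≤ C2 := by positivity
  refine ⟨e / 2, C1 + C2 * |E0| * |E0|, by positivity, by positivity, fun s hs hE => ?_⟩
  have key : ∫ x, -(PQ1 16 (s.θ x) * (P.cv * s.θt x))
      ≤ ∫ x, (-(e / 2) * s.ux x ^ 2 + C1 * s.dis x + (C2 * |E0| * s.D) * s.ent x) := by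
    refine slice_ineq (F := fun x => -(P.κ * (PQ1 16 (s.θ x) * (s.θx x / s.v x))))
      (F' := fun x => -(P.κ * (PQ2 16 (s.θ x) * s.θx x * (s.θx x / s.v x)
        + PQ1 16 (s.θ x) * s.qx x))) (fun x => ?_) (fun x => ?_)
    · exact ((((hasDerivAt_PQ1 (s.θ0 x)).comp x (s.dθ x)).mul (s.hasDerivAt_q x)).const_mul
        P.κ).neg
    · have hv := s.v0 x
      have hθ := s.θ0 x
      have hent := s.ent_nonneg x
      have hD := s.D_nonneg
      set φ := PQ1 16 (s.θ x) with hφ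
      have hφ0 : 0 ≤ φ := PQ1_nonneg (by norm_num) hθ
      have hφ1 : φ ≤ 1 := PQ1_le (by norm_num) hθ
      have a1 : PQ2 16 (s.θ x) * s.θx x * (s.θx x / s.v x)
          ≤ P.K * (96 * (s.θx x ^ 2 / s.θ x ^ 2)) := by
        have h1 := PQ2_le (c := 16) (by norm_num) hθ
        have h2 := s.div_v_le (sq_nonneg (s.θx x)) x
        calc PQ2 16 (s.θ x) * s.θx x * (s.θx x / s.v x)
            = PQ2 16 (s.θ x) * (s.θx x ^ 2 / s.v x) := by ring
          _ ≤ (6 * 16 / s.θ x ^ 2) * (P.K * s.θx x ^ 2) :=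
            mul_le_mul h1 h2 (by positivity) (by positivity)
          _ = _ := by ring
      have a2 : 2 * e * (φ * s.ux x ^ 2) ≤ P.μ * (φ * s.ux x ^ 2) / s.v x := by
        have := s.le_div_v hμ.le (by positivity : 0 ≤ φ * s.ux x ^ 2) x
        have h2 : 2 * e = P.μ / P.K := by rw [he]; field_simp
        rw [h2]; exact this
      have a3 : P.R * s.θ x / s.v x * s.ux x
          ≤ e * s.ux x ^ 2 + (P.R * P.K) ^ 2 / (4 * e) * s.θ x ^ 2 := by
        have h1 := young (s.ux x) (P.R * s.θ x / s.v x) he0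
        have h2 := s.div_v_le (by positivity : 0 ≤ P.R * s.θ x) x
        have h3 : (P.R * s.θ x / s.v x) ^ 2 ≤ (P.K * (P.R * s.θ x)) ^ 2 :=
          pow_le_pow_left₀ (by positivity) h2 2
        have h4 : (P.R * s.θ x / s.v x) ^ 2 / (4 * e)
            ≤ (P.K * (P.R * s.θ x)) ^ 2 / (4 * e) := by gcongr
        have h5 : (P.K * (P.R * s.θ x)) ^ 2 / (4 * e)
            = (P.R * P.K) ^ 2 / (4 * e) * s.θ x ^ 2 := by ring
        linarith
      have a4 : φ * s.θ x ^ 2 ≤ (64 * P.cv⁻¹ * P.cv⁻¹) * (|E0| * s.D * s.ent x) := by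
        rcases le_or_gt (s.θ x) 16 with h | h
        · rw [hφ, PQ1_of_le h, zero_mul]; positivity
        · have h1 := s.θ_le_D h.le
          have h2 := s.θ_le_ent x (by linarith)
          have h3 : 16 * P.cv⁻¹ * s.E * s.D ≤ 16 * P.cv⁻¹ * |E0| * s.D := by
            have := hE.trans (le_abs_self E0); gcongr
          calc φ * s.θ x ^ 2 ≤ 1 * s.θ x ^ 2 := by gcongr
            _ = s.θ x * s.θ x := by ring
            _ ≤ (16 * P.cv⁻¹ * |E0| * s.D) * (4 * P.cv⁻¹ * s.ent x) :=
              mul_le_mul (h1.trans h3) h2 hθ.le (by positivity)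
            _ = _ := by ring
      have a5 : 1 / 2 * s.ux x ^ 2 ≤ φ * s.ux x ^ 2 + 16 * (s.ux x ^ 2 / s.θ x) := by
        rcases le_or_gt (2 * 16) (s.θ x) with h | h
        · have := half_le_PQ1 (c := 16) (by norm_num) h
          have h3 : 0 ≤ 16 * (s.ux x ^ 2 / s.θ x) := by positivity
          nlinarith [sq_nonneg (s.ux x)]
        · have h3 : s.ux x ^ 2 / 32 ≤ s.ux x ^ 2 / s.θ x := by gcongr; linarith
          nlinarith [mul_nonneg hφ0 (sq_nonneg (s.ux x))]
      have b1 := mul_le_mul_of_nonneg_left a1 hκ.le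
      have b3 := mul_le_mul_of_nonneg_left a3 hφ0
      have b4 := mul_le_mul_of_nonneg_left a4
        (by positivity : 0 ≤ (P.R * P.K) ^ 2 / (4 * e))
      have b5 := mul_le_mul_of_nonneg_left a5 he0.le
      have b6 : 0 ≤ 96 * P.K * P.κ * (s.ux x ^ 2 / s.θ x) := by positivity
      have b7 : 0 ≤ e * 16 * (s.θx x ^ 2 / s.θ x ^ 2) := by positivity
      rw [s.θt_eq]
      simp only [dis, hC1, hC2]
      have a6 : P.μ * (φ * s.ux x ^ 2) / s.v x = φ * (P.μ * s.ux x ^ 2 / s.v x) := by ring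
      rw [a6] at a2
      linarith
  refine key.trans (le_of_eq_of_le (int_lin3 _ _ _) ?_)
  have h1 : C2 * |E0| * s.D * s.E ≤ C2 * |E0| * s.D * |E0| :=
    mul_le_mul_of_nonneg_left (hE.trans (le_abs_self E0))
      (by have := s.D_nonneg; positivity)
  have h2 : (-(e / 2) * ∫ x, s.ux x ^ 2) + C1 * (∫ x, s.dis x) + C2 * |E0| * s.D * (∫ x, s.ent x)
    = -(e / 2) * s.U1 + C1 * s.D + C2 * |E0| * s.D * s.E := rfl
  rw [h2]; linarith

end Sl
end NSLT

namespace NSLT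

lemma continuousOn_FQ1 (c : ℝ) : ContinuousOn (FQ1 c) (Ioi 0) := fun _ hs =>
  (hasDerivAt_FQ1 hs).continuousAt.continuousWithinAt

lemma continuousOn_FQ (c : ℝ) : ContinuousOn (FQ c) (Ioi 0) := fun _ hs =>
  (hasDerivAt_FQ hs).continuousAt.continuousWithinAt

lemma continuousOn_FQ2 (c : ℝ) : ContinuousOn (FQ2 c) (Ioi 0) := by
  have := continuousOn_ra c
  unfold FQ2
  fun_prop

/-- The level at which the total energy density is truncated. -/
noncomputable def Par.cw (P : Par) : ℝ := 16 * P.cv + 1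

lemma Par.cw0 (P : Par) : 0 < P.cw := by have := P.hcv; unfold Par.cw; positivity

namespace Sl
variable {P : Par} (s : Sl P)

/-- The total energy density. -/
noncomputable def w (x : ℝ) : ℝ := P.cv * s.θ x + s.u x * s.u x * (1 / 2)

lemma w0 (x : ℝ) : 0 < s.w x := by
  have := s.θ0 x; have := P.hcv; have := mul_self_nonneg (s.u x); unfold w; positivity

lemma continuous_w : Continuous s.w := by
  have := s.continuous_u; have := s.continuous_θ; unfold w; fun_prop

instance iw : LS volume (fun x => P.cv * (s.θ x - 1) + s.u x * s.u x * (1 / 2)) := inferInstance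
instance iwb : LB volume (fun x => P.cv * (s.θ x - 1) + s.u x * s.u x * (1 / 2)) := inferInstance

lemma rp_w_le (x : ℝ) :
    rp P.cw (s.w x) ≤ |P.cv * (s.θ x - 1) + s.u x * s.u x * (1 / 2)| := by
  refine max_le (le_trans ?_ (le_abs_self _)) (abs_nonneg _)
  have := P.hcv
  unfold w Par.cw; linarith

instance iFQ1 : LS volume (fun x => FQ1 P.cw (s.w x)) := by
  refine LS.of_le 3 ((continuousOn_FQ1 _).comp_continuous s.continuous_w s.w0) s.iw fun x => ?_
  exact (abs_FQ1_le P.cw0.le (s.w0 x)).trans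
    (mul_le_mul_of_nonneg_left (s.rp_w_le x) (by norm_num))

instance iFQ1b : LB volume (fun x => FQ1 P.cw (s.w x)) := by
  have h : LB volume (fun x => 3 * (P.cv * (s.θ x - 1) + s.u x * s.u x * (1 / 2))) := inferInstance
  refine ⟨h.1.mono ((continuousOn_FQ1 _).comp_continuous s.continuous_w
    s.w0).aestronglyMeasurable (Eventually.of_forall fun x => ?_)⟩
  rw [Real.norm_eq_abs, Real.norm_eq_abs, abs_mul, abs_of_pos (by norm_num : (0:ℝ) < 3)]
  exact (abs_FQ1_le P.cw0.le (s.w0 x)).trans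
    (mul_le_mul_of_nonneg_left (s.rp_w_le x) (by norm_num))

instance iFQ2 : LB volume (fun x => FQ2 P.cw (s.w x)) :=
  ⟨memLp_top_of_abs_le 2 ((continuousOn_FQ2 _).comp_continuous s.continuous_w
    s.w0).aestronglyMeasurable fun x => by
    rw [abs_of_nonneg (FQ2_nonneg P.cw0.le (s.w0 x))]
    exact FQ2_le P.cw0.le (s.w0 x)⟩

instance iFQ : LI volume (fun x => FQ P.cw (s.w x)) := by
  refine LI.of_le (g := fun x => (P.cv * (s.θ x - 1) + s.u x * s.u x * (1 / 2)) ^ 2)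
    ((continuousOn_FQ _).comp_continuous s.continuous_w s.w0) inferInstance fun x => ?_
  rw [abs_of_nonneg (FQ_nonneg (s.w0 x))]
  refine (FQ_le P.cw0.le (s.w0 x)).trans ?_
  rw [← sq_abs (P.cv * (s.θ x - 1) + s.u x * s.u x * (1 / 2))]
  exact pow_le_pow_left₀ (rp_nonneg _ _) (s.rp_w_le x) 2

end Sl

/-- The algebra behind the energy inequality: after the weight `A` on the fourth power of the
velocity is chosen, the mixed terms `u² u_x²` are absorbed. -/
lemma energy_pointwise (P : Par) : ∃ A a b c, 0 < A ∧ 0 < a ∧ 0 < b ∧ 0 < c ∧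
    ∀ q φ θ u ux θx pr : ℝ, P.K⁻¹ ≤ q → q ≤ P.K → 0 ≤ φ → φ ≤ 2 →
      -(φ * (P.cv * θx + u * ux) * ((P.κ * θx + P.μ * u * ux - P.R * θ * u) * q))
        - 3 * A * (u ^ 2 * ux * (P.μ * (ux * q) - pr))
      ≤ -(c * (φ * θx ^ 2)) - a * (u * ux) ^ 2 + b * (φ * (θ ^ 2 * u ^ 2))
        + 3 * A * (u ^ 2 * ux * pr) := by
  have hK := Sl.K0 P
  have hμ := P.hμ
  have hκ := P.hκ
  have hR := P.hR
  have hcv := P.hcv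
  set k : ℝ := P.cv * P.κ with hk
  have hk0 : 0 < k := by positivity
  set a : ℝ := (P.cv * P.μ + P.κ) ^ 2 / k with ha
  have ha0 : 0 < a := by positivity
  set b : ℝ := (P.cv * P.R) ^ 2 / k + P.R ^ 2 / (4 * P.μ) with hb
  have hb0 : 0 < b := by positivity
  refine ⟨4 * P.K ^ 2 * a / (3 * P.μ), 2 * P.K * a, P.K * b, k / (2 * P.K), by positivity,
    by positivity, by positivity, by positivity, fun q φ θ u ux θx pr h1 h2 h3 h4 => ?_⟩
  have hq : 0 < q := lt_of_lt_of_le (by positivity) h1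
  -- the quadratic form in `θ_x`, `u u_x` and `θ u`
  have key : -((P.cv * θx + u * ux) * (P.κ * θx + P.μ * u * ux - P.R * θ * u))
      ≤ -(k / 2 * θx ^ 2) + a * (u * ux) ^ 2 + b * (θ ^ 2 * u ^ 2) := by
    have y1 := young (-θx) ((P.cv * P.μ + P.κ) * (u * ux)) (by positivity : 0 < k / 4)
    have y2 := young θx (P.cv * P.R * (θ * u)) (by positivity : 0 < k / 4)
    have y3 := young (u * ux) (P.R * (θ * u)) hμ
    have e1 : ((P.cv * P.μ + P.κ) * (u * ux)) ^ 2 / (4 * (k / 4)) = a * (u * ux) ^ 2 := by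
      rw [ha]; field_simp
    have e2 : (P.cv * P.R * (θ * u)) ^ 2 / (4 * (k / 4))
        = (P.cv * P.R) ^ 2 / k * (θ ^ 2 * u ^ 2) := by field_simp
    have e3 : (P.R * (θ * u)) ^ 2 / (4 * P.μ) = P.R ^ 2 / (4 * P.μ) * (θ ^ 2 * u ^ 2) := by
      field_simp
    rw [e1] at y1
    rw [e2] at y2
    rw [e3] at y3
    rw [hb]
    have e4 : k * θx ^ 2 = P.cv * P.κ * θx ^ 2 := by rw [hk]
    nlinarith
  have hφq : 0 ≤ φ * q := by positivity
  have k1 := mul_le_mul_of_nonneg_left key hφq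
  have hqφ : φ * q ≤ 2 * P.K := mul_le_mul h4 h2 hq.le (by norm_num)
  have k2 : φ * q * (a * (u * ux) ^ 2) ≤ 2 * P.K * (a * (u * ux) ^ 2) :=
    mul_le_mul_of_nonneg_right hqφ (by positivity)
  have k3 : φ * q * (b * (θ ^ 2 * u ^ 2)) ≤ φ * P.K * (b * (θ ^ 2 * u ^ 2)) := by gcongr
  have k4 : φ * P.K⁻¹ * (k / 2 * θx ^ 2) ≤ φ * q * (k / 2 * θx ^ 2) := by gcongr
  have k5 : 4 * P.K ^ 2 * a * (u * ux) ^ 2 * P.K⁻¹ ≤ 4 * P.K ^ 2 * a * (u * ux) ^ 2 * q := by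
    gcongr
  have e5 : 4 * P.K ^ 2 * a * (u * ux) ^ 2 * P.K⁻¹ = 4 * P.K * a * (u * ux) ^ 2 := by
    field_simp
  have e6 : 3 * (4 * P.K ^ 2 * a / (3 * P.μ)) * (u ^ 2 * ux * (P.μ * (ux * q) - pr))
      = 4 * P.K ^ 2 * a * (u * ux) ^ 2 * q
        - 3 * (4 * P.K ^ 2 * a / (3 * P.μ)) * (u ^ 2 * ux * pr) := by
    field_simp
  have e7 : k / (2 * P.K) * (φ * θx ^ 2) = φ * P.K⁻¹ * (k / 2 * θx ^ 2) := by field_simp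
  rw [e6, e7]
  rw [e5] at k5
  linarith

end NSLT

namespace NSLT
namespace Sl
variable {P : Par} (s : Sl P)

lemma abs_pr_le (x : ℝ) : |s.pr x| ≤ P.R * P.K * |s.θ x - s.v x| := by
  have hv := s.v0 x
  have h : s.pr x = P.R * (s.θ x - s.v x) * (s.v x)⁻¹ := by
    unfold pr; rw [div_eq_mul_inv]; ring
  rw [h, abs_mul, abs_mul, abs_of_pos P.hR, abs_of_pos (inv_pos.2 hv)]
  have := mul_le_mul_of_nonneg_left (s.vinv_le x)
    (mul_nonneg P.hR.le (abs_nonneg (s.θ x - s.v x)))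
  linarith

lemma pr_sq_le_large (x : ℝ) (h : 16 ≤ s.θ x) :
    s.pr x ^ 2 ≤ (P.R * P.K * (1 + P.K)) ^ 2 * s.θ x ^ 2 := by
  have hK := K0 P
  have hR := P.hR
  have hv := s.v0 x
  have h1 := s.abs_pr_le x
  have h2 : |s.θ x - s.v x| ≤ (1 + P.K) * s.θ x := by
    have := s.vhi x
    rw [abs_le]; constructor <;> nlinarith
  have h3 : |s.pr x| ≤ P.R * P.K * (1 + P.K) * s.θ x :=
    h1.trans ((mul_le_mul_of_nonneg_left h2 (by positivity)).trans (by linarith))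
  rw [← sq_abs, ← mul_pow]
  exact pow_le_pow_left₀ (abs_nonneg _) h3 2

lemma pr_sq_le_small (x : ℝ) (h : s.θ x ≤ 16) :
    s.pr x ^ 2
      ≤ (P.R * P.K) ^ 2 * (2 * (34 * P.cv⁻¹ + 2 * (P.K + 1) * P.R⁻¹)) * s.ent x := by
  have h1 := pow_le_pow_left₀ (abs_nonneg _) (s.abs_pr_le x) 2
  rw [sq_abs, mul_pow _ |s.θ x - s.v x|, sq_abs] at h1
  have h2 := s.θ_sq_le x h
  have h3 := s.v_sq_le x
  have h4 : (s.θ x - s.v x) ^ 2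
      ≤ 2 * (34 * P.cv⁻¹ + 2 * (P.K + 1) * P.R⁻¹) * s.ent x := by
    nlinarith [sq_nonneg ((s.θ x - 1) + (s.v x - 1))]
  have := mul_le_mul_of_nonneg_left h4 (sq_nonneg (P.R * P.K))
  linarith

lemma hasDerivAt_w (x : ℝ) : HasDerivAt s.w (P.cv * s.θx x + s.u x * s.ux x) x := by
  have h := ((s.dθ x).const_mul P.cv).add (((s.du x).mul (s.du x)).mul_const (1 / 2))
  exact h.congr_deriv (by ring)

/-- The remainder of the energy inequality, estimated separately for large and for moderate
temperature. -/
lemma energy_rem {A a b E1 φ : ℝ} (hA : 0 < A) (ha : 0 < a) (hb : 0 < b) (hE10 : 0 < E1)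
    (hEE : s.E ≤ E1) (x : ℝ) (hφ : φ = FQ2 P.cw (s.w x)) {r r2 C3 C4 : ℝ}
    (hr : r = (P.R * P.K * (1 + P.K)) ^ 2)
    (hr2 : r2 = (P.R * P.K) ^ 2 * (2 * (34 * P.cv⁻¹ + 2 * (P.K + 1) * P.R⁻¹)))
    (hC3 : C3 = 2048 * b * E1 + 6 * A * E1 * r2)
    (hC4 : C4 = (2 * b + 9 * A ^ 2 * r / (4 * a)) * (128 * P.cv⁻¹ * E1)) :
    -(a * (s.u x * s.ux x) ^ 2) + b * (φ * (s.θ x ^ 2 * s.u x ^ 2))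
          + 3 * A * (s.u x ^ 2 * s.ux x * s.pr x)
          ≤ 3 * A * s.ux x ^ 2 + (C3 * s.U1 + C4 * s.N) * s.ent x := by
  have hK := K0 P
  have hR := P.hR
  have hcv := P.hcv
  have hr0 : 0 ≤ r := by rw [hr]; positivity
  have hr20 : 0 ≤ r2 := by rw [hr2]; positivity
  have hC30 : 0 ≤ C3 := by rw [hC3]; positivity
  have hC40 : 0 < C4 := by rw [hC4]; positivity
  have hv := s.v0 x
  have hθ := s.θ0 x
  have hent := s.ent_nonneg x
  have hU1 := s.U1_nonneg
  have hN := s.N_nonneg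
  have hφ0 : 0 ≤ φ := by rw [hφ]; exact FQ2_nonneg P.cw0.le (s.w0 x)
  have hφ2 : φ ≤ 2 := by rw [hφ]; exact FQ2_le P.cw0.le (s.w0 x)
  have hus := s.u_sq_le x
  rcases le_or_gt 16 (s.θ x) with h | h
  · have y := young (s.u x * s.ux x) (3 * A * (s.u x * s.pr x)) ha
    have e1 : (3 * A * (s.u x * s.pr x)) ^ 2 / (4 * a)
        = 9 * A ^ 2 / (4 * a) * s.u x ^ 2 * s.pr x ^ 2 := by ring
    rw [e1] at y
    have h1 : 9 * A ^ 2 / (4 * a) * s.u x ^ 2 * s.pr x ^ 2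
        ≤ 9 * A ^ 2 / (4 * a) * s.u x ^ 2 * (r * s.θ x ^ 2) :=
      mul_le_mul_of_nonneg_left (s.pr_sq_le_large x h |>.trans_eq (by rw [hr])) (by positivity)
    have h2 : b * (φ * (s.θ x ^ 2 * s.u x ^ 2)) ≤ b * (2 * (s.θ x ^ 2 * s.u x ^ 2)) := by
      gcongr
    have h3 : s.θ x ^ 2 * s.u x ^ 2 ≤ (64 * P.cv⁻¹ * E1 * s.N) * (2 * s.ent x) := by
      refine mul_le_mul ((s.θ_sq_le_N h).trans ?_) hus (sq_nonneg _) (by positivity)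
      gcongr
    have h4 := mul_le_mul_of_nonneg_left h3
      (by positivity : 0 ≤ 2 * b + 9 * A ^ 2 * r / (4 * a))
    have h5 : 0 ≤ 3 * A * s.ux x ^ 2 + C3 * s.U1 * s.ent x := by positivity
    have e2 : (2 * b + 9 * A ^ 2 * r / (4 * a)) * (64 * P.cv⁻¹ * E1 * s.N * (2 * s.ent x))
        = C4 * s.N * s.ent x := by rw [hC4]; ring
    have e3 : (2 * b + 9 * A ^ 2 * r / (4 * a)) * (s.θ x ^ 2 * s.u x ^ 2)
        = b * (2 * (s.θ x ^ 2 * s.u x ^ 2))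
          + 9 * A ^ 2 / (4 * a) * s.u x ^ 2 * (r * s.θ x ^ 2) := by ring
    rw [e2, e3] at h4
    linarith
  · have h4 : s.u x ^ 4 ≤ 8 * E1 * s.U1 :=
      (s.u_pow4 x).trans (by gcongr)
    have y := young (s.ux x) (s.u x ^ 2 * s.pr x) one_pos
    have h1 : s.u x ^ 4 * s.pr x ^ 2 ≤ 8 * E1 * s.U1 * (r2 * s.ent x) :=
      mul_le_mul h4 ((s.pr_sq_le_small x h.le).trans_eq (by rw [hr2])) (sq_nonneg _) (by positivity)
    have h2 : φ * (s.θ x ^ 2 * s.u x ^ 2) ≤ 1024 * E1 * s.U1 * (2 * s.ent x) := by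
      rcases le_or_gt (s.w x) P.cw with h5 | h5
      · rw [hφ, FQ2_of_le h5, zero_mul]; positivity
      · -- moderate temperature but large energy forces `u² > 2`
        have h6 : 2 ≤ s.u x ^ 2 := by
          unfold w Par.cw at h5; nlinarith
        have h7 : s.θ x ^ 2 ≤ 256 := (pow_le_pow_left₀ hθ.le h.le 2).trans (by norm_num)
        have h8 : 4 ≤ s.u x ^ 4 := by
              have := pow_le_pow_left₀ zero_le_two h6 2
              rw [← pow_mul] at this; norm_num at this; exact this
        calc φ * (s.θ x ^ 2 * s.u x ^ 2) ≤ 2 * (256 * s.u x ^ 2) := by gcongr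
          _ ≤ 128 * s.u x ^ 4 * s.u x ^ 2 := by
                have := mul_le_mul_of_nonneg_right h8 (sq_nonneg (s.u x)); linarith
          _ ≤ 128 * (8 * E1 * s.U1) * (2 * s.ent x) := by gcongr
          _ = _ := by ring
    have h3 := mul_le_mul_of_nonneg_left h2 hb.le
    have h5 : 0 ≤ a * (s.u x * s.ux x) ^ 2 := by positivity
    have h6 : 0 ≤ C4 * s.N * s.ent x := by positivity
    have e1 : 3 * A * (s.u x ^ 2 * s.ux x * s.pr x)
        = 3 * A * (s.ux x * (s.u x ^ 2 * s.pr x)) := by ring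
    have h7 := mul_le_mul_of_nonneg_left y (by positivity : 0 ≤ 3 * A)
    have h8 := mul_le_mul_of_nonneg_left h1 (by positivity : 0 ≤ 3 * A / 4)
    rw [e1, hC3]
    have e2 : 3 * A * (1 * s.ux x ^ 2 + (s.u x ^ 2 * s.pr x) ^ 2 / (4 * 1))
        = 3 * A * s.ux x ^ 2 + 3 * A / 4 * (s.u x ^ 4 * s.pr x ^ 2) := by ring
    rw [e2] at h7
    linarith

lemma θx_sq_le_trunc {c φ : ℝ} (hc : 0 < c) (x : ℝ) (hφ : φ = FQ2 P.cw (s.w x)) {C5 : ℝ}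
    (hC5 : C5 = c * (2 * P.cw / P.cv) ^ 2) :
    c * s.θx x ^ 2 ≤ c * (φ * s.θx x ^ 2) + C5 * s.dis x := by
  have hcv := P.hcv
  have hC50 : 0 ≤ C5 := by rw [hC5]; positivity
  have hθ := s.θ0 x
  have hφ0 : 0 ≤ φ := by rw [hφ]; exact FQ2_nonneg P.cw0.le (s.w0 x)
  have h0 : 0 ≤ s.ux x ^ 2 / s.θ x := by positivity
  have h1 : s.θx x ^ 2 ≤ φ * s.θx x ^ 2
      + (2 * P.cw / P.cv) ^ 2 * (s.θx x ^ 2 / s.θ x ^ 2) := by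
    rcases le_or_gt (2 * P.cw) (s.w x) with h | h
    · have : 1 ≤ φ := by rw [hφ]; exact one_le_FQ2 P.cw0 h
      have h2 : 0 ≤ (2 * P.cw / P.cv) ^ 2 * (s.θx x ^ 2 / s.θ x ^ 2) := by positivity
      nlinarith [sq_nonneg (s.θx x)]
    · have h2 : s.θ x ≤ 2 * P.cw / P.cv := by
        rw [le_div_iff₀ hcv]
        unfold w at h; nlinarith [mul_self_nonneg (s.u x)]
      have h3 : 1 ≤ (2 * P.cw / P.cv) ^ 2 / s.θ x ^ 2 := by
        rw [one_le_div (by positivity)]; exact pow_le_pow_left₀ hθ.le h2 2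
      have h4 := mul_le_mul_of_nonneg_right h3 (sq_nonneg (s.θx x))
      have e : (2 * P.cw / P.cv) ^ 2 / s.θ x ^ 2 * s.θx x ^ 2
          = (2 * P.cw / P.cv) ^ 2 * (s.θx x ^ 2 / s.θ x ^ 2) := by ring
      rw [e] at h4
      nlinarith [mul_nonneg hφ0 (sq_nonneg (s.θx x))]
  have h2 := mul_le_mul_of_nonneg_left h1 hc.le
  have h3 : C5 * (s.θx x ^ 2 / s.θ x ^ 2) ≤ C5 * s.dis x :=
    mul_le_mul_of_nonneg_left (by unfold dis; linarith) hC50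
  rw [hC5] at h3 ⊢
  linarith

set_option maxHeartbeats 1600000 in
/-- The truncated energy inequality, which controls `∫ θ_x²`. -/
lemma energy_ineq (P : Par) (E0 : ℝ) : ∃ A c C, 0 < A ∧ 0 < c ∧ 0 ≤ C ∧
    ∀ s : Sl P, s.Good → s.E ≤ E0 →
    ∫ x, (FQ1 P.cw (s.w x) * (P.cv * s.θt x + s.u x * s.ut x) + A * (s.u x ^ 3 * s.ut x))
      ≤ - (c * s.T1) + C * (s.D + s.U1) := by
  have hK := K0 P
  have hR := P.hR
  have hcv := P.hcv
  obtain ⟨A, a, b, c, hA, ha, hb, hc, hpw⟩ := energy_pointwise P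
  set r : ℝ := (P.R * P.K * (1 + P.K)) ^ 2 with hr
  set r2 : ℝ := (P.R * P.K) ^ 2 * (2 * (34 * P.cv⁻¹ + 2 * (P.K + 1) * P.R⁻¹)) with hr2
  have hr0 : 0 ≤ r := by positivity
  have hr20 : 0 ≤ r2 := by positivity
  set E1 : ℝ := |E0| + 1 with hE1
  have hE10 : 0 < E1 := by positivity
  set C3 : ℝ := 2048 * b * E1 + 6 * A * E1 * r2 with hC3
  set C4 : ℝ := (2 * b + 9 * A ^ 2 * r / (4 * a)) * (128 * P.cv⁻¹ * E1) with hC4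
  have hC30 : 0 ≤ C3 := by positivity
  have hC40 : 0 < C4 := by positivity
  set C5 : ℝ := c * (2 * P.cw / P.cv) ^ 2 with hC5
  have hC50 : 0 ≤ C5 := by positivity
  set ε : ℝ := c / (2 * (C4 * E1)) with hε
  have hε0 : 0 < ε := by positivity
  refine ⟨A, c / 2, C5 + C4 * E1 * ε⁻¹ + 3 * A + C3 * E1, hA, by positivity, by positivity,
    fun s hs hE => ?_⟩
  have hEE : s.E ≤ E1 := hE.trans ((le_abs_self E0).trans (by linarith))
  have key : ∫ x, (FQ1 P.cw (s.w x) * (P.cv * s.θt x + s.u x * s.ut x)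
      + A * (s.u x ^ 3 * s.ut x))
      ≤ ∫ x, (-c * s.θx x ^ 2 + C5 * s.dis x + 3 * A * s.ux x ^ 2
        + (C3 * s.U1 + C4 * s.N) * s.ent x) := by
    refine slice_ineq
      (F := fun x => FQ1 P.cw (s.w x) * (P.κ * (s.θx x / s.v x)
          + P.μ * (s.u x * (s.ux x / s.v x)) - (s.pr x + P.R) * s.u x)
        + A * (s.u x ^ 3 * (P.μ * (s.ux x / s.v x) - s.pr x)))
      (F' := fun x => FQ2 P.cw (s.w x) * (P.cv * s.θx x + s.u x * s.ux x)
          * (P.κ * (s.θx x / s.v x) + P.μ * (s.u x * (s.ux x / s.v x)) - (s.pr x + P.R) * s.u x)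
        + FQ1 P.cw (s.w x) * (P.κ * s.qx x + P.μ * (s.ux x * (s.ux x / s.v x) + s.u x * s.sx x)
          - (s.px x * s.u x + (s.pr x + P.R) * s.ux x))
        + A * (3 * s.u x ^ 2 * s.ux x * (P.μ * (s.ux x / s.v x) - s.pr x)
          + s.u x ^ 3 * (P.μ * s.sx x - s.px x))) (fun x => ?_) (fun x => ?_)
    · have h1 := (hasDerivAt_FQ1 (c := P.cw) (s.w0 x)).comp x (s.hasDerivAt_w x)
      have h2 := (((s.hasDerivAt_q x).const_mul P.κ).add
        (((s.du x).mul (s.hasDerivAt_s x)).const_mul P.μ)).sub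
        (((s.hasDerivAt_p x).add_const P.R).mul (s.du x))
      have h3 := ((s.du x).pow 3).mul
        (((s.hasDerivAt_s x).const_mul P.μ).sub (s.hasDerivAt_p x))
      refine ((h1.mul h2).add (h3.const_mul A)).congr_deriv ?_
      simp only [Pi.mul_apply, Pi.add_apply, Pi.sub_apply, Function.comp_apply, Pi.pow_apply]
      norm_num
    · have hv := s.v0 x
      have hθ := s.θ0 x
      have hent := s.ent_nonneg x
      have hU1 := s.U1_nonneg
      have hN := s.N_nonneg
      set φ := FQ2 P.cw (s.w x) with hφ
      have hφ0 : 0 ≤ φ := FQ2_nonneg P.cw0.le (s.w0 x)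
      have hφ2 : φ ≤ 2 := FQ2_le P.cw0.le (s.w0 x)
      have main := hpw (s.v x)⁻¹ φ (s.θ x) (s.u x) (s.ux x) (s.θx x) (s.pr x) (s.le_vinv x)
        (s.vinv_le x) hφ0 hφ2
      have hus := s.u_sq_le x
      have hrem := s.energy_rem hA ha hb hE10 hEE x hφ hr hr2 hC3 hC4
      have hφx := s.θx_sq_le_trunc hc x hφ hC5
      rw [s.θt_eq, s.ut_eq]
      have hpr := s.pr_eq x
      have e : FQ1 P.cw (s.w x) * (P.κ * s.qx x + P.μ * s.ux x ^ 2 / s.v x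
            - P.R * s.θ x / s.v x * s.ux x + s.u x * (-s.px x + P.μ * s.sx x))
          + A * (s.u x ^ 3 * (-s.px x + P.μ * s.sx x))
          = (φ * (P.cv * s.θx x + s.u x * s.ux x)
          * (P.κ * (s.θx x / s.v x) + P.μ * (s.u x * (s.ux x / s.v x)) - (s.pr x + P.R) * s.u x)
        + FQ1 P.cw (s.w x) * (P.κ * s.qx x + P.μ * (s.ux x * (s.ux x / s.v x) + s.u x * s.sx x)
          - (s.px x * s.u x + (s.pr x + P.R) * s.ux x))
        + A * (3 * s.u x ^ 2 * s.ux x * (P.μ * (s.ux x / s.v x) - s.pr x)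
          + s.u x ^ 3 * (P.μ * s.sx x - s.px x)))
          + (-(φ * (P.cv * s.θx x + s.u x * s.ux x)
            * ((P.κ * s.θx x + P.μ * s.u x * s.ux x - P.R * s.θ x * s.u x) * (s.v x)⁻¹))
        - 3 * A * (s.u x ^ 2 * s.ux x * (P.μ * (s.ux x * (s.v x)⁻¹) - s.pr x))) := by
        have : s.pr x + P.R = P.R * s.θ x * (s.v x)⁻¹ := by rw [hpr]; ring
        rw [this]; ring
      rw [e]
      linarith
  refine key.trans (le_of_eq_of_le (int_lin4 _ _ _ _) ?_)
  have h2 : (-c * ∫ x, s.θx x ^ 2) + C5 * (∫ x, s.dis x) + 3 * A * (∫ x, s.ux x ^ 2)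
      + (C3 * s.U1 + C4 * s.N) * (∫ x, s.ent x)
    = -c * s.T1 + C5 * s.D + 3 * A * s.U1 + (C3 * s.U1 + C4 * s.N) * s.E := rfl
  rw [h2]
  have hU1 := s.U1_nonneg
  have hN := s.N_nonneg
  have hD := s.D_nonneg
  have h3 : (C3 * s.U1 + C4 * s.N) * s.E ≤ (C3 * s.U1 + C4 * s.N) * E1 := by gcongr
  have h4 := mul_le_mul_of_nonneg_left (s.N_le hε0) (by positivity : 0 ≤ C4 * E1)
  have e : C4 * E1 * (ε * s.T1 + ε⁻¹ * s.D) = c / 2 * s.T1 + C4 * E1 * ε⁻¹ * s.D := by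
    have : C4 * E1 * ε = c / 2 := by rw [hε]; field_simp
    rw [mul_add, ← mul_assoc, this, mul_assoc (C4 * E1)]
  rw [e] at h4
  have h5 : 0 ≤ C5 * s.U1 := by positivity
  have h6 : 0 ≤ C4 * E1 * ε⁻¹ * s.U1 := by positivity
  have h7 : 0 ≤ (3 * A + C3 * E1) * s.D := by positivity
  linarith

end Sl
end NSLT

namespace NSLT

lemma sq_add3_le (a b c : ℝ) : (a + b + c) ^ 2 ≤ 3 * (a ^ 2 + b ^ 2 + c ^ 2) := by
  nlinarith [sq_nonneg (a - b), sq_nonneg (a - c), sq_nonneg (b - c)]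

namespace Sl
variable {P : Par} (s : Sl P)

/-- The logarithmic derivative of the specific volume. -/
noncomputable def l (x : ℝ) : ℝ := s.vx x / s.v x

instance il : LS volume s.l := by unfold l; infer_instance

lemma N_le' : s.N ≤ s.T1 + s.D := by simpa using s.N_le one_pos

lemma ux_sq_le [hs : s.Good] {a : ℝ} (ha : 0 < a) (x : ℝ) :
    s.ux x ^ 2 ≤ a * s.U2 + a⁻¹ * s.U1 := sq_le_add s.dux s.ux2 hs.uxx2 ha x

lemma θx_sq_le [hs : s.Good] {a : ℝ} (ha : 0 < a) (x : ℝ) :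
    s.θx x ^ 2 ≤ a * s.Th2 + a⁻¹ * s.T1 := sq_le_add s.dθx s.θx2 hs.θxx2 ha x

lemma vinv_pow_le (n : ℕ) (x : ℝ) : (s.v x)⁻¹ ^ n ≤ P.K ^ n :=
  pow_le_pow_left₀ (inv_nonneg.2 (s.v0 x).le) (s.vinv_le x) n

lemma mul_vinv_pow_le {y : ℝ} (hy : 0 ≤ y) (n : ℕ) (x : ℝ) :
    y * (s.v x)⁻¹ ^ n ≤ y * P.K ^ n :=
  mul_le_mul_of_nonneg_left (s.vinv_pow_le n x) hy

/-- Decay of `∫ (v_x/v)²`, from the effective velocity `μ (v_x/v) - u`. -/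
lemma volume_ineq (P : Par) : ∃ c C, 0 < c ∧ 0 ≤ C ∧ ∀ s : Sl P, s.Good →
    ∫ x, (P.μ * (s.l x * s.sx x) - (s.ut x * s.l x + s.u x * s.sx x))
      ≤ - (c * s.W) + C * (s.T1 + s.D + s.U1) := by
  have hK := K0 P
  have hR := P.hR
  refine ⟨P.R / 2 * P.K⁻¹ ^ 3, P.R / 2 * P.K + P.K, by positivity, by positivity,
    fun s hs => ?_⟩
  have key : ∫ x, (P.μ * (s.l x * s.sx x) - (s.ut x * s.l x + s.u x * s.sx x))
      ≤ ∫ x, (-(P.R / 2 * P.K⁻¹ ^ 3) * (s.θ x * s.vx x ^ 2)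
        + P.R / 2 * P.K * (s.θx x ^ 2 / s.θ x) + P.K * s.ux x ^ 2) := by
    refine slice_ineq (F := fun x => -(s.u x * (s.ux x / s.v x)))
      (F' := fun x => -(s.ux x * (s.ux x / s.v x) + s.u x * s.sx x))
      (fun x => ((s.du x).mul (s.hasDerivAt_s x)).neg) fun x => ?_
    have hv := s.v0 x
    have hθ := s.θ0 x
    have h1 := s.div_v_le (sq_nonneg (s.ux x)) x
    have h2 : s.px x * s.l x ≤ -(P.R / 2 * (s.θ x * s.vx x ^ 2) * (s.v x)⁻¹ ^ 3)
        + P.R / 2 * ((s.θx x ^ 2 / s.θ x) / s.v x) := by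
      have e : -(P.R / 2 * (s.θ x * s.vx x ^ 2) * (s.v x)⁻¹ ^ 3)
        + P.R / 2 * ((s.θx x ^ 2 / s.θ x) / s.v x) - s.px x * s.l x
        = P.R / 2 * (s.θx x - s.θ x * s.vx x / s.v x) ^ 2 / (s.θ x * s.v x) := by
        unfold px l; field_simp; ring
      have : 0 ≤ P.R / 2 * (s.θx x - s.θ x * s.vx x / s.v x) ^ 2 / (s.θ x * s.v x) := by
        positivity
      linarith
    have h3 := s.div_v_le (by positivity : 0 ≤ s.θx x ^ 2 / s.θ x) x
    have h4 : P.K⁻¹ ^ 3 ≤ (s.v x)⁻¹ ^ 3 :=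
      pow_le_pow_left₀ (by positivity) (s.le_vinv x) 3
    have h5 := mul_le_mul_of_nonneg_left h4
      (by positivity : 0 ≤ P.R / 2 * (s.θ x * s.vx x ^ 2))
    have h6 := mul_le_mul_of_nonneg_left h3 (by positivity : 0 ≤ P.R / 2)
    have e : P.μ * (s.l x * s.sx x) - (s.ut x * s.l x + s.u x * s.sx x)
        = s.px x * s.l x + s.ux x ^ 2 / s.v x
          - (s.ux x * (s.ux x / s.v x) + s.u x * s.sx x) := by rw [s.ut_eq]; ring
    rw [e]; linarith
  refine key.trans (le_of_eq_of_le (int_lin3 _ _ _) ?_)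
  change -(P.R / 2 * P.K⁻¹ ^ 3) * s.W + P.R / 2 * P.K * s.N + P.K * s.U1 ≤ _
  have h1 := mul_le_mul_of_nonneg_left s.N_le' (by positivity : 0 ≤ P.R / 2 * P.K)
  have h2 : 0 ≤ P.K * s.T1 := mul_nonneg hK.le s.T1_nonneg
  have h3 : 0 ≤ P.K * s.D := mul_nonneg hK.le s.D_nonneg
  have h4 : 0 ≤ P.R / 2 * P.K * s.U1 := mul_nonneg (by positivity) s.U1_nonneg
  linarith

lemma ut_mul_le [s.Good] (x : ℝ) : -(s.ut x * s.uxx x) ≤ -(P.μ / (2 * P.K)) * s.uxx x ^ 2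
    + 3 * P.K / (2 * P.μ) * (P.R ^ 2 * P.K ^ 2 * s.θx x ^ 2
      + P.R ^ 2 * P.K ^ 4 * (s.θ x ^ 2 * s.vx x ^ 2)
      + P.μ ^ 2 * P.K ^ 4 * (s.ux x ^ 2 * s.vx x ^ 2)) := by
  have hK := K0 P
  have hR := P.hR
  have hμ := P.hμ
  have hv := s.v0 x
  have y := young (s.uxx x) (P.R * s.θx x * (s.v x)⁻¹ + -(P.R * s.θ x * s.vx x * (s.v x)⁻¹ ^ 2)
    + P.μ * s.ux x * s.vx x * (s.v x)⁻¹ ^ 2) (by positivity : 0 < P.μ / (2 * P.K))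
  have h1 := sq_add3_le (P.R * s.θx x * (s.v x)⁻¹) (-(P.R * s.θ x * s.vx x * (s.v x)⁻¹ ^ 2))
    (P.μ * s.ux x * s.vx x * (s.v x)⁻¹ ^ 2)
  have h2 := s.mul_vinv_pow_le (by positivity : 0 ≤ (P.R * s.θx x) ^ 2) 2 x
  have h3 := s.mul_vinv_pow_le (by positivity : 0 ≤ (P.R * s.θ x * s.vx x) ^ 2) 4 x
  have h4 := s.mul_vinv_pow_le (by positivity : 0 ≤ (P.μ * s.ux x * s.vx x) ^ 2) 4 x
  have h5 := s.le_div_v hμ.le (sq_nonneg (s.uxx x)) x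
  have e : -(s.ut x * s.uxx x) = - (P.μ * s.uxx x ^ 2 / s.v x) + s.uxx x
      * (P.R * s.θx x * (s.v x)⁻¹ + -(P.R * s.θ x * s.vx x * (s.v x)⁻¹ ^ 2)
    + P.μ * s.ux x * s.vx x * (s.v x)⁻¹ ^ 2) := by unfold ut; ring
  rw [e]
  set z := P.R * s.θx x * (s.v x)⁻¹ + -(P.R * s.θ x * s.vx x * (s.v x)⁻¹ ^ 2)
    + P.μ * s.ux x * s.vx x * (s.v x)⁻¹ ^ 2
  have h6 : z ^ 2 ≤ 3 * (P.R ^ 2 * P.K ^ 2 * s.θx x ^ 2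
      + P.R ^ 2 * P.K ^ 4 * (s.θ x ^ 2 * s.vx x ^ 2)
      + P.μ ^ 2 * P.K ^ 4 * (s.ux x ^ 2 * s.vx x ^ 2)) := by linarith
  have h7 := mul_le_mul_of_nonneg_left h6 (by positivity : 0 ≤ P.K / (2 * P.μ))
  have e2 : z ^ 2 / (4 * (P.μ / (2 * P.K))) = P.K / (2 * P.μ) * z ^ 2 := by
    field_simp; norm_num
  have e3 : P.μ / P.K = 2 * (P.μ / (2 * P.K)) := by field_simp
  have e4 : 3 * P.K / (2 * P.μ) = 3 * (P.K / (2 * P.μ)) := by ring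
  rw [e2] at y
  rw [e3] at h5
  rw [e4]
  linarith

lemma θ_sq_mul_le {E1 : ℝ} (hE : s.E ≤ E1) (x : ℝ) :
    s.θ x ^ 2 ≤ 16 * s.θ x + 64 * P.cv⁻¹ * E1 * s.N := by
  have hcv := P.hcv
  have hN := s.N_nonneg
  have hE0 := s.E_nonneg.trans hE
  have hθ := s.θ0 x
  rcases le_or_gt 16 (s.θ x) with h | h
  · have h1 : 64 * P.cv⁻¹ * s.E * s.N ≤ 64 * P.cv⁻¹ * E1 * s.N := by gcongr
    linarith [s.θ_sq_le_N h]
  · have h1 : 0 ≤ 64 * P.cv⁻¹ * E1 * s.N := by positivity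
    nlinarith

/-- Dissipation of `∫ u_x²`. -/
lemma velocity_ineq (P : Par) (E1 Vb : ℝ) (hE1 : 0 < E1) (hVb : 0 < Vb) :
    ∃ c C, 0 < c ∧ 0 ≤ C ∧ ∀ s : Sl P, s.Good → s.E ≤ E1 → s.V1 ≤ Vb →
    ∫ x, -(s.ut x * s.uxx x) ≤ - (c * s.U2) + C * (s.T1 + s.W + s.D + s.U1) := by
  have hK := K0 P
  have hR := P.hR
  have hμ := P.hμ
  have hcv := P.hcv
  set c := P.μ / (2 * P.K) with hc
  set a := 3 * P.K / (2 * P.μ) * (P.R ^ 2 * P.K ^ 2) with ha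
  set b := 3 * P.K / (2 * P.μ) * (P.R ^ 2 * P.K ^ 4) with hb
  set d := 3 * P.K / (2 * P.μ) * (P.μ ^ 2 * P.K ^ 4) with hd
  have hc0 : 0 < c := by positivity
  have ha0 : 0 < a := by positivity
  have hb0 : 0 < b := by positivity
  have hd0 : 0 < d := by positivity
  set ε := c / (2 * d * Vb) with hε
  have hε0 : 0 < ε := by positivity
  set k := 64 * P.cv⁻¹ * E1 with hk
  have hk0 : 0 < k := by positivity
  refine ⟨c / 2, a + 16 * b + b * k * Vb + d * ε⁻¹ * Vb, by positivity, by positivity,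
    fun s hs hE hV => ?_⟩
  have hN := s.N_nonneg
  have hU2 := s.U2_nonneg
  have hU1 := s.U1_nonneg
  have hT1 := s.T1_nonneg
  have hD := s.D_nonneg
  have hW := s.W_nonneg
  have key : ∫ x, -(s.ut x * s.uxx x) ≤ ∫ x, (-c * s.uxx x ^ 2 + a * s.θx x ^ 2
      + 16 * b * (s.θ x * s.vx x ^ 2)
      + (b * k * s.N + d * (ε * s.U2 + ε⁻¹ * s.U1)) * s.vx x ^ 2) := by
    refine integral_mono (li (fun x => -(s.ut x * s.uxx x))) (li _) fun x => ?_
    have h1 := s.ut_mul_le x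
    have h2 := mul_le_mul_of_nonneg_right (s.θ_sq_mul_le hE x)
      (by positivity : 0 ≤ b * s.vx x ^ 2)
    have h3 := mul_le_mul_of_nonneg_right (s.ux_sq_le hε0 x)
      (by positivity : 0 ≤ d * s.vx x ^ 2)
    dsimp only
    rw [← hc] at h1
    have e : 3 * P.K / (2 * P.μ) * (P.R ^ 2 * P.K ^ 2 * s.θx x ^ 2
      + P.R ^ 2 * P.K ^ 4 * (s.θ x ^ 2 * s.vx x ^ 2)
      + P.μ ^ 2 * P.K ^ 4 * (s.ux x ^ 2 * s.vx x ^ 2)) = a * s.θx x ^ 2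
      + b * (s.θ x ^ 2 * s.vx x ^ 2) + d * (s.ux x ^ 2 * s.vx x ^ 2) := by
      rw [ha, hb, hd]; ring
    rw [e] at h1
    rw [← hk] at h2
    linarith
  refine key.trans (le_of_eq_of_le (int_lin4 _ _ _ _) ?_)
  change -c * s.U2 + a * s.T1 + 16 * b * s.W
    + (b * k * s.N + d * (ε * s.U2 + ε⁻¹ * s.U1)) * s.V1 ≤ _
  have h1 : (b * k * s.N + d * (ε * s.U2 + ε⁻¹ * s.U1)) * s.V1
    ≤ (b * k * s.N + d * (ε * s.U2 + ε⁻¹ * s.U1)) * Vb := by gcongr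
  have h2 := mul_le_mul_of_nonneg_left s.N_le' (by positivity : 0 ≤ b * k * Vb)
  have e : d * ε * Vb = c / 2 := by rw [hε]; field_simp
  have e2 : (b * k * s.N + d * (ε * s.U2 + ε⁻¹ * s.U1)) * Vb
    = b * k * Vb * s.N + c / 2 * s.U2 + d * ε⁻¹ * Vb * s.U1 := by rw [← e]; ring
  have h3 : 0 ≤ (16 * b + d * ε⁻¹ * Vb) * s.T1 := by positivity
  have h4 : 0 ≤ (a + b * k * Vb + d * ε⁻¹ * Vb) * s.W := by positivity
  have h5 : 0 ≤ (a + 16 * b + d * ε⁻¹ * Vb) * s.D := by positivity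
  have h6 : 0 ≤ (a + 16 * b + b * k * Vb) * s.U1 := by positivity
  rw [e2] at h1
  linarith

lemma θt_mul_le [s.Good] (x : ℝ) :
    -(P.cv * s.θt x * s.θxx x) ≤ -(P.κ / (2 * P.K)) * s.θxx x ^ 2
    + 3 * P.K / (2 * P.κ) * (P.κ ^ 2 * P.K ^ 4 * (s.θx x ^ 2 * s.vx x ^ 2)
      + P.μ ^ 2 * P.K ^ 2 * (s.ux x ^ 2 * s.ux x ^ 2)
      + P.R ^ 2 * P.K ^ 2 * (s.θ x ^ 2 * s.ux x ^ 2)) := by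
  have hK := K0 P
  have hR := P.hR
  have hκ := P.hκ
  have hμ := P.hμ
  have hv := s.v0 x
  have y := young (s.θxx x) (P.κ * s.θx x * s.vx x * (s.v x)⁻¹ ^ 2 + -(P.μ * s.ux x ^ 2 * (s.v x)⁻¹)
    + P.R * s.θ x * s.ux x * (s.v x)⁻¹) (by positivity : 0 < P.κ / (2 * P.K))
  have h1 := sq_add3_le (P.κ * s.θx x * s.vx x * (s.v x)⁻¹ ^ 2) (-(P.μ * s.ux x ^ 2 * (s.v x)⁻¹))
    (P.R * s.θ x * s.ux x * (s.v x)⁻¹)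
  have h2 := s.mul_vinv_pow_le (by positivity : 0 ≤ (P.κ * s.θx x * s.vx x) ^ 2) 4 x
  have h3 := s.mul_vinv_pow_le (by positivity : 0 ≤ (P.μ * s.ux x ^ 2) ^ 2) 2 x
  have h4 := s.mul_vinv_pow_le (by positivity : 0 ≤ (P.R * s.θ x * s.ux x) ^ 2) 2 x
  have h5 := s.le_div_v hκ.le (sq_nonneg (s.θxx x)) x
  have e : -(P.cv * s.θt x * s.θxx x) = - (P.κ * s.θxx x ^ 2 / s.v x) + s.θxx x
      * (P.κ * s.θx x * s.vx x * (s.v x)⁻¹ ^ 2 + -(P.μ * s.ux x ^ 2 * (s.v x)⁻¹)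
    + P.R * s.θ x * s.ux x * (s.v x)⁻¹) := by rw [s.θt_eq]; unfold qx; ring
  rw [e]
  set z := P.κ * s.θx x * s.vx x * (s.v x)⁻¹ ^ 2 + -(P.μ * s.ux x ^ 2 * (s.v x)⁻¹)
    + P.R * s.θ x * s.ux x * (s.v x)⁻¹
  have h6 : z ^ 2 ≤ 3 * (P.κ ^ 2 * P.K ^ 4 * (s.θx x ^ 2 * s.vx x ^ 2)
      + P.μ ^ 2 * P.K ^ 2 * (s.ux x ^ 2 * s.ux x ^ 2)
      + P.R ^ 2 * P.K ^ 2 * (s.θ x ^ 2 * s.ux x ^ 2)) := by linarith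
  have h7 := mul_le_mul_of_nonneg_left h6 (by positivity : 0 ≤ P.K / (2 * P.κ))
  have e2 : z ^ 2 / (4 * (P.κ / (2 * P.K))) = P.K / (2 * P.κ) * z ^ 2 := by
    field_simp; norm_num
  have e3 : P.κ / P.K = 2 * (P.κ / (2 * P.K)) := by field_simp
  have e4 : 3 * P.K / (2 * P.κ) = 3 * (P.K / (2 * P.κ)) := by ring
  rw [e2] at y
  rw [e3] at h5
  rw [e4]
  linarith

lemma θ_sq_le_const {E1 : ℝ} (hE : s.E ≤ E1) (x : ℝ) :
    s.θ x ^ 2 ≤ 256 + 64 * P.cv⁻¹ * E1 * s.N := by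
  have hcv := P.hcv
  have hN := s.N_nonneg
  have hE0 := s.E_nonneg.trans hE
  have hθ := s.θ0 x
  rcases le_or_gt 16 (s.θ x) with h | h
  · have h1 : 64 * P.cv⁻¹ * s.E * s.N ≤ 64 * P.cv⁻¹ * E1 * s.N := by gcongr
    linarith [s.θ_sq_le_N h]
  · have h1 : 0 ≤ 64 * P.cv⁻¹ * E1 * s.N := by positivity
    nlinarith

/-- Dissipation of `∫ θ_x²`. -/
lemma temperature_ineq (P : Par) (E1 Vb Ub : ℝ) (hE1 : 0 < E1) (hVb : 0 < Vb) (hUb : 0 < Ub) :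
    ∃ c C, 0 < c ∧ 0 ≤ C ∧ ∀ s : Sl P, s.Good → s.E ≤ E1 → s.V1 ≤ Vb → s.U1 ≤ Ub →
    ∫ x, -(P.cv * s.θt x * s.θxx x) ≤ - (c * s.Th2) + C * (s.T1 + s.D + s.U1 + s.U2) := by
  have hK := K0 P
  have hR := P.hR
  have hκ := P.hκ
  have hμ := P.hμ
  have hcv := P.hcv
  set c := P.κ / (2 * P.K) with hc
  set a := 3 * P.K / (2 * P.κ) * (P.κ ^ 2 * P.K ^ 4) with ha
  set b := 3 * P.K / (2 * P.κ) * (P.μ ^ 2 * P.K ^ 2) with hb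
  set d := 3 * P.K / (2 * P.κ) * (P.R ^ 2 * P.K ^ 2) with hd
  have hc0 : 0 < c := by positivity
  have ha0 : 0 < a := by positivity
  have hb0 : 0 < b := by positivity
  have hd0 : 0 < d := by positivity
  set ε := c / (2 * a * Vb) with hε
  have hε0 : 0 < ε := by positivity
  set k := 64 * P.cv⁻¹ * E1 with hk
  have hk0 : 0 < k := by positivity
  refine ⟨c / 2, a * ε⁻¹ * Vb + b * Ub + 256 * d + d * k * Ub, by positivity, by positivity,
    fun s hs hE hV hU => ?_⟩
  have hN := s.N_nonneg
  have hU2 := s.U2_nonneg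
  have hU1 := s.U1_nonneg
  have hT1 := s.T1_nonneg
  have hT2 := s.Th2_nonneg
  have hD := s.D_nonneg
  have key : ∫ x, -(P.cv * s.θt x * s.θxx x) ≤ ∫ x, (-c * s.θxx x ^ 2
      + a * (ε * s.Th2 + ε⁻¹ * s.T1) * s.vx x ^ 2
      + (b * (1 * s.U2 + 1⁻¹ * s.U1) + d * (256 + k * s.N)) * s.ux x ^ 2) := by
    refine integral_mono (li (fun x => -(P.cv * s.θt x * s.θxx x))) (li _) fun x => ?_
    have h1 := s.θt_mul_le x
    have h2 := mul_le_mul_of_nonneg_right (s.θ_sq_le_const hE x)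
      (by positivity : 0 ≤ d * s.ux x ^ 2)
    have h3 := mul_le_mul_of_nonneg_right (s.θx_sq_le hε0 x)
      (by positivity : 0 ≤ a * s.vx x ^ 2)
    have h4 := mul_le_mul_of_nonneg_right (s.ux_sq_le one_pos x)
      (by positivity : 0 ≤ b * s.ux x ^ 2)
    dsimp only
    rw [← hc] at h1
    have e : 3 * P.K / (2 * P.κ) * (P.κ ^ 2 * P.K ^ 4 * (s.θx x ^ 2 * s.vx x ^ 2)
      + P.μ ^ 2 * P.K ^ 2 * (s.ux x ^ 2 * s.ux x ^ 2)
      + P.R ^ 2 * P.K ^ 2 * (s.θ x ^ 2 * s.ux x ^ 2)) = a * (s.θx x ^ 2 * s.vx x ^ 2)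
      + b * (s.ux x ^ 2 * s.ux x ^ 2) + d * (s.θ x ^ 2 * s.ux x ^ 2) := by
      rw [ha, hb, hd]; ring
    rw [e] at h1
    rw [← hk] at h2
    linarith
  refine key.trans (le_of_eq_of_le (int_lin3 _ _ _) ?_)
  change -c * s.Th2 + a * (ε * s.Th2 + ε⁻¹ * s.T1) * s.V1
      + (b * (1 * s.U2 + 1⁻¹ * s.U1) + d * (256 + k * s.N)) * s.U1 ≤ _
  have h1 : a * (ε * s.Th2 + ε⁻¹ * s.T1) * s.V1 ≤ a * (ε * s.Th2 + ε⁻¹ * s.T1) * Vb := by gcongr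
  have h0 : (b * (s.U2 + s.U1) + d * k * s.N) * s.U1
      ≤ (b * (s.U2 + s.U1) + d * k * s.N) * Ub := by gcongr
  have h2 := mul_le_mul_of_nonneg_left s.N_le' (by positivity : 0 ≤ d * k * Ub)
  have e : a * ε * Vb = c / 2 := by rw [hε]; field_simp
  have e2 : a * (ε * s.Th2 + ε⁻¹ * s.T1) * Vb
    = c / 2 * s.Th2 + a * ε⁻¹ * Vb * s.T1 := by rw [← e]; ring
  have h3 : 0 ≤ (b * Ub + 256 * d) * s.T1 := by positivity
  have h4 : 0 ≤ (a * ε⁻¹ * Vb + 256 * d + d * k * Ub) * s.U2 := by positivity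
  have h5 : 0 ≤ (a * ε⁻¹ * Vb + b * Ub + 256 * d) * s.D := by positivity
  have h6 : 0 ≤ (a * ε⁻¹ * Vb + d * k * Ub) * s.U1 := by positivity
  rw [e2] at h1
  rw [one_mul, inv_one, one_mul]
  linarith

/-- Growth bound for `∫ (v_x/v)²`. -/
lemma l_ineq (P : Par) (Vb : ℝ) (hVb : 0 < Vb) :
    ∃ C, 0 ≤ C ∧ ∀ s : Sl P, s.Good → s.V1 ≤ Vb →
    ∫ x, s.l x * s.sx x ≤ C * (s.V1 + s.U2 + s.U1) := by
  have hK := K0 P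
  refine ⟨P.K ^ 4 + P.K ^ 6 + 1 + Vb, by positivity, fun s hs hV => ?_⟩
  have hU2 := s.U2_nonneg
  have hU1 := s.U1_nonneg
  have hV1 := s.V1_nonneg
  have key : ∫ x, s.l x * s.sx x ≤ ∫ x, (s.uxx x ^ 2
      + (P.K ^ 4 + P.K ^ 6 + (1 * s.U2 + 1⁻¹ * s.U1)) * s.vx x ^ 2) := by
    refine integral_mono (li (fun x => s.l x * s.sx x)) (li _) fun x => ?_
    have hv := s.v0 x
    have y1 := young (s.uxx x) (s.vx x * (s.v x)⁻¹ ^ 2) one_pos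
    have y2 := young (s.ux x * s.vx x) (-(s.vx x * (s.v x)⁻¹ ^ 3)) one_pos
    have h2 := s.mul_vinv_pow_le (by positivity : 0 ≤ s.vx x ^ 2) 4 x
    have h3 := s.mul_vinv_pow_le (by positivity : 0 ≤ s.vx x ^ 2) 6 x
    have h4 := mul_le_mul_of_nonneg_right (s.ux_sq_le one_pos x) (sq_nonneg (s.vx x))
    have e : s.l x * s.sx x = s.uxx x * (s.vx x * (s.v x)⁻¹ ^ 2)
      + s.ux x * s.vx x * (-(s.vx x * (s.v x)⁻¹ ^ 3)) := by unfold l sx; ring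
    have h5 : 0 ≤ s.vx x ^ 2 * P.K ^ 4 := by positivity
    have h6 : 0 ≤ s.vx x ^ 2 * P.K ^ 6 := by positivity
    dsimp only
    rw [e]
    linarith
  have h1 := int_lin2 (f := fun x => s.uxx x ^ 2) (g := fun x => s.vx x ^ 2) 1
    (P.K ^ 4 + P.K ^ 6 + (1 * s.U2 + 1⁻¹ * s.U1))
  simp only [one_mul, inv_one] at h1 key
  rw [h1] at key
  change _ ≤ s.U2 + (P.K ^ 4 + P.K ^ 6 + (s.U2 + s.U1)) * s.V1 at key
  have h2 : (s.U2 + s.U1) * s.V1 ≤ (s.U2 + s.U1) * Vb := by gcongr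
  have h3 : 0 ≤ (P.K ^ 4 + P.K ^ 6) * s.U2 := by positivity
  have h4 : 0 ≤ (P.K ^ 4 + P.K ^ 6 + 1) * s.U1 := by positivity
  have h5 : 0 ≤ (1 + Vb) * s.V1 := by positivity
  linarith

end Sl
end NSLT

namespace NSLT

/-! ### Space-time strips and integration in time -/

/-- Lebesgue measure on the strip `ℝ × (0, T]`; points are `(x, t)`. -/
noncomputable def strip (T : ℝ) : Measure (ℝ × ℝ) :=
  (volume : Measure ℝ).prod (volume.restrict (Ioc 0 T))

lemma ae_strip {T : ℝ} {p : ℝ × ℝ → Prop} (h : ∀ x, ∀ t ∈ Ioc (0 : ℝ) T, p (x, t)) :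
    ∀ᵐ q ∂(strip T), p q := by
  have e : strip T = (volume : Measure (ℝ × ℝ)).restrict (univ ×ˢ Ioc 0 T) := by
    rw [strip, Measure.volume_eq_prod, ← Measure.prod_restrict, Measure.restrict_univ]
  rw [e]
  exact ae_restrict_of_forall_mem (MeasurableSet.univ.prod measurableSet_Ioc)
    fun q hq => h q.1 q.2 hq.2

/-- Integration in time of a spatial integral. -/
lemma time_int {T : ℝ} {H Hd : ℝ → ℝ → ℝ} (hc : ∀ x, ContinuousOn (H x) (Icc 0 T))
    (hd : ∀ x, ∀ τ ∈ Ioo 0 T, HasDerivAt (H x) (Hd x τ) τ)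
    (hi : Integrable (fun p : ℝ × ℝ => Hd p.1 p.2) (strip T)) {a b : ℝ}
    (ha : a ∈ Icc 0 T) (hb : b ∈ Icc 0 T)
    (hHa : Integrable fun x => H x a) (hHb : Integrable fun x => H x b) :
    (∫ x, H x b) - ∫ x, H x a = ∫ τ in a..b, ∫ x, Hd x τ := by
  wlog hab : a ≤ b generalizing a b
  · have := this hb ha hHb hHa (le_of_not_ge hab)
    rw [intervalIntegral.integral_symm, ← this]; ring
  have hsub : Ioc a b ⊆ Ioc 0 T := Ioc_subset_Ioc ha.1 hb.2
  have hi' : Integrable (fun p : ℝ × ℝ => Hd p.1 p.2)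
      ((volume : Measure ℝ).prod (volume.restrict (Ioc a b))) := by
    refine hi.mono_measure ?_
    exact Measure.prod_mono le_rfl (Measure.restrict_mono hsub le_rfl)
  rw [← integral_sub hHb hHa, intervalIntegral.integral_of_le hab]
  have := integral_integral_swap (f := Hd) (μ := volume) (ν := volume.restrict (Ioc a b)) hi'
  rw [← this]
  refine integral_congr_ae ?_
  filter_upwards [hi'.prod_right_ae] with x hx
  rw [← intervalIntegral.integral_of_le hab]
  refine (intervalIntegral.integral_eq_sub_of_hasDerivAt_of_le hab
    ((hc x).mono (Icc_subset_Icc ha.1 hb.2)) (fun τ hτ => hd x τ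
      ⟨ha.1.trans_lt hτ.1, hτ.2.trans_le hb.2⟩) ?_).symm
  rw [intervalIntegrable_iff_integrableOn_Ioc_of_le hab]
  exact hx

lemma intervalIntegrable_strip {T : ℝ} {f : ℝ → ℝ → ℝ}
    (hi : Integrable (fun p : ℝ × ℝ => f p.1 p.2) (strip T)) {a b : ℝ}
    (ha : a ∈ Icc 0 T) (hb : b ∈ Icc 0 T) :
    IntervalIntegrable (fun τ => ∫ x, f x τ) volume a b := by
  have h : IntegrableOn (fun τ => ∫ x, f x τ) (Ioc 0 T) := hi.integral_prod_right
  rw [intervalIntegrable_iff]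
  refine h.mono_set (Ioc_subset_Ioc (le_min ha.1 hb.1) (max_le ha.2 hb.2))

/-- Square integrability on the strip from bounds on the slices. -/
lemma memLp_strip {T : ℝ} {f : ℝ → ℝ → ℝ}
    (hm : Measurable fun p : ℝ × ℝ => f p.1 p.2) {G : ℝ → ℝ}
    (hG : IntegrableOn G (Ioc 0 T))
    (hf : ∀ᵐ t ∂(volume.restrict (Ioc 0 T)), MemLp (fun x => f x t) 2)
    (hb : ∀ᵐ t ∂(volume.restrict (Ioc 0 T)), ∫ x, f x t ^ 2 ≤ G t) :
    MemLp (fun p : ℝ × ℝ => f p.1 p.2) 2 (strip T) := by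
  rw [memLp_two_iff_integrable_sq hm.aestronglyMeasurable, strip,
    integrable_prod_iff' (hm.pow_const 2).aestronglyMeasurable]
  refine ⟨hf.mono fun t ht => ht.integrable_sq, ?_⟩
  have hm2 : AEStronglyMeasurable (fun t => ∫ x, ‖f x t ^ 2‖) (volume.restrict (Ioc 0 T)) :=
    ((hm.pow_const 2).norm.stronglyMeasurable.integral_prod_left'
      (μ := (volume : Measure ℝ))).aestronglyMeasurable
  refine Integrable.mono' hG hm2 ?_
  filter_upwards [hb] with t ht
  have h0 : 0 ≤ ∫ x, ‖f x t ^ 2‖ := integral_nonneg fun x => norm_nonneg _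
  rw [Real.norm_of_nonneg h0]
  simpa using ht

lemma ae_slice_memLp {T : ℝ} {f : ℝ → ℝ → ℝ}
    (hm : ∀ t, AEStronglyMeasurable (fun x => f x t) volume)
    (h : MemLp (fun p : ℝ × ℝ => f p.1 p.2) 2 (strip T)) :
    ∀ᵐ t ∂(volume.restrict (Ioc 0 T)), MemLp (fun x => f x t) 2 := by
  have := h.integrable_sq
  rw [strip] at this
  filter_upwards [this.prod_left_ae] with t ht
  exact (memLp_two_iff_integrable_sq (hm t)).2 ht

lemma measurePreserving_shift (h T : ℝ) :
    MeasurePreserving (fun p : ℝ × ℝ => (p.1 + h, p.2)) (strip T) (strip T) :=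
  (measurePreserving_add_right volume h).prod (MeasurePreserving.id _)

lemma memLp_strip_dq {T : ℝ} {f : ℝ → ℝ → ℝ}
    (hf : MemLp (fun p : ℝ × ℝ => f p.1 p.2) 2 (strip T)) (h : ℝ) :
    MemLp (fun p : ℝ × ℝ => dq h (fun x => f x p.2) p.1) 2 (strip T) := by
  have h1 := (hf.comp_measurePreserving (measurePreserving_shift h T)).sub hf
  have h2 := h1.const_mul h⁻¹
  refine h2.ae_eq (Eventually.of_forall fun p => ?_)
  simp only [dq, Function.comp_apply, Pi.sub_apply]; ring

lemma abs_int_mul_le {α : Type*} [MeasurableSpace α] {m : Measure α} {f g : α → ℝ}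
    (hf : MemLp f 2 m) (hg : MemLp g 2 m) :
    |∫ x, f x * g x ∂m| ≤ (∫ x, f x ^ 2 ∂m) + ∫ x, g x ^ 2 ∂m := by
  rw [← integral_add hf.integrable_sq hg.integrable_sq]
  refine (abs_integral_le_integral_abs).trans
    (integral_mono (int_abs_mul hf hg) (hf.integrable_sq.add hg.integrable_sq) fun x => ?_)
  dsimp only
  rw [abs_le]
  constructor <;> nlinarith [sq_nonneg (f x + g x), sq_nonneg (f x - g x), sq_nonneg (f x),
    sq_nonneg (g x)]

/-- Passage to the limit in `time_int`. -/
lemma time_int_lim {T : ℝ} {H Hd : ℕ → ℝ → ℝ → ℝ} {A g G : ℝ → ℝ}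
    (hc : ∀ n x, ContinuousOn (H n x) (Icc 0 T))
    (hd : ∀ n x, ∀ τ ∈ Ioo 0 T, HasDerivAt (H n x) (Hd n x τ) τ)
    (hi : ∀ n, Integrable (fun p : ℝ × ℝ => Hd n p.1 p.2) (strip T))
    (hH : ∀ n, ∀ t ∈ Icc 0 T, Integrable fun x => H n x t)
    (hA : ∀ t ∈ Icc 0 T, Tendsto (fun n => ∫ x, H n x t) atTop (nhds (A t)))
    (hG : IntegrableOn G (Ioc 0 T))
    (hle : ∀ n, ∀ᵐ τ ∂(volume.restrict (Ioc 0 T)), |∫ x, Hd n x τ| ≤ G τ)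
    (hg : ∀ᵐ τ ∂(volume.restrict (Ioc 0 T)),
      Tendsto (fun n => ∫ x, Hd n x τ) atTop (nhds (g τ))) {a b : ℝ}
    (ha : a ∈ Icc 0 T) (hb : b ∈ Icc 0 T) :
    A b - A a = ∫ τ in a..b, g τ := by
  have h1 : ∀ n, (∫ x, H n x b) - ∫ x, H n x a = ∫ τ in a..b, ∫ x, Hd n x τ := fun n =>
    time_int (hc n) (hd n) (hi n) ha hb (hH n a ha) (hH n b hb)
  have hsub : uIoc a b ⊆ Ioc 0 T := Ioc_subset_Ioc (le_min ha.1 hb.1) (max_le ha.2 hb.2)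
  have h2 : Tendsto (fun n => ∫ τ in a..b, ∫ x, Hd n x τ) atTop (nhds (∫ τ in a..b, g τ)) := by
    refine intervalIntegral.tendsto_integral_filter_of_dominated_convergence G
      (Eventually.of_forall fun n => ?_) (Eventually.of_forall fun n => ?_) ?_ ?_
    · exact (intervalIntegrable_iff.1 (intervalIntegrable_strip (hi n) ha hb)).aestronglyMeasurable
    · exact (ae_restrict_iff' measurableSet_uIoc).1 (ae_restrict_of_ae_restrict_of_subset hsub (hle n))
    · rw [intervalIntegrable_iff]; exact hG.mono_set hsub
    · exact (ae_restrict_iff' measurableSet_uIoc).1 (ae_restrict_of_ae_restrict_of_subset hsub hg)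
  refine tendsto_nhds_unique ((hA b hb).sub (hA a ha)) ?_
  simpa only [h1] using h2

end NSLT

namespace NSLT

/-- A solution, as a family of slices indexed by time (only `t ≥ 0` is meaningful; the family
is constant for `t ≤ 0`), with the regularity in time that the estimates use. -/
structure Sol (P : Par) where
  sl : ℝ → Sl P
  ct_v : ∀ x, Continuous fun t => (sl t).v x
  ct_u : ∀ x, Continuous fun t => (sl t).u x
  ct_θ : ∀ x, Continuous fun t => (sl t).θ x
  dt_v : ∀ x t, 0 < t → HasDerivAt (fun t => (sl t).v x) ((sl t).ux x) t
  dt_u : ∀ x t, 0 < t → HasDerivAt (fun t => (sl t).u x) ((sl t).ut x) t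
  dt_θ : ∀ x t, 0 < t → HasDerivAt (fun t => (sl t).θ x) ((sl t).θt x) t
  bdd : ∀ T, ∃ B, ∀ t ∈ Icc 0 T, (∫ x, ((sl t).v x - 1) ^ 2 ≤ B ∧ ∫ x, (sl t).u x ^ 2 ≤ B ∧
    ∫ x, ((sl t).θ x - 1) ^ 2 ≤ B) ∧ (sl t).V1 ≤ B ∧ (sl t).U1 ≤ B ∧ (sl t).T1 ≤ B
  uxx2 : ∀ T, MemLp (fun p : ℝ × ℝ => (sl p.2).uxx p.1) 2 (strip T)
  θxx2 : ∀ T, MemLp (fun p : ℝ × ℝ => (sl p.2).θxx p.1) 2 (strip T)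

namespace Sol
variable {P : Par} (S : Sol P) (T : ℝ)

/-! ### Measurability and integrability on strips -/

lemma measurable_dx {f f' : ℝ → ℝ → ℝ} (hf : Measurable fun p : ℝ × ℝ => f p.1 p.2)
    (hd : ∀ x t, HasDerivAt (fun x => f x t) (f' x t) x) :
    Measurable fun p : ℝ × ℝ => f' p.1 p.2 := by
  refine measurable_of_tendsto_metrizable (f := fun n (p : ℝ × ℝ) =>
    dq (hs n) (fun x => f x p.2) p.1) (fun n => ?_) ?_
  · have h1 : Measurable fun p : ℝ × ℝ => f (p.1 + hs n) p.2 :=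
      hf.comp (f := fun p : ℝ × ℝ => (p.1 + hs n, p.2)) (by fun_prop)
    exact (h1.sub hf).div_const _
  · rw [tendsto_pi_nhds]
    exact fun p => dq_tendsto (hd p.1 p.2)

lemma measurable_of_ct {f : ℝ → ℝ → ℝ} (h1 : ∀ x, Continuous fun t => f t x)
    (h2 : ∀ t, Continuous (f t)) : Measurable fun p : ℝ × ℝ => f p.2 p.1 :=
  (measurable_uncurry_of_continuous_of_measurable (u := fun t x => f t x) h1
    fun t => (h2 t).measurable).comp measurable_swap

lemma mv : Measurable fun p : ℝ × ℝ => (S.sl p.2).v p.1 :=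
  measurable_of_ct (f := fun t => (S.sl t).v) S.ct_v fun t => (S.sl t).continuous_v
lemma mu : Measurable fun p : ℝ × ℝ => (S.sl p.2).u p.1 :=
  measurable_of_ct (f := fun t => (S.sl t).u) S.ct_u fun t => (S.sl t).continuous_u
lemma mθ : Measurable fun p : ℝ × ℝ => (S.sl p.2).θ p.1 :=
  measurable_of_ct (f := fun t => (S.sl t).θ) S.ct_θ fun t => (S.sl t).continuous_θ
lemma mvx : Measurable fun p : ℝ × ℝ => (S.sl p.2).vx p.1 :=
  measurable_dx (f := fun x t => (S.sl t).v x) S.mv fun x t => (S.sl t).dv x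
lemma mux : Measurable fun p : ℝ × ℝ => (S.sl p.2).ux p.1 :=
  measurable_dx (f := fun x t => (S.sl t).u x) S.mu fun x t => (S.sl t).du x
lemma mθx : Measurable fun p : ℝ × ℝ => (S.sl p.2).θx p.1 :=
  measurable_dx (f := fun x t => (S.sl t).θ x) S.mθ fun x t => (S.sl t).dθ x

lemma ae_Ioc {p : ℝ → Prop} (h : ∀ t ∈ Icc 0 T, p t) :
    ∀ᵐ t ∂(volume.restrict (Ioc 0 T)), p t :=
  ae_restrict_of_forall_mem measurableSet_Ioc fun t ht => h t (Ioc_subset_Icc_self ht)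

lemma memLp_of_slices {f : ℝ → ℝ → ℝ} (hm : Measurable fun p : ℝ × ℝ => f p.1 p.2)
    (hf : ∀ t, MemLp (fun x => f x t) 2) {B : ℝ} (hB : ∀ t ∈ Icc 0 T, ∫ x, f x t ^ 2 ≤ B) :
    MemLp (fun p : ℝ × ℝ => f p.1 p.2) 2 (strip T) :=
  memLp_strip hm (G := fun _ => B) (integrableOn_const (by simp))
    (Eventually.of_forall hf) (ae_Ioc T hB)

instance sv2 : LS (strip T) (fun p : ℝ × ℝ => (S.sl p.2).v p.1 - 1) := by
  obtain ⟨B, hB⟩ := S.bdd T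
  exact ⟨memLp_of_slices T (f := fun x t => (S.sl t).v x - 1) (S.mv.sub_const 1)
    (fun t => (S.sl t).v2) fun t ht => (hB t ht).1.1⟩
instance su2 : LS (strip T) (fun p : ℝ × ℝ => (S.sl p.2).u p.1) := by
  obtain ⟨B, hB⟩ := S.bdd T
  exact ⟨memLp_of_slices T (f := fun x t => (S.sl t).u x) S.mu
    (fun t => (S.sl t).u2) fun t ht => (hB t ht).1.2.1⟩
instance sθ2 : LS (strip T) (fun p : ℝ × ℝ => (S.sl p.2).θ p.1 - 1) := by
  obtain ⟨B, hB⟩ := S.bdd T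
  exact ⟨memLp_of_slices T (f := fun x t => (S.sl t).θ x - 1) (S.mθ.sub_const 1)
    (fun t => (S.sl t).θ2) fun t ht => (hB t ht).1.2.2⟩
instance svx2 : LS (strip T) (fun p : ℝ × ℝ => (S.sl p.2).vx p.1) := by
  obtain ⟨B, hB⟩ := S.bdd T
  exact ⟨memLp_of_slices T (f := fun x t => (S.sl t).vx x) S.mvx
    (fun t => (S.sl t).vx2) fun t ht => (hB t ht).2.1⟩
instance sux2 : LS (strip T) (fun p : ℝ × ℝ => (S.sl p.2).ux p.1) := by
  obtain ⟨B, hB⟩ := S.bdd T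
  exact ⟨memLp_of_slices T (f := fun x t => (S.sl t).ux x) S.mux
    (fun t => (S.sl t).ux2) fun t ht => (hB t ht).2.2.1⟩
instance sθx2 : LS (strip T) (fun p : ℝ × ℝ => (S.sl p.2).θx p.1) := by
  obtain ⟨B, hB⟩ := S.bdd T
  exact ⟨memLp_of_slices T (f := fun x t => (S.sl t).θx x) S.mθx
    (fun t => (S.sl t).θx2) fun t ht => (hB t ht).2.2.2⟩
instance suxx2 : LS (strip T) (fun p : ℝ × ℝ => (S.sl p.2).uxx p.1) := ⟨S.uxx2 T⟩
instance sθxx2 : LS (strip T) (fun p : ℝ × ℝ => (S.sl p.2).θxx p.1) := ⟨S.θxx2 T⟩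

instance sv : LB (strip T) (fun p : ℝ × ℝ => (S.sl p.2).v p.1) :=
  ⟨memLp_top_of_abs_le P.K S.mv.aestronglyMeasurable fun p => by
    rw [abs_of_pos ((S.sl p.2).v0 p.1)]; exact (S.sl p.2).vhi p.1⟩
instance svi : LB (strip T) (fun p : ℝ × ℝ => ((S.sl p.2).v p.1)⁻¹) :=
  ⟨memLp_top_of_abs_le P.K S.mv.inv.aestronglyMeasurable fun p => by
    rw [abs_of_pos (inv_pos.2 ((S.sl p.2).v0 p.1))]; exact (S.sl p.2).vinv_le p.1⟩

lemma memLp_top_strip {f f' : ℝ → ℝ → ℝ} (hm : Measurable fun p : ℝ × ℝ => f p.1 p.2)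
    (hd : ∀ t x, HasDerivAt (fun x => f x t) (f' x t) x)
    (hf : ∀ t, MemLp (fun x => f x t) 2) (hf' : ∀ t, MemLp (fun x => f' x t) 2)
    {B : ℝ} (hB : ∀ t ∈ Icc 0 T, ∫ x, f x t ^ 2 ≤ B)
    (hB' : ∀ t ∈ Icc 0 T, ∫ x, f' x t ^ 2 ≤ B) :
    MemLp (fun p : ℝ × ℝ => f p.1 p.2) ⊤ (strip T) := by
  refine memLp_top_of_bound hm.aestronglyMeasurable (1 + 2 * B) (ae_strip fun x t ht => ?_)
  have ht' := Ioc_subset_Icc_self ht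
  have := sq_le_add (hd t) (hf t) (hf' t) one_pos x
  have h1 := hB t ht'
  have h2 := hB' t ht'
  simp only [one_mul, inv_one] at this
  rw [Real.norm_eq_abs]
  nlinarith [sq_abs (f x t), sq_nonneg (|f x t| - 1)]

instance su : LB (strip T) (fun p : ℝ × ℝ => (S.sl p.2).u p.1) := by
  obtain ⟨B, hB⟩ := S.bdd T
  exact ⟨memLp_top_strip T (f := fun x t => (S.sl t).u x) S.mu (fun t => (S.sl t).du)
    (fun t => (S.sl t).u2) (fun t => (S.sl t).ux2) (fun t ht => (hB t ht).1.2.1)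
    fun t ht => (hB t ht).2.2.1⟩
instance sθ : LB (strip T) (fun p : ℝ × ℝ => (S.sl p.2).θ p.1) := by
  obtain ⟨B, hB⟩ := S.bdd T
  have h : LB (strip T) (fun p : ℝ × ℝ => (S.sl p.2).θ p.1 - 1) :=
    ⟨memLp_top_strip T (f := fun x t => (S.sl t).θ x - 1) (S.mθ.sub_const 1)
    (fun t x => ((S.sl t).dθ x).sub_const 1)
    (fun t => (S.sl t).θ2) (fun t => (S.sl t).θx2) (fun t ht => (hB t ht).1.2.2)
    fun t ht => (hB t ht).2.2.2⟩
  have : LB (strip T) (fun p : ℝ × ℝ => ((S.sl p.2).θ p.1 - 1) + 1) := inferInstance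
  simpa using this

lemma ae_good : ∀ᵐ t ∂(volume.restrict (Ioc 0 T)), (S.sl t).Good := by
  filter_upwards [ae_slice_memLp (f := fun x t => (S.sl t).uxx x)
    (fun t => (S.sl t).cuxx.aestronglyMeasurable) (S.uxx2 T),
    ae_slice_memLp (f := fun x t => (S.sl t).θxx x)
    (fun t => (S.sl t).cθxx.aestronglyMeasurable) (S.θxx2 T)] with t h1 h2
  exact ⟨h1, h2⟩

/-- The product of a function in `L²_t H¹_x` with one in `L^∞_t L²_x` is square integrable. -/
lemma memLp_mul_strip {f f' g : ℝ → ℝ → ℝ} (hm : Measurable fun p : ℝ × ℝ => f p.1 p.2)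
    (hmg : Measurable fun p : ℝ × ℝ => g p.1 p.2)
    (hd : ∀ t x, HasDerivAt (fun x => f x t) (f' x t) x)
    (hf : LS (strip T) (fun p : ℝ × ℝ => f p.1 p.2))
    (hf' : LS (strip T) (fun p : ℝ × ℝ => f' p.1 p.2))
    (hfs : ∀ t, MemLp (fun x => f x t) 2)
    (hfs' : ∀ᵐ t ∂(volume.restrict (Ioc 0 T)), MemLp (fun x => f' x t) 2)
    (hg : ∀ t, MemLp (fun x => g x t) 2)
    {B : ℝ} (hB : ∀ t ∈ Icc 0 T, ∫ x, g x t ^ 2 ≤ B) :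
    MemLp (fun p : ℝ × ℝ => f p.1 p.2 * g p.1 p.2) 2 (strip T) := by
  have i1 : IntegrableOn (fun t => ∫ x, f x t ^ 2) (Ioc 0 T) :=
    (li (fun p : ℝ × ℝ => f p.1 p.2 ^ 2) (m := strip T)).integral_prod_right
  have i2 : IntegrableOn (fun t => ∫ x, f' x t ^ 2) (Ioc 0 T) :=
    (li (fun p : ℝ × ℝ => f' p.1 p.2 ^ 2) (m := strip T)).integral_prod_right
  refine memLp_strip (f := fun x t => f x t * g x t) (hm.mul hmg)
    (G := fun t => ((∫ x, f' x t ^ 2) + ∫ x, f x t ^ 2) * B) ((i2.add i1).mul_const B) ?_ ?_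
  · filter_upwards [hfs'] with t ht
    exact memT2 (memLp_top_of_H1 (hd t) (hfs t) ht) (hg t)
  · filter_upwards [hfs', ae_Ioc T hB] with t ht hBt
    have h0 := memT2 (memLp_top_of_H1 (hd t) (hfs t) ht) (hg t)
    have hn : 0 ≤ (∫ x, f' x t ^ 2) + ∫ x, f x t ^ 2 :=
      add_nonneg (integral_nonneg fun _ => sq_nonneg _) (integral_nonneg fun _ => sq_nonneg _)
    refine le_trans ?_ (mul_le_mul_of_nonneg_left hBt hn)
    rw [← integral_const_mul]
    refine integral_mono h0.integrable_sq ((hg t).integrable_sq.const_mul _) fun x => ?_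
    dsimp only
    rw [mul_pow]
    refine mul_le_mul_of_nonneg_right ?_ (sq_nonneg _)
    simpa using sq_le_add (hd t) (hfs t) ht one_pos x

instance suxvx : LS (strip T) (fun p : ℝ × ℝ => (S.sl p.2).ux p.1 * (S.sl p.2).vx p.1) := by
  obtain ⟨B, hB⟩ := S.bdd T
  exact ⟨memLp_mul_strip T (f := fun x t => (S.sl t).ux x) (g := fun x t => (S.sl t).vx x)
    S.mux S.mvx (fun t => (S.sl t).dux) (S.sux2 T) (S.suxx2 T) (fun t => (S.sl t).ux2)
    ((S.ae_good T).mono fun t h => h.uxx2) (fun t => (S.sl t).vx2) fun t ht => (hB t ht).2.1⟩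
instance sθxvx : LS (strip T) (fun p : ℝ × ℝ => (S.sl p.2).θx p.1 * (S.sl p.2).vx p.1) := by
  obtain ⟨B, hB⟩ := S.bdd T
  exact ⟨memLp_mul_strip T (f := fun x t => (S.sl t).θx x) (g := fun x t => (S.sl t).vx x)
    S.mθx S.mvx (fun t => (S.sl t).dθx) (S.sθx2 T) (S.sθxx2 T) (fun t => (S.sl t).θx2)
    ((S.ae_good T).mono fun t h => h.θxx2) (fun t => (S.sl t).vx2) fun t ht => (hB t ht).2.1⟩
instance sux_sq : LS (strip T) (fun p : ℝ × ℝ => (S.sl p.2).ux p.1 ^ 2) := by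
  obtain ⟨B, hB⟩ := S.bdd T
  simp only [pow_two]
  exact ⟨memLp_mul_strip T (f := fun x t => (S.sl t).ux x) (g := fun x t => (S.sl t).ux x)
    S.mux S.mux (fun t => (S.sl t).dux) (S.sux2 T) (S.suxx2 T) (fun t => (S.sl t).ux2)
    ((S.ae_good T).mono fun t h => h.uxx2) (fun t => (S.sl t).ux2) fun t ht => (hB t ht).2.2.1⟩

instance sut : LS (strip T) (fun p : ℝ × ℝ => (S.sl p.2).ut p.1) := by
  unfold Sl.ut; infer_instance
instance sθt : LS (strip T) (fun p : ℝ × ℝ => (S.sl p.2).θt p.1) := by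
  unfold Sl.θt; infer_instance
instance ssx : LS (strip T) (fun p : ℝ × ℝ => (S.sl p.2).sx p.1) := by
  unfold Sl.sx; infer_instance
instance sl2 : LS (strip T) (fun p : ℝ × ℝ => (S.sl p.2).l p.1) := by
  unfold Sl.l; infer_instance

end Sol
end NSLT

namespace NSLT
namespace Sol
variable {P : Par} (S : Sol P) (T : ℝ)

/-! ### Positivity of the temperature on strips -/

/-- `t ↦ θ(·, t)` is continuous into `L²`. -/
lemma tendsto_θ_L2 {a : ℝ} (ha : a ∈ Icc 0 T) :
    Tendsto (fun t => ∫ x, ((S.sl t).θ x - (S.sl a).θ x) ^ 2) (nhdsWithin a (Icc 0 T)) (nhds 0) := by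
  have hma : Measurable fun p : ℝ × ℝ => (S.sl a).θ p.1 :=
    (S.sl a).continuous_θ.measurable.comp measurable_fst
  have hc : LS (strip T) (fun p : ℝ × ℝ => (S.sl a).θ p.1 - 1) :=
    ⟨memLp_of_slices T (f := fun x _ => (S.sl a).θ x - 1) (hma.sub_const 1)
      (fun t => (S.sl a).θ2) (B := ∫ x, ((S.sl a).θ x - 1) ^ 2) fun t _ => le_rfl⟩
  have hs : LS (strip T) (fun p : ℝ × ℝ => (S.sl p.2).θ p.1 - (S.sl a).θ p.1) := by
    have : LS (strip T) (fun p : ℝ × ℝ => ((S.sl p.2).θ p.1 - 1) - ((S.sl a).θ p.1 - 1)) :=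
      inferInstance
    simpa using this
  have hi : Integrable (fun p : ℝ × ℝ => 2 * ((S.sl p.2).θ p.1 - (S.sl a).θ p.1)
      * (S.sl p.2).θt p.1) (strip T) := li _
  have hl : ∀ t, MemLp (fun x => (S.sl t).θ x - (S.sl a).θ x) 2 := fun t => by
    have := (S.sl t).θ2.sub (S.sl a).θ2
    simpa [Pi.sub_def] using this
  have h1 : ∀ t ∈ Icc 0 T, ∫ x, ((S.sl t).θ x - (S.sl a).θ x) ^ 2
      = ∫ τ in a..t, ∫ x, 2 * ((S.sl τ).θ x - (S.sl a).θ x) * (S.sl τ).θt x := fun t ht => by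
    have := time_int (T := T) (H := fun x t => ((S.sl t).θ x - (S.sl a).θ x) ^ 2)
      (Hd := fun x τ => 2 * ((S.sl τ).θ x - (S.sl a).θ x) * (S.sl τ).θt x)
      (fun x => (((S.ct_θ x).sub continuous_const).pow 2).continuousOn)
      (fun x τ hτ => by
        have := ((S.dt_θ x τ hτ.1).sub_const ((S.sl a).θ x)).pow 2
        exact this.congr_deriv (by norm_num)) hi ha ht (hl a).integrable_sq (hl t).integrable_sq
    simpa using this
  have h2 : ContinuousWithinAt
      (fun t => ∫ τ in a..t, ∫ x, 2 * ((S.sl τ).θ x - (S.sl a).θ x) * (S.sl τ).θt x)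
      (Icc 0 T) a := by
    refine intervalIntegral.continuousWithinAt_primitive (by simp) ?_
    have h0 : (0:ℝ) ∈ Icc 0 T := ⟨le_rfl, ha.1.trans ha.2⟩
    have hT : T ∈ Icc 0 T := ⟨ha.1.trans ha.2, le_rfl⟩
    rw [min_eq_right ha.1, max_eq_right ha.2]
    exact intervalIntegrable_strip (f := fun x τ => 2 * ((S.sl τ).θ x - (S.sl a).θ x)
      * (S.sl τ).θt x) hi h0 hT
  have h3 := h2.tendsto
  rw [intervalIntegral.integral_same] at h3
  refine h3.congr' ?_
  filter_upwards [self_mem_nhdsWithin] with t ht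
  exact (h1 t ht).symm

lemma exists_θ_lower : ∃ a, 0 < a ∧ ∀ t ∈ Icc 0 T, ∀ x, a ≤ (S.sl t).θ x := by
  obtain ⟨B, hB⟩ := S.bdd T
  refine (isCompact_Icc (a := (0:ℝ)) (b := T)).induction_on
    (p := fun U => ∃ a, 0 < a ∧ ∀ t ∈ U, ∀ x, a ≤ (S.sl t).θ x)
    ⟨1, one_pos, by simp⟩ (fun U V h ⟨a, ha, hV⟩ => ⟨a, ha, fun t ht => hV t (h ht)⟩)
    (fun U V ⟨a, ha, hU⟩ ⟨b, hb, hV⟩ => ⟨min a b, lt_min ha hb, fun t ht x => ?_⟩)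
    (fun r hr => ?_)
  · rcases ht with ht | ht
    · exact (min_le_left _ _).trans (hU t ht x)
    · exact (min_le_right _ _).trans (hV t ht x)
  obtain ⟨a, ha, har⟩ := (S.sl r).θlo
  have hB0 : 0 ≤ B := (S.sl r).T1_nonneg.trans (hB r hr).2.2.2
  set δ := (a / 2) ^ 4 / (16 * B + 1) with hδ
  have hδ0 : 0 < δ := by positivity
  refine ⟨{t | t ∈ Icc 0 T ∧ ∫ x, ((S.sl t).θ x - (S.sl r).θ x) ^ 2 < δ}, ?_, a / 2,
    by positivity, fun t ht x => ?_⟩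
  · filter_upwards [(S.tendsto_θ_L2 T hr).eventually (gt_mem_nhds hδ0), self_mem_nhdsWithin]
      with t h1 h2
    exact ⟨h2, h1⟩
  · have h2 : MemLp (fun x => (S.sl t).θ x - (S.sl r).θ x) 2 := by
      simpa [Pi.sub_def] using (S.sl t).θ2.sub (S.sl r).θ2
    have h2' : MemLp (fun x => (S.sl t).θx x - (S.sl r).θx x) 2 := (S.sl t).θx2.sub (S.sl r).θx2
    have h3 := pow4_le (fun x => ((S.sl t).dθ x).sub ((S.sl r).dθ x)) h2 h2' x
    have h4 : ∫ x, ((S.sl t).θx x - (S.sl r).θx x) ^ 2 ≤ 4 * B := by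
      have : ∫ x, ((S.sl t).θx x - (S.sl r).θx x) ^ 2
          ≤ ∫ x, (2 * (S.sl t).θx x ^ 2 + 2 * (S.sl r).θx x ^ 2) :=
        integral_mono h2'.integrable_sq (li _) fun x => by
          dsimp only; nlinarith [sq_nonneg ((S.sl t).θx x + (S.sl r).θx x)]
      rw [int_lin2] at this
      have a1 := (hB t ht.1).2.2.2
      have a2 := (hB r hr).2.2.2
      unfold Sl.T1 at a1 a2
      linarith
    have h5 : (∫ x, ((S.sl t).θ x - (S.sl r).θ x) ^ 2) * ∫ x, ((S.sl t).θx x - (S.sl r).θx x) ^ 2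
        ≤ δ * (4 * B) :=
      mul_le_mul ht.2.le h4 (integral_nonneg fun _ => sq_nonneg _) hδ0.le
    have h6 : δ * (16 * B) ≤ (a / 2) ^ 4 := by
      rw [hδ, div_mul_eq_mul_div, div_le_iff₀ (by positivity)]
      have : 0 ≤ (a / 2) ^ 4 := by positivity
      nlinarith
    have h7 : |(S.sl t).θ x - (S.sl r).θ x| ^ 4 ≤ (a / 2) ^ 4 := by
      rw [Even.pow_abs (by decide)]
      simp only [Pi.sub_apply] at h3
      linarith
    have h8 := (pow_le_pow_iff_left₀ (abs_nonneg _) (by positivity) (by norm_num)).1 h7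
    have := (abs_le.1 h8).1
    linarith [har x]

instance sθi : LB (strip T) (fun p : ℝ × ℝ => ((S.sl p.2).θ p.1)⁻¹) := by
  obtain ⟨a, ha, h⟩ := S.exists_θ_lower T
  refine ⟨memLp_top_of_bound S.mθ.inv.aestronglyMeasurable a⁻¹ (ae_strip fun x t ht => ?_)⟩
  rw [Real.norm_of_nonneg (inv_nonneg.2 ((S.sl t).θ0 x).le)]
  exact inv_anti₀ ha (h t (Ioc_subset_Icc_self ht) x)

end Sol
end NSLT

namespace NSLT

/-! ### Evolution of first-order quadratic quantities -/

/-- Evolution of `∫ f_x²`. Since `f_{xt}` need not exist, `f_x` is replaced by a difference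
quotient, which is summed by parts before passing to the limit. -/
lemma time_int_dx {T : ℝ} {f ft fx fxx : ℝ → ℝ → ℝ}
    (hct : ∀ x, Continuous (f x))
    (hdt : ∀ x t, 0 < t → HasDerivAt (f x) (ft x t) t)
    (hdx : ∀ t x, HasDerivAt (fun x => f x t) (fx x t) x)
    (hdxx : ∀ t x, HasDerivAt (fun x => fx x t) (fxx x t) x)
    (hc : ∀ t, Continuous fun x => fxx x t)
    (hf : ∀ t, MemLp (fun x => f x t) 2) (hfx : ∀ t, MemLp (fun x => fx x t) 2)
    (sf : MemLp (fun p : ℝ × ℝ => f p.1 p.2) 2 (strip T))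
    (sft : MemLp (fun p : ℝ × ℝ => ft p.1 p.2) 2 (strip T))
    (sfxx : MemLp (fun p : ℝ × ℝ => fxx p.1 p.2) 2 (strip T))
    (hft : ∀ᵐ t ∂(volume.restrict (Ioc 0 T)), MemLp (fun x => ft x t) 2)
    (hfxx : ∀ᵐ t ∂(volume.restrict (Ioc 0 T)), MemLp (fun x => fxx x t) 2)
    {a b : ℝ} (ha : a ∈ Icc 0 T) (hb : b ∈ Icc 0 T) :
    1 / 2 * (∫ x, fx x b ^ 2) - 1 / 2 * (∫ x, fx x a ^ 2)
      = ∫ τ in a..b, ∫ x, -(ft x τ * fxx x τ) := by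
  have hcx : ∀ t, Continuous fun x => fx x t := fun t =>
    continuous_iff_continuousAt.2 fun x => (hdxx t x).continuousAt
  have hcdq : ∀ h x, Continuous fun t => dq h (fun y => f y t) x := fun h x =>
    ((hct (x + h)).sub (hct x)).div_const h
  have parts : ∀ n : ℕ, ∀ τ, MemLp (fun x => ft x τ) 2 →
      ∫ x, dq (hs n) (fun y => f y τ) x * dq (hs n) (fun y => ft y τ) x
        = - ∫ x, dq2 (hs n) (fun y => f y τ) x * ft x τ := fun n τ h =>
    dq_sum_parts (hf τ) h (hs n)
  refine time_int_lim (T := T) (A := fun t => 1 / 2 * ∫ x, fx x t ^ 2)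
    (H := fun n x t => 1 / 2 * dq (hs n) (fun y => f y t) x ^ 2)
    (Hd := fun n x t => dq (hs n) (fun y => f y t) x * dq (hs n) (fun y => ft y t) x)
    (G := fun t => (∫ x, fxx x t ^ 2) + ∫ x, ft x t ^ 2)
    (fun n x => (((hcdq (hs n) x).pow 2).const_mul (1 / 2)).continuousOn) ?_
    (fun n => int_mul (memLp_strip_dq sf (hs n)) (memLp_strip_dq sft (hs n)))
    (fun n t _ => (memLp_dq (hf t) (hs n)).integrable_sq.const_mul (1 / 2))
    (fun t _ => ?_) ?_ (fun n => ?_) ?_ ha hb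
  · intro n x τ hτ
    have h1 : HasDerivAt (fun t => dq (hs n) (fun y => f y t) x)
        (dq (hs n) (fun y => ft y τ) x) τ :=
      ((hdt (x + hs n) τ hτ.1).sub (hdt x τ hτ.1)).div_const (hs n)
    exact ((h1.pow 2).const_mul (1 / 2)).congr_deriv (by push_cast; ring)
  · simp_rw [integral_const_mul]
    exact (tendsto_int_sq (fun n => memLp_dq (hf t) (hs n)) (hfx t)
      (Eventually.of_forall fun x => dq_tendsto (hdx t x))
      fun n => dq_sq_le (hdx t) (hcx t) (hf t) (hfx t) (hs_pos n)).const_mul _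
  · exact sfxx.integrable_sq.integral_prod_right.add sft.integrable_sq.integral_prod_right
  · filter_upwards [hft, hfxx] with τ h1 h2
    rw [parts n τ h1, abs_neg]
    have h3 := dq2_sq_le (hdx τ) (hdxx τ) (hc τ) (hf τ) (hfx τ) h2 (hs_pos n)
    exact (abs_int_mul_le (memLp_dq2 (hf τ) (hs n)) h1).trans (by linarith)
  · filter_upwards [hft, hfxx] with τ h1 h2
    simp_rw [parts _ τ h1, integral_neg]
    refine Tendsto.neg ?_
    simp_rw [mul_comm (ft _ τ)]
    exact tendsto_int_mul (fun n => memLp_dq2 (hf τ) (hs n)) h2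
      (Eventually.of_forall fun x => dq2_tendsto (hdx τ) (hdxx τ) (hc τ) x)
      (fun n => dq2_sq_le (hdx τ) (hdxx τ) (hc τ) (hf τ) (hfx τ) h2 (hs_pos n))
      (fun _ => h1) h1 (Eventually.of_forall fun _ => tendsto_const_nhds) fun _ => le_rfl

/-- Evolution of `∫ g λ_x` when `λ_t = σ`, again through difference quotients of `λ`. -/
lemma time_int_mul_dx {T : ℝ} {g gt lam l σ sx : ℝ → ℝ → ℝ}
    (hcg : ∀ x, Continuous (g x)) (hdg : ∀ x t, 0 < t → HasDerivAt (g x) (gt x t) t)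
    (hct : ∀ x, Continuous (lam x)) (hdt : ∀ x t, 0 < t → HasDerivAt (lam x) (σ x t) t)
    (hdx : ∀ t x, HasDerivAt (fun x => lam x t) (l x t) x)
    (hcl : ∀ t, Continuous fun x => l x t)
    (hdσ : ∀ t x, HasDerivAt (fun x => σ x t) (sx x t) x)
    (hcs : ∀ t, Continuous fun x => sx x t)
    (hg : ∀ t, MemLp (fun x => g x t) 2)
    (hlam : ∀ t, MemLp (fun x => lam x t) 2) (hl : ∀ t, MemLp (fun x => l x t) 2)
    (hσ : ∀ t, MemLp (fun x => σ x t) 2)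
    (sg : MemLp (fun p : ℝ × ℝ => g p.1 p.2) 2 (strip T))
    (sgt : MemLp (fun p : ℝ × ℝ => gt p.1 p.2) 2 (strip T))
    (slam : MemLp (fun p : ℝ × ℝ => lam p.1 p.2) 2 (strip T))
    (sl : MemLp (fun p : ℝ × ℝ => l p.1 p.2) 2 (strip T))
    (sσ : MemLp (fun p : ℝ × ℝ => σ p.1 p.2) 2 (strip T))
    (ssx : MemLp (fun p : ℝ × ℝ => sx p.1 p.2) 2 (strip T))
    (hgt : ∀ᵐ t ∂(volume.restrict (Ioc 0 T)), MemLp (fun x => gt x t) 2)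
    (hsx : ∀ᵐ t ∂(volume.restrict (Ioc 0 T)), MemLp (fun x => sx x t) 2)
    {a b : ℝ} (ha : a ∈ Icc 0 T) (hb : b ∈ Icc 0 T) :
    (∫ x, g x b * l x b) - (∫ x, g x a * l x a)
      = ∫ τ in a..b, ∫ x, (gt x τ * l x τ + g x τ * sx x τ) := by
  have hcdq : ∀ h x, Continuous fun t => dq h (fun y => lam y t) x := fun h x =>
    ((hct (x + h)).sub (hct x)).div_const h
  refine time_int_lim (T := T) (A := fun t => ∫ x, g x t * l x t)
    (H := fun n x t => g x t * dq (hs n) (fun y => lam y t) x)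
    (Hd := fun n x t => gt x t * dq (hs n) (fun y => lam y t) x
      + g x t * dq (hs n) (fun y => σ y t) x)
    (G := fun t => ((∫ x, gt x t ^ 2) + ∫ x, l x t ^ 2) + ((∫ x, g x t ^ 2) + ∫ x, sx x t ^ 2))
    (fun n x => ((hcg x).mul (hcdq (hs n) x)).continuousOn) ?_
    (fun n => (int_mul sgt (memLp_strip_dq slam (hs n))).add
      (int_mul sg (memLp_strip_dq sσ (hs n))))
    (fun n t _ => int_mul (hg t) (memLp_dq (hlam t) (hs n)))
    (fun t _ => ?_) ?_ (fun n => ?_) ?_ ha hb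
  · intro n x τ hτ
    have h1 : HasDerivAt (fun t => dq (hs n) (fun y => lam y t) x)
        (dq (hs n) (fun y => σ y τ) x) τ :=
      ((hdt (x + hs n) τ hτ.1).sub (hdt x τ hτ.1)).div_const (hs n)
    exact (hdg x τ hτ.1).mul h1
  · exact tendsto_int_mul (fun _ => hg t) (hg t) (Eventually.of_forall fun _ => tendsto_const_nhds)
      (fun _ => le_rfl) (fun n => memLp_dq (hlam t) (hs n)) (hl t)
      (Eventually.of_forall fun x => dq_tendsto (hdx t x))
      fun n => dq_sq_le (hdx t) (hcl t) (hlam t) (hl t) (hs_pos n)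
  · exact (sgt.integrable_sq.integral_prod_right.add sl.integrable_sq.integral_prod_right).add
      (sg.integrable_sq.integral_prod_right.add ssx.integrable_sq.integral_prod_right)
  · filter_upwards [hgt, hsx] with τ h1 h2
    rw [integral_add (int_mul h1 (memLp_dq (hlam τ) (hs n)))
      (int_mul (hg τ) (memLp_dq (hσ τ) (hs n)))]
    have h3 := abs_int_mul_le h1 (memLp_dq (hlam τ) (hs n))
    have h4 := abs_int_mul_le (hg τ) (memLp_dq (hσ τ) (hs n))
    have h5 := dq_sq_le (hdx τ) (hcl τ) (hlam τ) (hl τ) (hs_pos n)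
    have h6 := dq_sq_le (hdσ τ) (hcs τ) (hσ τ) h2 (hs_pos n)
    exact (abs_add_le _ _).trans (by linarith)
  · filter_upwards [hgt, hsx] with τ h1 h2
    simp_rw [fun n => integral_add (int_mul h1 (memLp_dq (hlam τ) (hs n)))
      (int_mul (hg τ) (memLp_dq (hσ τ) (hs n)))]
    rw [integral_add (int_mul h1 (hl τ)) (int_mul (hg τ) h2)]
    refine Tendsto.add ?_ ?_
    · exact tendsto_int_mul (fun _ => h1) h1 (Eventually.of_forall fun _ => tendsto_const_nhds)
        (fun _ => le_rfl) (fun n => memLp_dq (hlam τ) (hs n)) (hl τ)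
        (Eventually.of_forall fun x => dq_tendsto (hdx τ x))
        fun n => dq_sq_le (hdx τ) (hcl τ) (hlam τ) (hl τ) (hs_pos n)
    · exact tendsto_int_mul (fun _ => hg τ) (hg τ)
        (Eventually.of_forall fun _ => tendsto_const_nhds)
        (fun _ => le_rfl) (fun n => memLp_dq (hσ τ) (hs n)) h2
        (Eventually.of_forall fun x => dq_tendsto (hdσ τ x))
        fun n => dq_sq_le (hdσ τ) (hcs τ) (hσ τ) h2 (hs_pos n)

/-- Evolution of `∫ λ_x²` when `λ_t = σ`. -/
lemma time_int_sq_dx {T : ℝ} {lam l σ sx : ℝ → ℝ → ℝ}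
    (hct : ∀ x, Continuous (lam x)) (hdt : ∀ x t, 0 < t → HasDerivAt (lam x) (σ x t) t)
    (hdx : ∀ t x, HasDerivAt (fun x => lam x t) (l x t) x)
    (hcl : ∀ t, Continuous fun x => l x t)
    (hdσ : ∀ t x, HasDerivAt (fun x => σ x t) (sx x t) x)
    (hcs : ∀ t, Continuous fun x => sx x t)
    (hlam : ∀ t, MemLp (fun x => lam x t) 2) (hl : ∀ t, MemLp (fun x => l x t) 2)
    (hσ : ∀ t, MemLp (fun x => σ x t) 2)
    (slam : MemLp (fun p : ℝ × ℝ => lam p.1 p.2) 2 (strip T))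
    (sl : MemLp (fun p : ℝ × ℝ => l p.1 p.2) 2 (strip T))
    (sσ : MemLp (fun p : ℝ × ℝ => σ p.1 p.2) 2 (strip T))
    (ssx : MemLp (fun p : ℝ × ℝ => sx p.1 p.2) 2 (strip T))
    (hsx : ∀ᵐ t ∂(volume.restrict (Ioc 0 T)), MemLp (fun x => sx x t) 2)
    {a b : ℝ} (ha : a ∈ Icc 0 T) (hb : b ∈ Icc 0 T) :
    1 / 2 * (∫ x, l x b ^ 2) - 1 / 2 * (∫ x, l x a ^ 2)
      = ∫ τ in a..b, ∫ x, l x τ * sx x τ := by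
  have hcdq : ∀ h x, Continuous fun t => dq h (fun y => lam y t) x := fun h x =>
    ((hct (x + h)).sub (hct x)).div_const h
  refine time_int_lim (T := T) (A := fun t => 1 / 2 * ∫ x, l x t ^ 2)
    (H := fun n x t => 1 / 2 * dq (hs n) (fun y => lam y t) x ^ 2)
    (Hd := fun n x t => dq (hs n) (fun y => lam y t) x * dq (hs n) (fun y => σ y t) x)
    (G := fun t => (∫ x, l x t ^ 2) + ∫ x, sx x t ^ 2)
    (fun n x => (((hcdq (hs n) x).pow 2).const_mul (1 / 2)).continuousOn) ?_
    (fun n => int_mul (memLp_strip_dq slam (hs n)) (memLp_strip_dq sσ (hs n)))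
    (fun n t _ => (memLp_dq (hlam t) (hs n)).integrable_sq.const_mul (1 / 2))
    (fun t _ => ?_) ?_ (fun n => ?_) ?_ ha hb
  · intro n x τ hτ
    have h1 : HasDerivAt (fun t => dq (hs n) (fun y => lam y t) x)
        (dq (hs n) (fun y => σ y τ) x) τ :=
      ((hdt (x + hs n) τ hτ.1).sub (hdt x τ hτ.1)).div_const (hs n)
    exact ((h1.pow 2).const_mul (1 / 2)).congr_deriv (by push_cast; ring)
  · simp_rw [integral_const_mul]
    exact (tendsto_int_sq (fun n => memLp_dq (hlam t) (hs n)) (hl t)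
      (Eventually.of_forall fun x => dq_tendsto (hdx t x))
      fun n => dq_sq_le (hdx t) (hcl t) (hlam t) (hl t) (hs_pos n)).const_mul _
  · exact sl.integrable_sq.integral_prod_right.add ssx.integrable_sq.integral_prod_right
  · filter_upwards [hsx] with τ h2
    have h4 := abs_int_mul_le (memLp_dq (hlam τ) (hs n)) (memLp_dq (hσ τ) (hs n))
    have h5 := dq_sq_le (hdx τ) (hcl τ) (hlam τ) (hl τ) (hs_pos n)
    have h6 := dq_sq_le (hdσ τ) (hcs τ) (hσ τ) h2 (hs_pos n)
    linarith
  · filter_upwards [hsx] with τ h2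
    exact tendsto_int_mul (fun n => memLp_dq (hlam τ) (hs n)) (hl τ)
      (Eventually.of_forall fun x => dq_tendsto (hdx τ x))
      (fun n => dq_sq_le (hdx τ) (hcl τ) (hlam τ) (hl τ) (hs_pos n))
      (fun n => memLp_dq (hσ τ) (hs n)) h2
      (Eventually.of_forall fun x => dq_tendsto (hdσ τ x))
      fun n => dq_sq_le (hdσ τ) (hcs τ) (hσ τ) h2 (hs_pos n)

end NSLT

namespace NSLT

/-! ### Integrated inequalities -/

/-- Integrability on bounded time intervals. -/
def TI (f : ℝ → ℝ) : Prop := ∀ T, IntegrableOn f (Ioc 0 T)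

lemma TI.add {f g : ℝ → ℝ} (hf : TI f) (hg : TI g) : TI fun t => f t + g t := fun T =>
  (hf T).add (hg T)

lemma TI.const_mul {f : ℝ → ℝ} (hf : TI f) (c : ℝ) : TI fun t => c * f t := fun T =>
  (hf T).const_mul c

lemma TI.ii {f : ℝ → ℝ} (hf : TI f) {a b : ℝ} (ha : 0 ≤ a) (hb : 0 ≤ b) :
    IntervalIntegrable f volume a b := by
  rw [intervalIntegrable_iff]
  exact (hf (max a b)).mono_set (Ioc_subset_Ioc (le_min ha hb) le_rfl)

lemma TI.mono {f g : ℝ → ℝ} (hf : TI f) (hg : TI g)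
    (h : ∀ T, ∀ᵐ τ ∂(volume.restrict (Ioc 0 T)), f τ ≤ g τ) {a b : ℝ} (ha : 0 ≤ a) (hab : a ≤ b) :
    ∫ τ in a..b, f τ ≤ ∫ τ in a..b, g τ := by
  rw [intervalIntegral.integral_of_le hab, intervalIntegral.integral_of_le hab]
  exact integral_mono_ae ((hf b).mono_set (Ioc_subset_Ioc_left ha))
    ((hg b).mono_set (Ioc_subset_Ioc_left ha))
    (ae_restrict_of_ae_restrict_of_subset (Ioc_subset_Ioc_left ha) (h b))

/-- Integration of a differential inequality `A' ≤ -c X + C Y`. -/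
lemma growth {A g X Y : ℝ → ℝ} {c C : ℝ}
    (hid : ∀ a b, 0 ≤ a → a ≤ b → A b - A a = ∫ τ in a..b, g τ)
    (hg : TI g) (hX : TI X) (hY : TI Y)
    (hle : ∀ T, ∀ᵐ τ ∂(volume.restrict (Ioc 0 T)), g τ ≤ -(c * X τ) + C * Y τ)
    {a b : ℝ} (ha : 0 ≤ a) (hab : a ≤ b) :
    A b + c * ∫ τ in a..b, X τ ≤ A a + C * ∫ τ in a..b, Y τ := by
  have hle' : ∀ T, ∀ᵐ τ ∂(volume.restrict (Ioc 0 T)), g τ ≤ -c * X τ + C * Y τ := fun T => by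
    simpa only [neg_mul] using hle T
  have h := hg.mono ((hX.const_mul (-c)).add (hY.const_mul C)) hle' ha hab
  have hb := ha.trans hab
  rw [intervalIntegral.integral_add ((hX.const_mul (-c)).ii ha hb) ((hY.const_mul C).ii ha hb),
    intervalIntegral.integral_const_mul, intervalIntegral.integral_const_mul,
    ← hid a b ha hab] at h
  linarith

namespace Sol
variable {P : Par} (S : Sol P) (T : ℝ)

/-! ### Time integrability of the functionals -/

lemma ti {f : ℝ → ℝ → ℝ} (h : ∀ T, LI (strip T) fun p : ℝ × ℝ => f p.1 p.2) :
    TI fun t => ∫ x, f x t := fun T => (h T).1.integral_prod_right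

lemma tiD : TI fun t => (S.sl t).D :=
  ti (f := fun x t => (S.sl t).dis x) fun _ => by unfold Sl.dis; infer_instance
lemma tiU1 : TI fun t => (S.sl t).U1 :=
  ti (f := fun x t => (S.sl t).ux x ^ 2) fun _ => inferInstance
lemma tiT1 : TI fun t => (S.sl t).T1 :=
  ti (f := fun x t => (S.sl t).θx x ^ 2) fun _ => inferInstance
lemma tiV1 : TI fun t => (S.sl t).V1 :=
  ti (f := fun x t => (S.sl t).vx x ^ 2) fun _ => inferInstance
lemma tiW : TI fun t => (S.sl t).W :=
  ti (f := fun x t => (S.sl t).θ x * (S.sl t).vx x ^ 2) fun _ => inferInstance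
lemma tiU2 : TI fun t => (S.sl t).U2 :=
  ti (f := fun x t => (S.sl t).uxx x ^ 2) fun _ => inferInstance
lemma tiTh2 : TI fun t => (S.sl t).Th2 :=
  ti (f := fun x t => (S.sl t).θxx x ^ 2) fun _ => inferInstance

/-! ### The individual estimates, integrated in time -/

lemma mem_Icc {a b : ℝ} (ha : 0 ≤ a) (hab : a ≤ b) : a ∈ Icc 0 b ∧ b ∈ Icc 0 b :=
  ⟨⟨ha, hab⟩, ⟨ha.trans hab, le_rfl⟩⟩

lemma entropy_int : ∃ c, 0 < c ∧ ∀ a b, 0 ≤ a → a ≤ b →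
    (S.sl b).E + c * ∫ τ in a..b, (S.sl τ).D ≤ (S.sl a).E := by
  obtain ⟨c, hc, h⟩ := Sl.entropy_ineq P
  have hi : ∀ T, LI (strip T) fun p : ℝ × ℝ => (S.sl p.2).u p.1 * (S.sl p.2).ut p.1
      + P.R * (((S.sl p.2).v p.1 - 1) / (S.sl p.2).v p.1 * (S.sl p.2).ux p.1)
      + ((S.sl p.2).θ p.1 - 1) / (S.sl p.2).θ p.1 * (P.cv * (S.sl p.2).θt p.1) :=
    fun T => inferInstance
  refine ⟨c, hc, fun a b ha hab => ?_⟩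
  have := growth (A := fun t => (S.sl t).E) (c := c) (C := 0) (fun a b ha hab => ?_) (ti
    (f := fun x t => (S.sl t).u x * (S.sl t).ut x
      + P.R * (((S.sl t).v x - 1) / (S.sl t).v x * (S.sl t).ux x)
      + ((S.sl t).θ x - 1) / (S.sl t).θ x * (P.cv * (S.sl t).θt x)) hi) S.tiD S.tiD
    (fun T => (S.ae_good T).mono fun τ hτ => ?_) ha hab
  · simpa using this
  · have hm := mem_Icc ha hab
    refine time_int (T := b) (H := fun x t => (S.sl t).ent x) (fun x => ?_) (fun x τ hτ => ?_)
      (hi b).1 hm.1 hm.2 (li _) (li _)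
    · have h1 := S.ct_u x
      have h2 := continuousOn_eta.comp_continuous (S.ct_v x) fun t => (S.sl t).v0 x
      have h3 := continuousOn_eta.comp_continuous (S.ct_θ x) fun t => (S.sl t).θ0 x
      unfold Sl.ent
      exact (((h1.pow 2).div_const 2).add (h2.const_mul P.R)).add (h3.const_mul P.cv)
        |>.continuousOn
    · have h1 := ((S.dt_u x τ hτ.1).pow 2).div_const 2
      have h2 := ((hasDerivAt_eta ((S.sl τ).v0 x)).comp τ (S.dt_v x τ hτ.1)).const_mul P.R
      have h3 := ((hasDerivAt_eta ((S.sl τ).θ0 x)).comp τ (S.dt_θ x τ hτ.1)).const_mul P.cv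
      refine ((h1.add h2).add h3).congr_deriv ?_
      have := ((S.sl τ).v0 x).ne'; have := ((S.sl τ).θ0 x).ne'
      push_cast; field_simp
  · have := h (S.sl τ) hτ
    simpa using this

instance sPQ1 : LS (strip T) (fun p : ℝ × ℝ => PQ1 16 ((S.sl p.2).θ p.1)) := by
  have hm : Measurable fun p : ℝ × ℝ => PQ1 16 ((S.sl p.2).θ p.1) := by
    have := S.mθ
    unfold PQ1 rp; fun_prop
  refine ⟨memLp_two_of_abs_le 1 (S.sθ2 T).1 hm.aestronglyMeasurable
    (Eventually.of_forall fun p => ?_)⟩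
  rw [abs_of_nonneg (PQ1_nonneg (by norm_num) ((S.sl p.2).θ0 p.1)), one_mul]
  rcases le_or_gt ((S.sl p.2).θ p.1) 16 with h | h
  · rw [PQ1_of_le h]; exact abs_nonneg _
  · exact (PQ1_le (by norm_num) ((S.sl p.2).θ0 p.1)).trans
      ((by linarith : 1 ≤ (S.sl p.2).θ p.1 - 1).trans (le_abs_self _))

instance sFQ1 : LS (strip T) (fun p : ℝ × ℝ => FQ1 P.cw ((S.sl p.2).w p.1)) := by
  have hm : Measurable fun p : ℝ × ℝ => FQ1 P.cw ((S.sl p.2).w p.1) := by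
    have := S.mθ; have := S.mu
    unfold FQ1 rp Sl.w; fun_prop
  have hw : LS (strip T) fun p : ℝ × ℝ => P.cv * ((S.sl p.2).θ p.1 - 1)
    + (S.sl p.2).u p.1 * (S.sl p.2).u p.1 * (1 / 2) := inferInstance
  refine ⟨memLp_two_of_abs_le 3 hw.1 hm.aestronglyMeasurable
    (Eventually.of_forall fun p => ?_)⟩
  exact (abs_FQ1_le P.cw0.le ((S.sl p.2).w0 p.1)).trans
    (mul_le_mul_of_nonneg_left ((S.sl p.2).rp_w_le p.1) (by norm_num))

end Sol

namespace Sl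
variable {P : Par} (s : Sl P)

instance iPQ : LI volume (fun x => PQ 16 (s.θ x)) := by
  have hc : ContinuousOn (PQ 16) (Ioi 0) := fun _ hs =>
    (hasDerivAt_PQ hs).continuousAt.continuousWithinAt
  refine LI.of_le (g := fun x => 4 * eta (s.θ x)) (hc.comp_continuous s.continuous_θ s.θ0)
    (LI.mul_left (hf := LB.const 4) (hg := s.iηθ)) fun x => ?_
  rw [abs_of_nonneg PQ_nonneg]
  exact PQ_le (by norm_num) (s.θ0 x)

lemma int_PQ_le : ∫ x, P.cv * PQ 16 (s.θ x) ≤ 4 * s.E := by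
  unfold E
  rw [← integral_const_mul]
  refine integral_mono (li (fun x => P.cv * PQ 16 (s.θ x))) (li (fun x => 4 * s.ent x)) fun x => ?_
  have h1 := PQ_le (c := 16) (by norm_num) (s.θ0 x)
  have h2 := mul_nonneg P.hR.le (eta_nonneg (s.v0 x))
  have h3 := mul_le_mul_of_nonneg_left h1 P.hcv.le
  have := sq_nonneg (s.u x)
  dsimp only [ent]
  linarith

end Sl

namespace Sol
variable {P : Par} (S : Sol P) (T : ℝ)

lemma heating_int {E0 : ℝ} (hE : ∀ t, 0 ≤ t → (S.sl t).E ≤ E0) : ∃ c C, 0 < c ∧ 0 ≤ C ∧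
    ∀ b, 0 ≤ b → c * ∫ τ in (0:ℝ)..b, (S.sl τ).U1 ≤ 4 * E0 + C * ∫ τ in (0:ℝ)..b, (S.sl τ).D := by
  obtain ⟨c, C, hc, hC, h⟩ := Sl.heating_ineq P E0
  have hi : ∀ T, LI (strip T) fun p : ℝ × ℝ =>
      -(PQ1 16 ((S.sl p.2).θ p.1) * (P.cv * (S.sl p.2).θt p.1)) := fun T => inferInstance
  refine ⟨c, C, hc, hC, fun b hb => ?_⟩
  have := growth (A := fun t => ∫ x, -(P.cv * PQ 16 ((S.sl t).θ x))) (c := c) (C := C)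
    (fun a b ha hab => ?_) (ti
    (f := fun x t => -(PQ1 16 ((S.sl t).θ x) * (P.cv * (S.sl t).θt x))) hi) S.tiU1 S.tiD
    (fun T => ?_) le_rfl hb
  · have h1 := ((S.sl b).int_PQ_le).trans (mul_le_mul_of_nonneg_left (hE b hb) (by norm_num))
    have h2 : 0 ≤ ∫ x, P.cv * PQ 16 ((S.sl 0).θ x) :=
      integral_nonneg fun x => mul_nonneg P.hcv.le PQ_nonneg
    simp only [integral_neg] at this
    linarith
  · have hm := mem_Icc ha hab
    refine time_int (T := b) (H := fun x t => -(P.cv * PQ 16 ((S.sl t).θ x)))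
      (fun x => ?_) (fun x τ hτ => ?_) (hi b).1 hm.1 hm.2
      (li (fun x => -(P.cv * PQ 16 ((S.sl a).θ x)))) (li (fun x => -(P.cv * PQ 16 ((S.sl b).θ x))))
    · have hc : ContinuousOn (PQ 16) (Ioi 0) := fun _ hs =>
        (hasDerivAt_PQ hs).continuousAt.continuousWithinAt
      exact ((hc.comp_continuous (S.ct_θ x) fun t => (S.sl t).θ0 x).const_mul P.cv).neg.continuousOn
    · have h3 := (((hasDerivAt_PQ (c := 16) ((S.sl τ).θ0 x)).comp τ
        (S.dt_θ x τ hτ.1)).const_mul P.cv).neg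
      exact h3.congr_deriv (by ring)
  · filter_upwards [S.ae_good T, ae_Ioc T fun t ht => hE t ht.1] with τ h1 h2
    exact h (S.sl τ) h1 h2

lemma energy_int {E0 : ℝ} (hE : ∀ t, 0 ≤ t → (S.sl t).E ≤ E0) : ∃ c B C, 0 < c ∧ 0 ≤ C ∧
    ∀ b, 0 ≤ b → c * ∫ τ in (0:ℝ)..b, (S.sl τ).T1
      ≤ B + C * ∫ τ in (0:ℝ)..b, ((S.sl τ).D + (S.sl τ).U1) := by
  obtain ⟨A, c, C, hA, hc, hC, h⟩ := Sl.energy_ineq P E0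
  have hi : ∀ T, LI (strip T) fun p : ℝ × ℝ =>
      FQ1 P.cw ((S.sl p.2).w p.1) * (P.cv * (S.sl p.2).θt p.1 + (S.sl p.2).u p.1 * (S.sl p.2).ut p.1)
       + A * ((S.sl p.2).u p.1 ^ 3 * (S.sl p.2).ut p.1) := fun T => inferInstance
  have hL : ∀ t, LI volume (fun x => FQ P.cw ((S.sl t).w x) + A / 4 * (S.sl t).u x ^ 4) :=
    fun t => inferInstance
  refine ⟨c, ∫ x, (FQ P.cw ((S.sl 0).w x) + A / 4 * (S.sl 0).u x ^ 4), C, hc, hC, fun b hb => ?_⟩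
  have := growth (A := fun t => ∫ x, (FQ P.cw ((S.sl t).w x) + A / 4 * (S.sl t).u x ^ 4))
    (c := c) (C := C) (fun a b ha hab => ?_) (ti
    (f := fun x t => FQ1 P.cw ((S.sl t).w x) * (P.cv * (S.sl t).θt x + (S.sl t).u x * (S.sl t).ut x)
       + A * ((S.sl t).u x ^ 3 * (S.sl t).ut x)) hi) S.tiT1 (S.tiD.add S.tiU1)
    (fun T => ?_) le_rfl hb
  · have h2 : 0 ≤ ∫ x, (FQ P.cw ((S.sl b).w x) + A / 4 * (S.sl b).u x ^ 4) :=
      integral_nonneg fun x => add_nonneg (FQ_nonneg ((S.sl b).w0 x)) (by positivity)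
    linarith
  · have hm := mem_Icc ha hab
    refine time_int (T := b) (H := fun x t => FQ P.cw ((S.sl t).w x) + A / 4 * (S.sl t).u x ^ 4)
      (fun x => ?_) (fun x τ hτ => ?_) (hi b).1 hm.1 hm.2 (hL a).1 (hL b).1
    · have hw : Continuous fun t => (S.sl t).w x := by
        have := S.ct_u x; have := S.ct_θ x
        unfold Sl.w; fun_prop
      exact (((continuousOn_FQ P.cw).comp_continuous hw fun t => (S.sl t).w0 x).add
        (((S.ct_u x).pow 4).const_mul (A / 4))).continuousOn
    · have hu := S.dt_u x τ hτ.1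
      have hw : HasDerivAt (fun t => (S.sl t).w x) (P.cv * (S.sl τ).θt x
          + (S.sl τ).u x * (S.sl τ).ut x) τ :=
        (((S.dt_θ x τ hτ.1).const_mul P.cv).add ((hu.mul hu).mul_const (1 / 2))).congr_deriv
          (by ring)
      have h3 := (hasDerivAt_FQ (c := P.cw) ((S.sl τ).w0 x)).comp τ hw
      exact (h3.add ((hu.pow 4).const_mul (A / 4))).congr_deriv (by push_cast; ring)
  · filter_upwards [S.ae_good T, ae_Ioc T fun t ht => hE t ht.1] with τ h1 h2
    exact h (S.sl τ) h1 h2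

end Sol
end NSLT

namespace NSLT

namespace Sl
variable {P : Par} (s : Sl P)

lemma abs_log_le (x : ℝ) : |Real.log (s.v x)| ≤ P.K * |s.v x - 1| := by
  have h0 := s.v0 x
  have h1 := Real.log_le_sub_one_of_pos h0
  have h2 := Real.one_sub_inv_le_log_of_pos h0
  have hK := P.hK
  have ha := abs_nonneg (s.v x - 1)
  rw [abs_le]
  constructor
  · have e : 1 - (s.v x)⁻¹ = (s.v x - 1) * (s.v x)⁻¹ := by field_simp
    have h3 : |(s.v x - 1) * (s.v x)⁻¹| ≤ P.K * |s.v x - 1| := by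
      rw [abs_mul, abs_of_pos (inv_pos.2 h0), mul_comm]
      exact mul_le_mul_of_nonneg_right (s.vinv_le x) ha
    have := (abs_le.1 h3).1
    linarith
  · nlinarith [le_abs_self (s.v x - 1)]

lemma hasDerivAt_log (x : ℝ) : HasDerivAt (fun x => Real.log (s.v x)) (s.l x) x :=
  (s.dv x).log (s.v0 x).ne'

lemma continuous_log : Continuous fun x => Real.log (s.v x) :=
  continuous_iff_continuousAt.2 fun x => (s.hasDerivAt_log x).continuousAt

instance ilog : LS volume (fun x => Real.log (s.v x)) :=
  LS.of_le P.K s.continuous_log s.iv2 s.abs_log_le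

lemma continuous_l : Continuous s.l := s.cvx.div s.continuous_v fun x => (s.v0 x).ne'

lemma continuous_sx : Continuous s.sx := by
  have h1 := fun x => (s.v0 x).ne'
  have h2 := fun x => pow_ne_zero 2 (h1 x)
  exact (s.cuxx.div s.continuous_v h1).sub
    ((s.continuous_ux.mul s.cvx).div (s.continuous_v.pow 2) h2)

end Sl

namespace Sol
variable {P : Par} (S : Sol P) (T : ℝ)

instance slog : LS (strip T) (fun p : ℝ × ℝ => Real.log ((S.sl p.2).v p.1)) :=
  ⟨memLp_two_of_abs_le P.K (S.sv2 T).1 S.mv.log.aestronglyMeasurable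
    (Eventually.of_forall fun p => (S.sl p.2).abs_log_le p.1)⟩

instance sσ : LS (strip T) (fun p : ℝ × ℝ => (S.sl p.2).ux p.1 / (S.sl p.2).v p.1) := inferInstance

lemma ct_log (x : ℝ) : Continuous fun t => Real.log ((S.sl t).v x) :=
  (S.ct_v x).log fun t => ((S.sl t).v0 x).ne'

lemma dt_log (x t : ℝ) (ht : 0 < t) :
    HasDerivAt (fun t => Real.log ((S.sl t).v x)) ((S.sl t).ux x / (S.sl t).v x) t :=
  (S.dt_v x t ht).log ((S.sl t).v0 x).ne'

lemma l_id (a b : ℝ) (ha : 0 ≤ a) (hab : a ≤ b) :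
    1 / 2 * (∫ x, (S.sl b).l x ^ 2) - 1 / 2 * (∫ x, (S.sl a).l x ^ 2)
      = ∫ τ in a..b, ∫ x, (S.sl τ).l x * (S.sl τ).sx x := by
  have hm := mem_Icc ha hab
  exact time_int_sq_dx (T := b) (lam := fun x t => Real.log ((S.sl t).v x))
    (l := fun x t => (S.sl t).l x) (σ := fun x t => (S.sl t).ux x / (S.sl t).v x)
    (sx := fun x t => (S.sl t).sx x) S.ct_log S.dt_log (fun t => (S.sl t).hasDerivAt_log)
    (fun t => (S.sl t).continuous_l) (fun t => (S.sl t).hasDerivAt_s)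
    (fun t => (S.sl t).continuous_sx) (fun t => (S.sl t).ilog.1) (fun t => (S.sl t).il.1)
    (fun t => (inferInstance : LS volume fun x => (S.sl t).ux x / (S.sl t).v x).1)
    (S.slog b).1 (S.sl2 b).1 (S.sσ b).1 (S.ssx b).1
    ((S.ae_good b).mono fun t _ => (S.sl t).isx.1) hm.1 hm.2

lemma ul_id (a b : ℝ) (ha : 0 ≤ a) (hab : a ≤ b) :
    (∫ x, (S.sl b).u x * (S.sl b).l x) - (∫ x, (S.sl a).u x * (S.sl a).l x)
      = ∫ τ in a..b, ∫ x, ((S.sl τ).ut x * (S.sl τ).l x + (S.sl τ).u x * (S.sl τ).sx x) := by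
  have hm := mem_Icc ha hab
  exact time_int_mul_dx (T := b) (g := fun x t => (S.sl t).u x) (gt := fun x t => (S.sl t).ut x)
    (lam := fun x t => Real.log ((S.sl t).v x))
    (l := fun x t => (S.sl t).l x) (σ := fun x t => (S.sl t).ux x / (S.sl t).v x)
    (sx := fun x t => (S.sl t).sx x) S.ct_u S.dt_u
    S.ct_log S.dt_log (fun t => (S.sl t).hasDerivAt_log)
    (fun t => (S.sl t).continuous_l) (fun t => (S.sl t).hasDerivAt_s)
    (fun t => (S.sl t).continuous_sx) (fun t => (S.sl t).u2)
    (fun t => (S.sl t).ilog.1) (fun t => (S.sl t).il.1)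
    (fun t => (inferInstance : LS volume fun x => (S.sl t).ux x / (S.sl t).v x).1)
    (S.su2 b).1 (S.sut b).1 (S.slog b).1 (S.sl2 b).1 (S.sσ b).1 (S.ssx b).1
    ((S.ae_good b).mono fun t _ => (S.sl t).iut.1)
    ((S.ae_good b).mono fun t _ => (S.sl t).isx.1) hm.1 hm.2

lemma ux_id (a b : ℝ) (ha : 0 ≤ a) (hab : a ≤ b) :
    1 / 2 * (S.sl b).U1 - 1 / 2 * (S.sl a).U1
      = ∫ τ in a..b, ∫ x, -((S.sl τ).ut x * (S.sl τ).uxx x) := by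
  have hm := mem_Icc ha hab
  exact time_int_dx (T := b) (f := fun x t => (S.sl t).u x) (ft := fun x t => (S.sl t).ut x)
    (fx := fun x t => (S.sl t).ux x) (fxx := fun x t => (S.sl t).uxx x)
    S.ct_u S.dt_u (fun t => (S.sl t).du) (fun t => (S.sl t).dux) (fun t => (S.sl t).cuxx)
    (fun t => (S.sl t).u2) (fun t => (S.sl t).ux2) (S.su2 b).1 (S.sut b).1 (S.uxx2 b)
    ((S.ae_good b).mono fun t _ => (S.sl t).iut.1) ((S.ae_good b).mono fun t h => h.uxx2)
    hm.1 hm.2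

lemma θx_id (a b : ℝ) (ha : 0 ≤ a) (hab : a ≤ b) :
    P.cv * (1 / 2 * (S.sl b).T1) - P.cv * (1 / 2 * (S.sl a).T1)
      = ∫ τ in a..b, ∫ x, -(P.cv * (S.sl τ).θt x * (S.sl τ).θxx x) := by
  have hm := mem_Icc ha hab
  have := time_int_dx (T := b) (f := fun x t => (S.sl t).θ x - 1)
    (ft := fun x t => (S.sl t).θt x)
    (fx := fun x t => (S.sl t).θx x) (fxx := fun x t => (S.sl t).θxx x)
    (fun x => (S.ct_θ x).sub continuous_const) (fun x t ht => (S.dt_θ x t ht).sub_const 1)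
    (fun t x => ((S.sl t).dθ x).sub_const 1) (fun t => (S.sl t).dθx) (fun t => (S.sl t).cθxx)
    (fun t => (S.sl t).θ2) (fun t => (S.sl t).θx2) (S.sθ2 b).1 (S.sθt b).1 (S.θxx2 b)
    ((S.ae_good b).mono fun t _ => (S.sl t).iθt.1) ((S.ae_good b).mono fun t h => h.θxx2)
    hm.1 hm.2
  have e : ∀ τ, ∫ x, -(P.cv * (S.sl τ).θt x * (S.sl τ).θxx x)
      = P.cv * ∫ x, -((S.sl τ).θt x * (S.sl τ).θxx x) := fun τ => by
    rw [← integral_const_mul]; congr 1; ext x; ring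
  simp_rw [e]
  rw [intervalIntegral.integral_const_mul, ← this, mul_sub]; rfl

lemma velocity_int {E1 Vb : ℝ} (hE1 : 0 < E1) (hVb : 0 < Vb) (hE : ∀ t, 0 ≤ t → (S.sl t).E ≤ E1)
    (hV : ∀ t, 0 ≤ t → (S.sl t).V1 ≤ Vb) : ∃ c C, 0 < c ∧ 0 ≤ C ∧ ∀ a b, 0 ≤ a → a ≤ b →
    1 / 2 * (S.sl b).U1 + c * ∫ τ in a..b, (S.sl τ).U2 ≤ 1 / 2 * (S.sl a).U1
      + C * ∫ τ in a..b, ((S.sl τ).T1 + (S.sl τ).W + (S.sl τ).D + (S.sl τ).U1) := by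
  obtain ⟨c, C, hc, hC, h⟩ := Sl.velocity_ineq P E1 Vb hE1 hVb
  refine ⟨c, C, hc, hC, fun a b ha hab => ?_⟩
  refine growth (A := fun t => 1 / 2 * (S.sl t).U1) S.ux_id
    (ti (f := fun x t => -((S.sl t).ut x * (S.sl t).uxx x)) fun _ => inferInstance)
    S.tiU2 (((S.tiT1.add S.tiW).add S.tiD).add S.tiU1) (fun T => ?_) ha hab
  filter_upwards [S.ae_good T, ae_Ioc T fun t ht => hE t ht.1, ae_Ioc T fun t ht => hV t ht.1]
    with τ h1 h2 h3
  exact h (S.sl τ) h1 h2 h3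

lemma temperature_int {E1 Vb Ub : ℝ} (hE1 : 0 < E1) (hVb : 0 < Vb) (hUb : 0 < Ub)
    (hE : ∀ t, 0 ≤ t → (S.sl t).E ≤ E1)
    (hV : ∀ t, 0 ≤ t → (S.sl t).V1 ≤ Vb) (hU : ∀ t, 0 ≤ t → (S.sl t).U1 ≤ Ub) :
    ∃ c C, 0 < c ∧ 0 ≤ C ∧ ∀ a b, 0 ≤ a → a ≤ b →
    P.cv * (1 / 2 * (S.sl b).T1) + c * ∫ τ in a..b, (S.sl τ).Th2 ≤ P.cv * (1 / 2 * (S.sl a).T1)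
      + C * ∫ τ in a..b, ((S.sl τ).T1 + (S.sl τ).D + (S.sl τ).U1 + (S.sl τ).U2) := by
  obtain ⟨c, C, hc, hC, h⟩ := Sl.temperature_ineq P E1 Vb Ub hE1 hVb hUb
  refine ⟨c, C, hc, hC, fun a b ha hab => ?_⟩
  refine growth (A := fun t => P.cv * (1 / 2 * (S.sl t).T1)) S.θx_id
    (ti (f := fun x t => -(P.cv * (S.sl t).θt x * (S.sl t).θxx x)) fun _ => inferInstance)
    S.tiTh2 (((S.tiT1.add S.tiD).add S.tiU1).add S.tiU2) (fun T => ?_) ha hab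
  filter_upwards [S.ae_good T, ae_Ioc T fun t ht => hE t ht.1, ae_Ioc T fun t ht => hV t ht.1,
    ae_Ioc T fun t ht => hU t ht.1] with τ h1 h2 h3 h4
  exact h (S.sl τ) h1 h2 h3 h4

lemma l_int {Vb : ℝ} (hVb : 0 < Vb) (hV : ∀ t, 0 ≤ t → (S.sl t).V1 ≤ Vb) :
    ∃ C, 0 ≤ C ∧ ∀ a b, 0 ≤ a → a ≤ b →
    1 / 2 * (∫ x, (S.sl b).l x ^ 2) ≤ 1 / 2 * (∫ x, (S.sl a).l x ^ 2)
      + C * ∫ τ in a..b, ((S.sl τ).V1 + (S.sl τ).U2 + (S.sl τ).U1) := by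
  obtain ⟨C, hC, h⟩ := Sl.l_ineq P Vb hVb
  refine ⟨C, hC, fun a b ha hab => ?_⟩
  have := growth (A := fun t => 1 / 2 * (∫ x, (S.sl t).l x ^ 2)) (c := 0) (C := C) S.l_id
    (ti (f := fun x t => (S.sl t).l x * (S.sl t).sx x) fun _ => inferInstance)
    S.tiU2 ((S.tiV1.add S.tiU2).add S.tiU1) (fun T => ?_) ha hab
  · simpa using this
  filter_upwards [S.ae_good T, ae_Ioc T fun t ht => hV t ht.1] with τ h1 h2
  simpa using h (S.sl τ) h1 h2

lemma volume_int : ∃ c C, 0 < c ∧ 0 ≤ C ∧ ∀ a b, 0 ≤ a → a ≤ b →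
    (P.μ * (1 / 2 * (∫ x, (S.sl b).l x ^ 2)) - ∫ x, (S.sl b).u x * (S.sl b).l x)
      + c * ∫ τ in a..b, (S.sl τ).W
      ≤ (P.μ * (1 / 2 * (∫ x, (S.sl a).l x ^ 2)) - ∫ x, (S.sl a).u x * (S.sl a).l x)
      + C * ∫ τ in a..b, ((S.sl τ).T1 + (S.sl τ).D + (S.sl τ).U1) := by
  obtain ⟨c, C, hc, hC, h⟩ := Sl.volume_ineq P
  refine ⟨c, C, hc, hC, fun a b ha hab => ?_⟩
  have t1 : TI fun τ => ∫ x, (S.sl τ).l x * (S.sl τ).sx x :=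
    ti (f := fun x t => (S.sl t).l x * (S.sl t).sx x) fun _ => inferInstance
  have t2 : TI fun τ => ∫ x, ((S.sl τ).ut x * (S.sl τ).l x + (S.sl τ).u x * (S.sl τ).sx x) :=
    ti (f := fun x t => (S.sl t).ut x * (S.sl t).l x + (S.sl t).u x * (S.sl t).sx x)
      fun _ => inferInstance
  refine growth (A := fun t => P.μ * (1 / 2 * (∫ x, (S.sl t).l x ^ 2))
      - ∫ x, (S.sl t).u x * (S.sl t).l x)
    (g := fun τ => P.μ * (∫ x, (S.sl τ).l x * (S.sl τ).sx x)
      + -1 * ∫ x, ((S.sl τ).ut x * (S.sl τ).l x + (S.sl τ).u x * (S.sl τ).sx x))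
    (fun a b ha hab => ?_) ((t1.const_mul P.μ).add (t2.const_mul (-1)))
    S.tiW ((S.tiT1.add S.tiD).add S.tiU1) (fun T => ?_) ha hab
  · have hb := ha.trans hab
    rw [intervalIntegral.integral_add ((t1.const_mul P.μ).ii ha hb) ((t2.const_mul (-1)).ii ha hb),
      intervalIntegral.integral_const_mul, intervalIntegral.integral_const_mul,
      ← S.l_id a b ha hab, ← S.ul_id a b ha hab]
    ring
  · filter_upwards [S.ae_good T] with τ h1
    have h2 := h (S.sl τ) h1
    rw [integral_sub (li (fun x => P.μ * ((S.sl τ).l x * (S.sl τ).sx x)))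
      (li (fun x => (S.sl τ).ut x * (S.sl τ).l x + (S.sl τ).u x * (S.sl τ).sx x)),
      integral_const_mul] at h2
    linarith

end Sol
end NSLT

namespace NSLT

/-! ### Closing the a priori estimates -/

/-- A nonnegative function of time which is integrable over `(0, ∞)`. -/
def TB (f : ℝ → ℝ) : Prop :=
  TI f ∧ (∀ t, 0 ≤ f t) ∧ ∃ C, ∀ b, 0 ≤ b → ∫ τ in (0:ℝ)..b, f τ ≤ C

lemma TB.add {f g : ℝ → ℝ} (hf : TB f) (hg : TB g) : TB fun t => f t + g t := by
  obtain ⟨h1, h2, A, hA⟩ := hf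
  obtain ⟨h3, h4, B, hB⟩ := hg
  refine ⟨h1.add h3, fun t => add_nonneg (h2 t) (h4 t), A + B, fun b hb => ?_⟩
  rw [intervalIntegral.integral_add (h1.ii le_rfl hb) (h3.ii le_rfl hb)]
  exact add_le_add (hA b hb) (hB b hb)

lemma TB.const_mul {f : ℝ → ℝ} (hf : TB f) {c : ℝ} (hc : 0 ≤ c) : TB fun t => c * f t := by
  obtain ⟨h1, h2, A, hA⟩ := hf
  refine ⟨h1.const_mul c, fun t => mul_nonneg hc (h2 t), c * A, fun b hb => ?_⟩
  rw [intervalIntegral.integral_const_mul]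
  exact mul_le_mul_of_nonneg_left (hA b hb) hc

lemma TB.of_bound {f : ℝ → ℝ} (hf : TI f) (h0 : ∀ t, 0 ≤ f t) {c C : ℝ} (hc : 0 < c)
    (h : ∀ b, 0 ≤ b → c * ∫ τ in (0:ℝ)..b, f τ ≤ C) : TB f :=
  ⟨hf, h0, C / c, fun b hb => by rw [le_div_iff₀' hc]; exact h b hb⟩

lemma TB.tendsto {f g : ℝ → ℝ} (hf : TB f) (hg : TB g)
    (hfg : ∀ s t, 0 ≤ s → s ≤ t → f t ≤ f s + ∫ τ in s..t, g τ) : Tendsto f atTop (nhds 0) := by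
  -- the decay criterion is applied to the functions cut off to `[0, ∞)`
  have key : ∀ {h : ℝ → ℝ}, TB h → (∀ t, 0 ≤ (Ici (0:ℝ)).indicator h t) ∧
      (∀ T, IntervalIntegrable ((Ici (0:ℝ)).indicator h) volume 0 T) ∧
      (∀ a b, 0 ≤ a → a ≤ b →
        ∫ τ in a..b, (Ici (0:ℝ)).indicator h τ = ∫ τ in a..b, h τ) := by
    intro h hh
    refine ⟨fun t => indicator_nonneg (fun t _ => hh.2.1 t) t, fun T => ?_, fun a b ha hab => ?_⟩
    · rcases le_total 0 T with hT | hT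
      · refine (hh.1.ii le_rfl hT).congr ?_
        refine fun t ht => ?_
        rw [uIoc_of_le hT] at ht
        simp [indicator, ht.1.le]
      · refine (intervalIntegrable_iff.2 ?_)
        rw [uIoc_of_ge hT]
        refine (integrable_zero _ _ _).congr ?_
        have h0 : ∀ᵐ t ∂(volume.restrict (Ioc T 0)), t ≠ (0:ℝ) :=
          ae_restrict_of_ae (Measure.ae_ne volume 0)
        filter_upwards [ae_restrict_mem measurableSet_Ioc, h0] with t ht ht0
        have : t < 0 := lt_of_le_of_ne ht.2 ht0
        simp [indicator, this]
    · refine intervalIntegral.integral_congr fun t ht => ?_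
      rw [uIcc_of_le hab] at ht
      simp [indicator, ha.trans ht.1]
  obtain ⟨f0, fi, fe⟩ := key hf
  obtain ⟨g0, gi, ge⟩ := key hg
  obtain ⟨-, -, A, hA⟩ := hf
  obtain ⟨-, -, B, hB⟩ := hg
  have := tendsto_zero_of_growth (C := max A B) f0 g0 fi gi
    (fun T hT => by rw [fe 0 T le_rfl hT]; exact (hA T hT).trans (le_max_left _ _))
    (fun T hT => by rw [ge 0 T le_rfl hT]; exact (hB T hT).trans (le_max_right _ _))
    (fun s t hs hst => by
      rw [ge s t hs hst]
      simpa [indicator, hs, hs.trans hst] using hfg s t hs hst)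
  refine this.congr' ?_
  filter_upwards [eventually_ge_atTop (0:ℝ)] with t ht
  simp [indicator, ht]

/-- How a differential inequality `A' + c X ≤ C Y` with integrable `Y` is exploited. -/
lemma TB.growth {A X Y : ℝ → ℝ} {c C : ℝ} (hA : ∀ t, 0 ≤ A t) (hX : TI X) (hX0 : ∀ t, 0 ≤ X t)
    (hY : TB Y) (hc : 0 < c) (hC : 0 ≤ C)
    (h : ∀ a b, 0 ≤ a → a ≤ b → A b + c * ∫ τ in a..b, X τ ≤ A a + C * ∫ τ in a..b, Y τ) :
    TB X ∧ (∃ B, 0 < B ∧ ∀ t, 0 ≤ t → A t ≤ B) ∧ (TB A → Tendsto A atTop (nhds 0)) := by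
  obtain ⟨-, hY0, D, hD⟩ := id hY
  have hint : ∀ a b, a ≤ b → 0 ≤ ∫ τ in a..b, X τ := fun a b hab =>
    intervalIntegral.integral_nonneg hab fun t _ => hX0 t
  refine ⟨TB.of_bound (C := A 0 + C * D) hX hX0 hc fun b hb => ?_,
    ⟨A 0 + C * D + 1, ?_, fun t ht => ?_⟩, fun hTA => ?_⟩
  · have := h 0 b le_rfl hb
    have := mul_le_mul_of_nonneg_left (hD b hb) hC
    linarith [hA b]
  · have h1 := mul_le_mul_of_nonneg_left (hD 0 le_rfl) hC
    simp only [intervalIntegral.integral_same, mul_zero] at h1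
    linarith [hA 0]
  · have := h 0 t le_rfl ht
    have := mul_le_mul_of_nonneg_left (hD t ht) hC
    have := mul_nonneg hc.le (hint 0 t ht)
    linarith
  · refine hTA.tendsto (hY.const_mul hC) fun s t hs hst => ?_
    rw [intervalIntegral.integral_const_mul]
    have := h s t hs hst
    have := mul_nonneg hc.le (hint s t hst)
    linarith

namespace Sl
variable {P : Par} (s : Sl P)

lemma abs_int_ul {ε : ℝ} (hε : 0 < ε) :
    |∫ x, s.u x * s.l x| ≤ ε * (∫ x, s.l x ^ 2) + ε⁻¹ * ∫ x, s.u x ^ 2 := by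
  rw [← integral_const_mul, ← integral_const_mul,
    ← integral_add (li fun x => ε * s.l x ^ 2) (li fun x => ε⁻¹ * s.u x ^ 2)]
  refine (abs_integral_le_integral_abs).trans
    (integral_mono (li fun x => s.u x * s.l x).abs
      (li fun x => ε * s.l x ^ 2 + ε⁻¹ * s.u x ^ 2) fun x => ?_)
  have h1 : 0 < ε⁻¹ := inv_pos.2 hε
  have h2 : ε * ε⁻¹ = 1 := mul_inv_cancel₀ hε.ne'
  simp only [abs_le]
  constructor
  · nlinarith [mul_nonneg hε.le (sq_nonneg (s.l x + ε⁻¹ * s.u x)), sq_nonneg (s.l x),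
      mul_nonneg hε.le (sq_nonneg (s.l x)), mul_nonneg h1.le (sq_nonneg (s.u x)),
      show ε * (s.l x + ε⁻¹ * s.u x) ^ 2 = ε * s.l x ^ 2 + 2 * (ε * ε⁻¹) * (s.u x * s.l x)
        + (ε * ε⁻¹) * ε⁻¹ * s.u x ^ 2 by ring]
  · nlinarith [mul_nonneg hε.le (sq_nonneg (s.l x - ε⁻¹ * s.u x)), sq_nonneg (s.l x),
      mul_nonneg hε.le (sq_nonneg (s.l x)), mul_nonneg h1.le (sq_nonneg (s.u x)),
      show ε * (s.l x - ε⁻¹ * s.u x) ^ 2 = ε * s.l x ^ 2 - 2 * (ε * ε⁻¹) * (s.u x * s.l x)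
        + (ε * ε⁻¹) * ε⁻¹ * s.u x ^ 2 by ring]

lemma V1_le_l : s.V1 ≤ P.K ^ 2 * ∫ x, s.l x ^ 2 := by
  unfold V1; rw [← integral_const_mul]
  refine integral_mono (li _) (li fun x => P.K ^ 2 * s.l x ^ 2) fun x => ?_
  have h1 : s.vx x = s.v x * s.l x := by unfold l; field_simp [(s.v0 x).ne']
  have h2 := s.vhi x
  have h3 := s.v0 x
  simp only [h1, mul_pow]
  exact mul_le_mul_of_nonneg_right (pow_le_pow_left₀ h3.le h2 2) (sq_nonneg _)

lemma l_le_V1 : ∫ x, s.l x ^ 2 ≤ P.K ^ 2 * s.V1 := by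
  unfold V1; rw [← integral_const_mul]
  refine integral_mono (li _) (li fun x => P.K ^ 2 * s.vx x ^ 2) fun x => ?_
  simp only [l, div_eq_mul_inv, mul_pow]
  rw [mul_comm]
  exact mul_le_mul_of_nonneg_right
    (pow_le_pow_left₀ (inv_pos.2 (s.v0 x)).le (s.vinv_le x) 2) (sq_nonneg _)

lemma θ_pow4 (x : ℝ) : (s.θ x - 1) ^ 4 ≤ 4 * ((∫ y, (s.θ y - 1) ^ 2) * s.T1) :=
  pow4_le (fun x => (s.dθ x).sub_const 1) s.θ2 s.θx2 x

lemma v_pow4 (x : ℝ) : (s.v x - 1) ^ 4 ≤ 4 * ((∫ y, (s.v y - 1) ^ 2) * s.V1) :=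
  pow4_le (fun x => (s.dv x).sub_const 1) s.v2 s.vx2 x

/-- The temperature is bounded in terms of the entropy and `‖θ_x‖₂`: with `b = sup θ` the
interpolation inequality gives `(b - 1)⁴ ≲ b E T1`, which bounds `b`. -/
lemma θ_le_bound {E1 B : ℝ} (hE : s.E ≤ E1) (hB : s.T1 ≤ B) (x : ℝ) :
    s.θ x ≤ 2 + 32 * (8 * P.cv⁻¹ * E1 * B) := by
  set Q := 8 * P.cv⁻¹ * E1 * B with hQ
  have hcv : 0 < P.cv⁻¹ := inv_pos.2 P.hcv
  have hE1 : 0 ≤ E1 := s.E_nonneg.trans hE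
  have hB0 : 0 ≤ B := s.T1_nonneg.trans hB
  have hQ0 : 0 ≤ Q := by positivity
  have hbdd : BddAbove (range s.θ) := by
    refine ⟨2 + 4 * ((∫ y, (s.θ y - 1) ^ 2) * s.T1), ?_⟩
    rintro _ ⟨y, rfl⟩
    have := s.θ_pow4 y
    nlinarith [sq_nonneg ((s.θ y - 1) ^ 2 - 1), sq_nonneg (s.θ y - 1 - 1)]
  set b := ⨆ y, s.θ y
  have hb : ∀ y, s.θ y ≤ b := fun y => le_ciSup hbdd y
  refine (hb x).trans ?_
  by_contra! hlt
  have hb2 : 2 < b := by linarith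
  obtain ⟨y, hy⟩ := exists_lt_of_lt_ciSup (show b / 2 + 1 < ⨆ y, s.θ y by
    change b / 2 + 1 < b; linarith)
  have h1 := s.θ_pow4 y
  have h2 := s.int_θ_sq hb
  have h3 : (∫ y, (s.θ y - 1) ^ 2) * s.T1 ≤ 2 * (b + 1) * P.cv⁻¹ * E1 * B := by
    refine mul_le_mul (h2.trans ?_) hB s.T1_nonneg (by positivity)
    exact mul_le_mul_of_nonneg_left hE (by positivity)
  have h4 : (b / 2) ^ 4 ≤ (s.θ y - 1) ^ 4 := pow_le_pow_left₀ (by linarith) (by linarith) 4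
  have h5 : (b / 2) ^ 4 ≤ Q * (b + 1) := by
    rw [hQ]; linarith
  have h6 : Q * (b + 1) ≤ Q * (2 * b) := mul_le_mul_of_nonneg_left (by linarith) hQ0
  have h7 : b ^ 3 ≤ 32 * Q := by
    have : b ^ 3 * b ≤ 32 * Q * b := by nlinarith
    exact le_of_mul_le_mul_right this (by linarith)
  nlinarith [sq_nonneg (b - 1), mul_pos (by linarith : 0 < b) (by linarith : 0 < b - 1)]

end Sl

namespace Sol
variable {P : Par} (S : Sol P)

/-- The conclusion of the energy method: uniform `L²` bounds, and decay of the first spatial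
derivatives in `L²`. -/
theorem decay : (∃ C, ∀ t, 0 ≤ t → ∫ x, ((S.sl t).v x - 1) ^ 2 ≤ C ∧ ∫ x, (S.sl t).u x ^ 2 ≤ C ∧
      ∫ x, ((S.sl t).θ x - 1) ^ 2 ≤ C) ∧ Tendsto (fun t => (S.sl t).V1) atTop (nhds 0) ∧
    Tendsto (fun t => (S.sl t).U1) atTop (nhds 0) ∧
    Tendsto (fun t => (S.sl t).T1) atTop (nhds 0) := by
  set E1 := (S.sl 0).E + 1 with hE1d
  have hE1 : 0 < E1 := by have := (S.sl 0).E_nonneg; positivity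
  obtain ⟨c0, hc0, h0⟩ := S.entropy_int
  have hDint : ∀ b, 0 ≤ b → 0 ≤ ∫ τ in (0:ℝ)..b, (S.sl τ).D := fun b hb =>
    intervalIntegral.integral_nonneg hb fun t _ => (S.sl t).D_nonneg
  have hE : ∀ t, 0 ≤ t → (S.sl t).E ≤ E1 := fun t ht => by
    have := h0 0 t le_rfl ht
    have := mul_nonneg hc0.le (hDint t ht)
    linarith
  have tD : TB fun t => (S.sl t).D := TB.of_bound (C := E1) S.tiD (fun t => (S.sl t).D_nonneg) hc0
    fun b hb => by
      have := h0 0 b le_rfl hb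
      linarith [(S.sl b).E_nonneg]
  have tU : TB fun t => (S.sl t).U1 := by
    obtain ⟨c, C, hc, hC, h⟩ := S.heating_int hE
    obtain ⟨-, -, A, hA⟩ := id tD
    refine TB.of_bound (C := 4 * E1 + C * A) S.tiU1 (fun t => (S.sl t).U1_nonneg) hc fun b hb => ?_
    exact (h b hb).trans (by have := mul_le_mul_of_nonneg_left (hA b hb) hC; linarith)
  have tT : TB fun t => (S.sl t).T1 := by
    obtain ⟨c, B, C, hc, hC, h⟩ := S.energy_int hE
    obtain ⟨-, -, A, hA⟩ := tD.add tU
    refine TB.of_bound (C := B + C * A) S.tiT1 (fun t => (S.sl t).T1_nonneg) hc fun b hb => ?_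
    exact (h b hb).trans (by have := mul_le_mul_of_nonneg_left (hA b hb) hC; linarith)
  have l0 : ∀ t, 0 ≤ ∫ x, (S.sl t).l x ^ 2 := fun t => integral_nonneg fun _ => sq_nonneg _
  -- the specific volume: `μ/2 ∫ l² - ∫ u l` is bounded below, since `‖u‖₂` is bounded
  obtain ⟨tW, hl⟩ : (TB fun t => (S.sl t).W) ∧
      ∃ B, 0 < B ∧ ∀ t, 0 ≤ t → ∫ x, (S.sl t).l x ^ 2 ≤ B := by
    obtain ⟨c, C, hc, hC, h⟩ := S.volume_int
    have hμ4 : 0 < P.μ / 4 := by have := P.hμ; positivity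
    have hlow : ∀ t, 0 ≤ t → P.μ / 4 * (∫ x, (S.sl t).l x ^ 2) - (P.μ / 4)⁻¹ * (2 * E1) ≤
        P.μ * (1 / 2 * (∫ x, (S.sl t).l x ^ 2)) - ∫ x, (S.sl t).u x * (S.sl t).l x := by
      intro t ht
      have h1 := (abs_le.1 ((S.sl t).abs_int_ul hμ4)).2
      have h2 : (P.μ / 4)⁻¹ * (∫ x, (S.sl t).u x ^ 2) ≤ (P.μ / 4)⁻¹ * (2 * E1) :=
        mul_le_mul_of_nonneg_left ((S.sl t).int_u_sq.trans (by linarith [hE t ht]))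
          (inv_pos.2 hμ4).le
      linarith
    obtain ⟨-, -, A, hA⟩ := (tT.add tD).add tU
    set A0 := P.μ * (1 / 2 * (∫ x, (S.sl 0).l x ^ 2)) - ∫ x, (S.sl 0).u x * (S.sl 0).l x
    have hWi : ∀ b, 0 ≤ b → 0 ≤ ∫ τ in (0:ℝ)..b, (S.sl τ).W := fun b hb =>
      intervalIntegral.integral_nonneg hb fun t _ => (S.sl t).W_nonneg
    have hfin : ∀ b, 0 ≤ b → P.μ / 4 * (∫ x, (S.sl b).l x ^ 2)
        + c * ∫ τ in (0:ℝ)..b, (S.sl τ).W ≤ A0 + C * A + (P.μ / 4)⁻¹ * (2 * E1) := by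
      intro b hb
      have h1 : _ ≤ A0 + _ := h 0 b le_rfl hb
      have h2 := hlow b hb
      have h3 := mul_le_mul_of_nonneg_left (hA b hb) hC
      beta_reduce at h3
      linarith
    refine ⟨TB.of_bound (C := A0 + C * A + (P.μ / 4)⁻¹ * (2 * E1)) S.tiW
      (fun t => (S.sl t).W_nonneg) hc fun b hb => ?_,
      (A0 + C * A + (P.μ / 4)⁻¹ * (2 * E1)) / (P.μ / 4) + 1, ?_, fun b hb => ?_⟩
    · have := hfin b hb
      have := mul_nonneg hμ4.le (l0 b)
      linarith
    · have h1 := hfin 0 le_rfl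
      simp only [intervalIntegral.integral_same, mul_zero, add_zero] at h1
      have := mul_nonneg hμ4.le (l0 0)
      have : 0 ≤ (A0 + C * A + (P.μ / 4)⁻¹ * (2 * E1)) / (P.μ / 4) :=
        div_nonneg (this.trans h1) hμ4.le
      linarith
    · have h1 := hfin b hb
      have h2 := mul_nonneg hc.le (hWi b hb)
      have : (∫ x, (S.sl b).l x ^ 2)
          ≤ (A0 + C * A + (P.μ / 4)⁻¹ * (2 * E1)) / (P.μ / 4) := by
        rw [le_div_iff₀' hμ4]; linarith
      linarith
  obtain ⟨Lb, hLb, hL⟩ := hl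
  have hK0 := Sl.K0 P
  have hVb : 0 < P.K ^ 2 * Lb := by positivity
  have hV : ∀ t, 0 ≤ t → (S.sl t).V1 ≤ P.K ^ 2 * Lb := fun t ht =>
    (S.sl t).V1_le_l.trans (mul_le_mul_of_nonneg_left (hL t ht) (by positivity))
  -- `∫ u_x²` has integrable growth, now that `‖v_x‖₂` is bounded
  obtain ⟨c2, C2, hc2, hC2, h2⟩ := S.velocity_int hE1 hVb hE hV
  obtain ⟨tU2, ⟨Ub, hUb, hU⟩, hUlim⟩ := TB.growth (A := fun t => 1 / 2 * (S.sl t).U1)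
    (fun t => mul_nonneg (by norm_num) (S.sl t).U1_nonneg) S.tiU2 (fun t => (S.sl t).U2_nonneg)
    (((tT.add tW).add tD).add tU) hc2 hC2 h2
  have limU : Tendsto (fun t => (S.sl t).U1) atTop (nhds 0) := by
    have := (hUlim (tU.const_mul (by norm_num))).const_mul 2
    simpa using this
  have hU' : ∀ t, 0 ≤ t → (S.sl t).U1 ≤ 2 * Ub := fun t ht => by linarith [hU t ht]
  -- the bound on `∫ u_x²` and the integrability of `∫ u_xx²` control the growth of `∫ θ_x²`
  obtain ⟨c3, C3, hc3, hC3, h3⟩ := S.temperature_int hE1 hVb (by positivity : 0 < 2 * Ub) hE hV hU'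
  have hcv := P.hcv
  obtain ⟨tTh2, ⟨Tb, hTb, hT⟩, hTlim⟩ := TB.growth (A := fun t => P.cv * (1 / 2 * (S.sl t).T1))
    (fun t => mul_nonneg hcv.le (mul_nonneg (by norm_num) (S.sl t).T1_nonneg)) S.tiTh2
    (fun t => (S.sl t).Th2_nonneg) (((tT.add tD).add tU).add tU2) hc3 hC3 h3
  have limT : Tendsto (fun t => (S.sl t).T1) atTop (nhds 0) := by
    have := (hTlim ((tT.const_mul (by norm_num)).const_mul hcv.le)).const_mul (P.cv⁻¹ * 2)
    rw [mul_zero] at this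
    refine this.congr fun t => ?_
    field_simp
  have hT' : ∀ t, 0 ≤ t → (S.sl t).T1 ≤ P.cv⁻¹ * 2 * Tb := fun t ht => by
    have := mul_le_mul_of_nonneg_left (hT t ht) (by positivity : 0 ≤ P.cv⁻¹ * 2)
    rwa [show P.cv⁻¹ * 2 * (P.cv * (1 / 2 * (S.sl t).T1)) = (S.sl t).T1 by field_simp] at this
  set b := 2 + 32 * (8 * P.cv⁻¹ * E1 * (P.cv⁻¹ * 2 * Tb)) with hbd
  have hb0 : 0 < b := by positivity
  have hθb : ∀ t, 0 ≤ t → ∀ x, (S.sl t).θ x ≤ b := fun t ht =>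
    (S.sl t).θ_le_bound (hE t ht) (hT' t ht)
  have hR := P.hR
  set Cθ := 2 * (b + 1) * P.cv⁻¹ * E1
  have hθ2 : ∀ t, 0 ≤ t → ∫ x, ((S.sl t).θ x - 1) ^ 2 ≤ Cθ := fun t ht =>
    ((S.sl t).int_θ_sq (hθb t ht)).trans (mul_le_mul_of_nonneg_left (hE t ht) (by positivity))
  have hCθ : 0 ≤ Cθ := by positivity
  refine ⟨⟨max (2 * (P.K + 1) * P.R⁻¹ * E1) (max (2 * E1) Cθ), fun t ht => ⟨?_, ?_, ?_⟩⟩, ?_,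
    limU, limT⟩
  · exact ((S.sl t).int_v_sq.trans
      (mul_le_mul_of_nonneg_left (hE t ht) (by positivity))).trans (le_max_left _ _)
  · exact ((S.sl t).int_u_sq.trans (by linarith [hE t ht])).trans
      ((le_max_left _ _).trans (le_max_right _ _))
  · exact (hθ2 t ht).trans ((le_max_right _ _).trans (le_max_right _ _))
  -- eventually `θ ≥ 1/2`, hence `V1 ≤ 2 W` for large times and `V1` is integrable in time
  have hev : ∀ᶠ t in atTop, ∀ x, 1 / 2 ≤ (S.sl t).θ x := by
    have h4 : Tendsto (fun t => 4 * (Cθ * (S.sl t).T1)) atTop (nhds 0) := by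
      simpa using (limT.const_mul Cθ).const_mul 4
    filter_upwards [h4.eventually (gt_mem_nhds (by norm_num : (0:ℝ) < 1 / 16)),
      eventually_ge_atTop (0:ℝ)] with t ht ht0 x
    have h5 := (S.sl t).θ_pow4 x
    have h6 := mul_le_mul_of_nonneg_right (hθ2 t ht0) (S.sl t).T1_nonneg
    by_contra! hlt
    have h7 : (1 / 2 : ℝ) ^ 4 ≤ (1 - (S.sl t).θ x) ^ 4 :=
      pow_le_pow_left₀ (by norm_num) (by linarith) 4
    have h8 : (1 - (S.sl t).θ x) ^ 4 = ((S.sl t).θ x - 1) ^ 4 := by ring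
    norm_num at h7
    linarith
  obtain ⟨T0, hT0⟩ := eventually_atTop.1 (hev.and (eventually_ge_atTop (0:ℝ)))
  have hT00 : 0 ≤ T0 := (hT0 T0 le_rfl).2
  have tV : TB fun t => (S.sl t).V1 := by
    obtain ⟨-, -, A, hA⟩ := id tW
    refine ⟨S.tiV1, fun t => (S.sl t).V1_nonneg,
      (∫ τ in (0:ℝ)..T0, (S.sl τ).V1) + 2 * A, fun c hc => ?_⟩
    have hV0 : ∀ p q, p ≤ q → 0 ≤ ∫ τ in p..q, (S.sl τ).V1 := fun p q hpq =>
      intervalIntegral.integral_nonneg hpq fun t _ => (S.sl t).V1_nonneg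
    have hW0 : ∀ p q, p ≤ q → 0 ≤ ∫ τ in p..q, (S.sl τ).W := fun p q hpq =>
      intervalIntegral.integral_nonneg hpq fun t _ => (S.sl t).W_nonneg
    have hA0 : 0 ≤ A := by simpa using hA 0 le_rfl
    rcases le_total c T0 with hcT | hcT
    · have := intervalIntegral.integral_add_adjacent_intervals (S.tiV1.ii le_rfl hc)
        (S.tiV1.ii hc hT00)
      linarith [hV0 c T0 hcT]
    · have e1 := intervalIntegral.integral_add_adjacent_intervals (S.tiV1.ii le_rfl hT00)
        (S.tiV1.ii hT00 hc)
      have e2 := intervalIntegral.integral_add_adjacent_intervals (S.tiW.ii le_rfl hT00)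
        (S.tiW.ii hT00 hc)
      have e3 : ∫ τ in T0..c, (S.sl τ).V1 ≤ 2 * ∫ τ in T0..c, (S.sl τ).W := by
        rw [← intervalIntegral.integral_const_mul]
        refine intervalIntegral.integral_mono_on hcT (S.tiV1.ii hT00 hc)
          ((S.tiW.const_mul 2).ii hT00 hc) fun t ht => ?_
        have hθ := (hT0 t ht.1).1
        unfold Sl.V1 Sl.W
        rw [← integral_const_mul]
        refine integral_mono (li _) (li fun x => 2 * ((S.sl t).θ x * (S.sl t).vx x ^ 2)) fun x => ?_
        have := mul_le_mul_of_nonneg_right (hθ x) (sq_nonneg ((S.sl t).vx x))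
        simp only
        linarith
      linarith [hA c hc, hW0 0 T0 hT00]
  obtain ⟨C4, hC4, h4⟩ := S.l_int hVb hV
  have tl : TI fun t => ∫ x, (S.sl t).l x ^ 2 :=
    ti (f := fun x t => (S.sl t).l x ^ 2) fun _ => inferInstance
  have tL : TB fun t => 1 / 2 * ∫ x, (S.sl t).l x ^ 2 := by
    obtain ⟨-, -, A, hA⟩ := tV.const_mul (by positivity : 0 ≤ 1 / 2 * P.K ^ 2)
    refine ⟨tl.const_mul _, fun t => mul_nonneg (by norm_num) (l0 t), A, fun b hb => ?_⟩
    refine le_trans ?_ (hA b hb)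
    refine intervalIntegral.integral_mono_on hb ((tl.const_mul _).ii le_rfl hb)
      ((S.tiV1.const_mul _).ii le_rfl hb) fun t _ => ?_
    linarith [(S.sl t).l_le_V1]
  have limL := tL.tendsto (((tV.add tU2).add tU).const_mul hC4) fun s t hs hst => by
    rw [intervalIntegral.integral_const_mul]; exact h4 s t hs hst
  have limL' : Tendsto (fun t => P.K ^ 2 * 2 * (1 / 2 * ∫ x, (S.sl t).l x ^ 2)) atTop (nhds 0) := by
    simpa only [mul_zero] using limL.const_mul (P.K ^ 2 * 2)
  refine squeeze_zero (fun t => (S.sl t).V1_nonneg) (fun t => ?_) limL'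
  linarith [(S.sl t).V1_le_l]

end Sol
end NSLT

namespace NSLT

/-! ### From classical solutions to families of slices -/

lemma L2_sq_lintegral (f : ℝ → ℝ) : L2 f ^ 2 = ∫⁻ x, ‖f x‖ₑ ^ 2 := by
  have := eLpNorm_nnreal_pow_eq_lintegral (f := f) (μ := volume) (p := 2) (by norm_num)
  simpa [L2] using this

lemma L2_sq {f : ℝ → ℝ} (hf : MemLp f 2) : L2 f ^ 2 = ENNReal.ofReal (∫ x, f x ^ 2) := by
  rw [L2_sq_lintegral, ofReal_integral_eq_lintegral_ofReal hf.integrable_sq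
    (Eventually.of_forall fun x => sq_nonneg _)]
  refine lintegral_congr fun x => ?_
  rw [← sq_abs, ENNReal.ofReal_pow (abs_nonneg _), ← Real.norm_eq_abs, ofReal_norm]

lemma memLp_of_L2_le {f : ℝ → ℝ} (hf : Continuous f) {B : ℝ} (h : L2 f ≤ ENNReal.ofReal B) :
    MemLp f 2 ∧ ∫ x, f x ^ 2 ≤ B ^ 2 := by
  have hm : MemLp f 2 := ⟨hf.aestronglyMeasurable, lt_of_le_of_lt h ENNReal.ofReal_lt_top⟩
  refine ⟨hm, ?_⟩
  have h1 : L2 f ^ 2 ≤ ENNReal.ofReal B ^ 2 := pow_le_pow_left₀ zero_le h 2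
  rw [L2_sq hm] at h1
  rcases le_total 0 B with hB | hB
  · rw [← ENNReal.ofReal_pow hB] at h1
    exact (ENNReal.ofReal_le_ofReal_iff (sq_nonneg _)).1 h1
  · rw [ENNReal.ofReal_of_nonpos hB] at h1
    have : ∫ x, f x ^ 2 ≤ 0 := by simpa using h1
    exact this.trans (sq_nonneg _)

lemma memLp_strip_of_L2 {w : ℝ → ℝ → ℝ} (hm : Measurable fun p : ℝ × ℝ => w p.1 p.2) {T : ℝ}
    (h : ∫⁻ t in Ioc 0 T, L2 (fun x => w x t) ^ 2 < ⊤) :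
    MemLp (fun p : ℝ × ℝ => w p.1 p.2) 2 (strip T) := by
  refine ⟨hm.aestronglyMeasurable, ?_⟩
  have h1 := eLpNorm_nnreal_pow_eq_lintegral (f := fun p : ℝ × ℝ => w p.1 p.2) (μ := strip T)
    (p := 2) (by norm_num)
  have h2 : ∫⁻ p, ‖w p.1 p.2‖ₑ ^ 2 ∂(strip T) < ⊤ := by
    have h3 : AEMeasurable (fun p : ℝ × ℝ => ‖w p.1 p.2‖ₑ ^ 2)
        ((volume : Measure ℝ).prod (volume.restrict (Ioc 0 T))) :=
      (hm.enorm.pow_const 2).aemeasurable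
    rw [strip, lintegral_prod_symm _ h3]
    simpa only [L2_sq_lintegral] using h
  have h4 : eLpNorm (fun p : ℝ × ℝ => w p.1 p.2) 2 (strip T) ^ 2 < ⊤ := by
    have h5 : eLpNorm (fun p : ℝ × ℝ => w p.1 p.2) 2 (strip T) ^ 2
        = ∫⁻ p, ‖w p.1 p.2‖ₑ ^ 2 ∂(strip T) := by simpa using h1
    rw [h5]; exact h2
  by_contra hcon
  rw [not_lt, top_le_iff] at hcon
  simp [hcon] at h4

/-- A positive continuous function with limit `1` at infinity is bounded away from zero. -/
lemma exists_lower {f : ℝ → ℝ} (hc : Continuous f) (h0 : ∀ x, 0 < f x)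
    (hf : Tendsto f (cocompact ℝ) (nhds 1)) : ∃ a, 0 < a ∧ ∀ x, a ≤ f x := by
  by_cases h : ∃ x, f x < 1
  · obtain ⟨x, hx⟩ := h
    obtain ⟨y, hy⟩ := hc.exists_forall_le' x ((hf.eventually (lt_mem_nhds hx)).mono fun _ => le_of_lt)
    exact ⟨f y, h0 y, hy⟩
  · push Not at h
    exact ⟨1, one_pos, h⟩

lemma hasDerivAt_of_contDiff {f : ℝ → ℝ} (hf : ContDiff ℝ 2 f) :
    (∀ x, HasDerivAt f (deriv f x) x) ∧ (∀ x, HasDerivAt (deriv f) (deriv (deriv f) x) x) ∧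
      Continuous (deriv f) ∧ Continuous (deriv (deriv f)) := by
  have h1 : ContDiff ℝ 1 (deriv f) := by
    have : ContDiff ℝ (1 + 1) f := by simpa [one_add_one_eq_two] using hf
    exact (contDiff_succ_iff_deriv.1 this).2.2
  exact ⟨fun x => (hf.differentiable (by norm_num) x).hasDerivAt,
    fun x => (h1.differentiable (by norm_num) x).hasDerivAt, h1.continuous,
    h1.continuous_deriv le_rfl⟩

section build
variable {μ κ R cv K : ℝ} {v u θ : ℝ → ℝ → ℝ}

lemma deriv_sub_one (f : ℝ → ℝ) : deriv (fun x => f x - 1) = deriv f := by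
  funext x; exact deriv_sub_const 1

lemma slice_bounds (hs : IsClassicalSolution μ κ R cv v u θ) {B t : ℝ} (ht : 0 ≤ t)
    (h : H1 (fun x => v x t - 1) + H1 (fun x => u x t) + H1 (fun x => θ x t - 1)
      ≤ ENNReal.ofReal B) :
    ((MemLp (fun x => v x t - 1) 2 ∧ ∫ x, (v x t - 1) ^ 2 ≤ B ^ 2) ∧
      (MemLp (fun x => u x t) 2 ∧ ∫ x, u x t ^ 2 ≤ B ^ 2) ∧
      (MemLp (fun x => θ x t - 1) 2 ∧ ∫ x, (θ x t - 1) ^ 2 ≤ B ^ 2)) ∧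
    ((MemLp (fun x => pdx v x t) 2 ∧ ∫ x, pdx v x t ^ 2 ≤ B ^ 2) ∧
      (MemLp (fun x => pdx u x t) 2 ∧ ∫ x, pdx u x t ^ 2 ≤ B ^ 2) ∧
      (MemLp (fun x => pdx θ x t) 2 ∧ ∫ x, pdx θ x t ^ 2 ≤ B ^ 2)) := by
  obtain ⟨v1, -, v3, -⟩ := hasDerivAt_of_contDiff (hs.smooth_x_v t ht)
  obtain ⟨u1, -, u3, -⟩ := hasDerivAt_of_contDiff (hs.smooth_x_u t ht)
  obtain ⟨θ1, -, θ3, -⟩ := hasDerivAt_of_contDiff (hs.smooth_x_θ t ht)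
  have e1 := deriv_sub_one fun x => v x t
  have e2 := deriv_sub_one fun x => θ x t
  simp only [H1, e1, e2] at h
  have hv := (le_add_of_le_left (le_add_of_le_left le_rfl)).trans h
  have hu := (le_add_of_le_left (le_add_of_le_right le_rfl)).trans h
  have hθ := (le_add_of_le_right le_rfl).trans h
  have cv := (hs.smooth_x_v t ht).continuous
  have cu := (hs.smooth_x_u t ht).continuous
  have cθ := (hs.smooth_x_θ t ht).continuous
  exact ⟨⟨memLp_of_L2_le (cv.sub continuous_const) (le_self_add.trans hv),
    memLp_of_L2_le cu (le_self_add.trans hu),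
    memLp_of_L2_le (cθ.sub continuous_const) (le_self_add.trans hθ)⟩,
    memLp_of_L2_le v3 (le_add_self.trans hv), memLp_of_L2_le u3 (le_add_self.trans hu),
    memLp_of_L2_le θ3 (le_add_self.trans hθ)⟩

/-- The slice of a classical solution at a time `t ≥ 0`. -/
noncomputable def mkSl (P : Par) (hs : IsClassicalSolution P.μ P.κ P.R P.cv v u θ)
    (hv : VolBounded P.K v) (t : ℝ) (ht : 0 ≤ t) : Sl P where
  v x := v x t
  u x := u x t
  θ x := θ x t
  vx x := pdx v x t
  ux x := pdx u x t
  θx x := pdx θ x t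
  uxx x := deriv (deriv fun y => u y t) x
  θxx x := deriv (deriv fun y => θ y t) x
  vlo x := (hv x t ht).1
  vhi x := (hv x t ht).2
  θlo := exists_lower (hs.smooth_x_θ t ht).continuous (fun x => hs.θ_pos x t ht)
    (hs.farfield_θ t ht)
  dv := (hasDerivAt_of_contDiff (hs.smooth_x_v t ht)).1
  du := (hasDerivAt_of_contDiff (hs.smooth_x_u t ht)).1
  dθ := (hasDerivAt_of_contDiff (hs.smooth_x_θ t ht)).1
  dux := (hasDerivAt_of_contDiff (hs.smooth_x_u t ht)).2.1
  dθx := (hasDerivAt_of_contDiff (hs.smooth_x_θ t ht)).2.1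
  cvx := (hasDerivAt_of_contDiff (hs.smooth_x_v t ht)).2.2.1
  cuxx := (hasDerivAt_of_contDiff (hs.smooth_x_u t ht)).2.2.2
  cθxx := (hasDerivAt_of_contDiff (hs.smooth_x_θ t ht)).2.2.2
  v2 := by obtain ⟨B, hB⟩ := hs.reg_H1 t ht; exact (slice_bounds hs ht (hB t ⟨ht, le_rfl⟩)).1.1.1
  u2 := by obtain ⟨B, hB⟩ := hs.reg_H1 t ht; exact (slice_bounds hs ht (hB t ⟨ht, le_rfl⟩)).1.2.1.1
  θ2 := by obtain ⟨B, hB⟩ := hs.reg_H1 t ht; exact (slice_bounds hs ht (hB t ⟨ht, le_rfl⟩)).1.2.2.1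
  vx2 := by obtain ⟨B, hB⟩ := hs.reg_H1 t ht; exact (slice_bounds hs ht (hB t ⟨ht, le_rfl⟩)).2.1.1
  ux2 := by obtain ⟨B, hB⟩ := hs.reg_H1 t ht; exact (slice_bounds hs ht (hB t ⟨ht, le_rfl⟩)).2.2.1.1
  θx2 := by obtain ⟨B, hB⟩ := hs.reg_H1 t ht; exact (slice_bounds hs ht (hB t ⟨ht, le_rfl⟩)).2.2.2.1

lemma pdt_u_eq (P : Par) (hs : IsClassicalSolution P.μ P.κ P.R P.cv v u θ)
    (hv : VolBounded P.K v) (t : ℝ) (ht : 0 ≤ t) (x : ℝ) :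
    pdt u x t = (mkSl P hs hv t ht).ut x := by
  set s := mkSl P hs hv t ht
  have h0 := (s.v0 x).ne'
  have h1 : pdx (fun y s => P.R * θ y s / v y s) x t
      = (P.R * s.θx x * s.v x - P.R * s.θ x * s.vx x) / s.v x ^ 2 :=
    (((s.dθ x).const_mul P.R).div (s.dv x) h0).deriv
  have h2 : pdx (fun y s => pdx u y s / v y s) x t
      = (s.uxx x * s.v x - s.ux x * s.vx x) / s.v x ^ 2 :=
    ((s.dux x).div (s.dv x) h0).deriv
  have h3 := hs.eq_momentum x t ht
  rw [h1, h2] at h3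
  rw [eq_sub_of_add_eq h3, Sl.ut]
  field_simp
  ring

lemma pdt_θ_eq (P : Par) (hs : IsClassicalSolution P.μ P.κ P.R P.cv v u θ)
    (hv : VolBounded P.K v) (t : ℝ) (ht : 0 ≤ t) (x : ℝ) :
    pdt θ x t = (mkSl P hs hv t ht).θt x := by
  set s := mkSl P hs hv t ht
  have h0 := (s.v0 x).ne'
  have h2 : pdx (fun y s => pdx θ y s / v y s) x t
      = (s.θxx x * s.v x - s.θx x * s.vx x) / s.v x ^ 2 :=
    ((s.dθx x).div (s.dv x) h0).deriv
  have h3 : P.cv * pdt θ x t + P.R * s.θ x / s.v x * s.ux x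
      = P.κ * pdx (fun y s => pdx θ y s / v y s) x t + P.μ * s.ux x ^ 2 / s.v x :=
    hs.eq_energy x t ht
  rw [h2] at h3
  have hc := P.hcv.ne'
  have h4 : P.cv * pdt θ x t = P.cv * s.θt x := by
    rw [eq_sub_of_add_eq h3, Sl.θt]
    field_simp
  exact mul_left_cancel₀ hc h4

lemma continuous_max {f : ℝ → ℝ} (hf : ∀ t, 0 ≤ t → DifferentiableAt ℝ f t) :
    Continuous fun t => f (max t 0) := by
  refine continuous_iff_continuousAt.2 fun t => ?_
  exact ContinuousAt.comp (g := f) (f := fun t => max t 0)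
    (hf _ (le_max_right _ _)).continuousAt (by fun_prop)

lemma hasDerivAt_max {f : ℝ → ℝ} (hf : ∀ t, 0 ≤ t → DifferentiableAt ℝ f t) {t : ℝ} (ht : 0 < t) :
    HasDerivAt (fun t => f (max t 0)) (deriv f (max t 0)) t := by
  rw [max_eq_left ht.le]
  refine (hf t ht.le).hasDerivAt.congr_of_eventuallyEq ?_
  filter_upwards [lt_mem_nhds ht] with s hs
  rw [max_eq_left hs.le]

lemma xx2 {w : ℝ → ℝ → ℝ} (hw : ∀ t, 0 ≤ t → ContDiff ℝ 2 fun x => w x t)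
    (hc : ∀ x t, 0 ≤ t → DifferentiableAt ℝ (fun s => w x s) t) {T : ℝ}
    (h : ∫⁻ t in Icc 0 (max T 1), L2 (deriv (deriv fun x => w x t)) ^ 2 < ⊤) :
    MemLp (fun p : ℝ × ℝ => deriv (deriv fun y => w y (max p.2 0)) p.1) 2 (strip T) := by
  have hm : ∀ t : ℝ, 0 ≤ max t 0 := fun t => le_max_right _ _
  have m0 : Measurable fun p : ℝ × ℝ => w p.1 (max p.2 0) :=
    Sol.measurable_of_ct (f := fun t x => w x (max t 0)) (fun x => continuous_max (hc x))
      fun t => (hw _ (hm t)).continuous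
  have m1 := Sol.measurable_dx (f := fun x t => w x (max t 0)) m0
    fun x t => (hasDerivAt_of_contDiff (hw _ (hm t))).1 x
  have m2 := Sol.measurable_dx (f := fun x t => deriv (fun y => w y (max t 0)) x) m1
    fun x t => (hasDerivAt_of_contDiff (hw _ (hm t))).2.1 x
  refine memLp_strip_of_L2 (w := fun x t => deriv (deriv fun y => w y (max t 0)) x) m2 ?_
  refine lt_of_le_of_lt ?_ h
  calc _ = ∫⁻ t in Ioc 0 T, L2 (deriv (deriv fun x => w x t)) ^ 2 := by
        refine setLIntegral_congr_fun measurableSet_Ioc fun t ht => ?_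
        simp only [max_eq_left ht.1.le]
    _ ≤ _ := lintegral_mono_set
        (show Ioc 0 T ⊆ Icc 0 (max T 1) from fun t ht => ⟨ht.1.le, ht.2.trans (le_max_left _ _)⟩)

/-- The family of slices of a classical solution, extended to negative times by its value at
time `0`. -/
noncomputable def mkSol (P : Par) (hs : IsClassicalSolution P.μ P.κ P.R P.cv v u θ)
    (hv : VolBounded P.K v) : Sol P where
  sl t := mkSl P hs hv (max t 0) (le_max_right _ _)
  ct_v x := continuous_max (hs.smooth_t_v x)
  ct_u x := continuous_max (hs.smooth_t_u x)
  ct_θ x := continuous_max (hs.smooth_t_θ x)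
  dt_v x t ht := (hasDerivAt_max (hs.smooth_t_v x) ht).congr_deriv
    (hs.eq_mass x _ (le_max_right _ _))
  dt_u x t ht := (hasDerivAt_max (hs.smooth_t_u x) ht).congr_deriv
    (pdt_u_eq P hs hv _ (le_max_right _ _) x)
  dt_θ x t ht := (hasDerivAt_max (hs.smooth_t_θ x) ht).congr_deriv
    (pdt_θ_eq P hs hv _ (le_max_right _ _) x)
  bdd T := by
    obtain ⟨B, hB⟩ := hs.reg_H1 (max T 0) (le_max_right _ _)
    refine ⟨B ^ 2, fun t ht => ?_⟩
    obtain ⟨⟨h1, h2, h3⟩, h4, h5, h6⟩ := slice_bounds hs (le_max_right t 0)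
      (hB (max t 0) ⟨le_max_right _ _, max_le_max ht.2 le_rfl⟩)
    exact ⟨⟨h1.2, h2.2, h3.2⟩, h4.2, h5.2, h6.2⟩
  uxx2 T := by
    refine xx2 hs.smooth_x_u hs.smooth_t_u (lt_of_le_of_lt ?_ (hs.reg_H2 (max T 1) (by positivity)))
    exact lintegral_mono fun t => le_add_right (pow_le_pow_left₀ zero_le le_add_self 2)
  θxx2 T := by
    refine xx2 hs.smooth_x_θ hs.smooth_t_θ (lt_of_le_of_lt ?_ (hs.reg_H2 (max T 1) (by positivity)))
    refine lintegral_mono fun t => le_add_left (pow_le_pow_left₀ zero_le ?_ 2)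
    rw [H2, deriv_sub_one fun x => θ x t]
    exact le_add_self

end build
end NSLT

namespace NSLT

/-! ### Convergence of the norms -/

section norms
variable {f : ℝ → ℝ → ℝ} {C : ℝ} {G : ℝ → ℝ}

/-- Interpolation: a function bounded in `L²` whose derivative tends to zero in `L²` tends to zero
uniformly. The bound is through `|f| ≤ (4 ‖f‖₂² ‖f'‖₂²)^{1/4}`. -/
lemma exists_sup_bound (hC : ∀ t, 0 ≤ t → ∫ x, f x t ^ 2 ≤ C)
    (h4 : ∀ t x, f x t ^ 4 ≤ 4 * ((∫ y, f y t ^ 2) * G t)) (hG : ∀ t, 0 ≤ G t)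
    (lim : Tendsto G atTop (nhds 0)) :
    ∃ m : ℝ → ℝ, (∀ t, 0 ≤ m t) ∧ Tendsto m atTop (nhds 0) ∧ ∀ t, 0 ≤ t → ∀ x, |f x t| ≤ m t := by
  refine ⟨fun t => √√(4 * (C * G t)), fun t => Real.sqrt_nonneg _, ?_, fun t ht x => ?_⟩
  · have h : Tendsto (fun t => √√(4 * (C * G t))) atTop (nhds √√(4 * (C * 0))) :=
      ((lim.const_mul C).const_mul 4).sqrt.sqrt
    simpa using h
  · refine Real.le_sqrt_of_sq_le (Real.le_sqrt_of_sq_le ?_)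
    rw [sq_abs, ← pow_mul]
    refine (h4 t x).trans ?_
    have := mul_le_mul_of_nonneg_right (hC t ht) (hG t)
    linarith

lemma tendsto_sup {m : ℝ → ℝ} (hm : Tendsto m atTop (nhds 0))
    (h : ∀ t, 0 ≤ t → ∀ x, |f x t| ≤ m t) :
    Tendsto (fun t => ⨆ x : ℝ, (‖f x t‖₊ : ENNReal)) atTop (nhds 0) := by
  have h1 : Tendsto (fun t => ENNReal.ofReal (m t)) atTop (nhds 0) := by
    simpa using ENNReal.tendsto_ofReal hm
  refine tendsto_of_tendsto_of_tendsto_of_le_of_le' tendsto_const_nhds h1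
    (Eventually.of_forall fun _ => zero_le) ?_
  filter_upwards [eventually_ge_atTop (0:ℝ)] with t ht
  refine iSup_le fun x => ?_
  rw [← enorm_eq_nnnorm, ← ofReal_norm]
  exact ENNReal.ofReal_le_ofReal (h t ht x)

/-- The `L^p` norms tend to zero for `p > 2`, by `‖f‖_p^p ≤ ‖f‖_∞^{p-2} ‖f‖₂²`. -/
lemma tendsto_Lp (hf : ∀ t, MemLp (fun x => f x t) 2) (hC : ∀ t, 0 ≤ t → ∫ x, f x t ^ 2 ≤ C)
    {m : ℝ → ℝ} (hm : Tendsto m atTop (nhds 0))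
    (h : ∀ t, 0 ≤ t → ∀ x, |f x t| ≤ m t) {p : ℝ} (hp : 2 < p) :
    Tendsto (fun t => eLpNorm (fun x => f x t) (ENNReal.ofReal p) volume) atTop (nhds 0) := by
  have hp0 : 0 < p := by linarith
  have hp2 : 0 < p - 2 := by linarith
  have h1 : Tendsto (fun t => ENNReal.ofReal (m t)) atTop (nhds 0) := by
    simpa using ENNReal.tendsto_ofReal hm
  have h2 : Tendsto (fun t => (ENNReal.ofReal (m t) ^ (p - 2) * ENNReal.ofReal C) ^ (1 / p)) atTop
      (nhds 0) := by
    have h3 := (ENNReal.continuous_rpow_const (y := p - 2)).tendsto 0 |>.comp h1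
    have h4 := ENNReal.Tendsto.mul_const (b := ENNReal.ofReal C) h3 (Or.inr ENNReal.ofReal_ne_top)
    have h5 := (ENNReal.continuous_rpow_const (y := 1 / p)).tendsto _ |>.comp h4
    rw [ENNReal.zero_rpow_of_pos hp2, zero_mul, ENNReal.zero_rpow_of_pos (by positivity)] at h5
    exact h5
  refine tendsto_of_tendsto_of_tendsto_of_le_of_le' tendsto_const_nhds h2
    (Eventually.of_forall fun _ => zero_le) ?_
  filter_upwards [eventually_ge_atTop (0:ℝ)] with t ht
  rw [eLpNorm_eq_lintegral_rpow_enorm_toReal (by simpa using hp0) ENNReal.ofReal_ne_top,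
    ENNReal.toReal_ofReal hp0.le]
  refine ENNReal.rpow_le_rpow ?_ (by positivity)
  calc ∫⁻ x, ‖f x t‖ₑ ^ p ≤ ∫⁻ x, ENNReal.ofReal (m t) ^ (p - 2) * ‖f x t‖ₑ ^ 2 := by
        refine lintegral_mono fun x => ?_
        have h6 : ‖f x t‖ₑ ^ p = ‖f x t‖ₑ ^ (p - 2) * ‖f x t‖ₑ ^ 2 := by
          rw [← ENNReal.rpow_natCast, ← ENNReal.rpow_add_of_nonneg _ _ hp2.le (by norm_num)]
          norm_num
        rw [h6]
        refine mul_le_mul_left (ENNReal.rpow_le_rpow ?_ hp2.le) _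
        rw [← ofReal_norm]
        exact ENNReal.ofReal_le_ofReal (h t ht x)
    _ = ENNReal.ofReal (m t) ^ (p - 2) * ∫⁻ x, ‖f x t‖ₑ ^ 2 :=
        lintegral_const_mul' _ _ (ENNReal.rpow_ne_top_of_nonneg hp2.le ENNReal.ofReal_ne_top)
    _ ≤ _ := by
        rw [← L2_sq_lintegral, L2_sq (hf t)]
        exact mul_le_mul_right (ENNReal.ofReal_le_ofReal (hC t ht)) _

lemma tendsto_L2 (hf : ∀ t, MemLp (fun x => f x t) 2)
    (lim : Tendsto (fun t => ∫ x, f x t ^ 2) atTop (nhds 0)) :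
    Tendsto (fun t => L2 (fun x => f x t)) atTop (nhds 0) := by
  have h1 : Tendsto (fun t => ENNReal.ofReal (∫ x, f x t ^ 2)) atTop (nhds 0) := by
    simpa using ENNReal.tendsto_ofReal lim
  have h2 := (ENNReal.continuous_rpow_const (y := 1 / 2)).tendsto 0 |>.comp h1
  rw [ENNReal.zero_rpow_of_pos (by norm_num)] at h2
  refine h2.congr fun t => ?_
  rw [Function.comp_apply, ← L2_sq (hf t), ← ENNReal.rpow_natCast, ← ENNReal.rpow_mul]
  norm_num

lemma tendsto_add3 {a b c : ℝ → ENNReal} (ha : Tendsto a atTop (nhds 0))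
    (hb : Tendsto b atTop (nhds 0)) (hc : Tendsto c atTop (nhds 0)) :
    Tendsto (fun t => a t + b t + c t) atTop (nhds 0) := by
  simpa using (ha.add hb).add hc

end norms
end NSLT

open NSLT

/-- large-time asymptotic stability of the constant state. -/
theorem large_time_behavior
    (μ κ R cv M m K : ℝ) (hμ : 0 < μ) (hκ : 0 < κ) (hR : 0 < R) (hcv : 0 < cv)
    (hM : 0 < M) (hm : 0 < m) (hK : 1 ≤ K)
    (v u θ : ℝ → ℝ → ℝ)
    (hsol : IsClassicalSolution μ κ R cv v u θ)
    (hinit : InitBounded M m v u θ)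
    (hvol : VolBounded K v) :
    (∀ p : ℝ, 2 < p →
      Tendsto (fun t =>
          eLpNorm (fun x => v x t - 1) (ENNReal.ofReal p) volume
            + eLpNorm (fun x => u x t) (ENNReal.ofReal p) volume
            + eLpNorm (fun x => θ x t - 1) (ENNReal.ofReal p) volume)
        atTop (nhds 0))
    ∧ Tendsto (fun t =>
          (⨆ x : ℝ, (‖v x t - 1‖₊ : ENNReal))
            + (⨆ x : ℝ, (‖u x t‖₊ : ENNReal))
            + (⨆ x : ℝ, (‖θ x t - 1‖₊ : ENNReal)))
        atTop (nhds 0)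
    ∧ Tendsto (fun t =>
          L2 (fun x => pdx v x t) + L2 (fun x => pdx u x t) + L2 (fun x => pdx θ x t))
        atTop (nhds 0) := by
  let S : Sol ⟨μ, κ, R, cv, K, hμ, hκ, hR, hcv, hK⟩ := mkSol ⟨μ, κ, R, cv, K, hμ, hκ, hR, hcv, hK⟩ hsol hvol
  obtain ⟨⟨C, hC⟩, limV, limU, limT⟩ := S.decay
  obtain ⟨a, -, ha, ha'⟩ := exists_sup_bound (f := fun x t => (S.sl t).v x - 1)
    (fun t ht => (hC t ht).1) (fun t => (S.sl t).v_pow4) (fun t => (S.sl t).V1_nonneg) limV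
  obtain ⟨b, -, hb, hb'⟩ := exists_sup_bound (f := fun x t => (S.sl t).u x)
    (fun t ht => (hC t ht).2.1) (fun t => pow4_le (S.sl t).du (S.sl t).u2 (S.sl t).ux2)
    (fun t => (S.sl t).U1_nonneg) limU
  obtain ⟨c, -, hc, hc'⟩ := exists_sup_bound (f := fun x t => (S.sl t).θ x - 1)
    (fun t ht => (hC t ht).2.2) (fun t => (S.sl t).θ_pow4) (fun t => (S.sl t).T1_nonneg) limT
  -- for `t ≥ 0` the slice `S.sl t` is the solution at time `t`
  have hev : ∀ᶠ t : ℝ in atTop, max t 0 = t :=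
    (eventually_ge_atTop (0:ℝ)).mono fun t ht => max_eq_left ht
  refine ⟨fun p hp => ?_, ?_, ?_⟩
  · refine (tendsto_add3 (tendsto_Lp (fun t => (S.sl t).v2) (fun t ht => (hC t ht).1) ha ha' hp)
      (tendsto_Lp (fun t => (S.sl t).u2) (fun t ht => (hC t ht).2.1) hb hb' hp)
      (tendsto_Lp (fun t => (S.sl t).θ2) (fun t ht => (hC t ht).2.2) hc hc' hp)).congr' ?_
    filter_upwards [hev] with t ht
    simp only [S, mkSol, mkSl, ht]
  · refine (tendsto_add3 (tendsto_sup ha ha') (tendsto_sup hb hb') (tendsto_sup hc hc')).congr' ?_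
    filter_upwards [hev] with t ht
    simp only [S, mkSol, mkSl, ht]
  · refine (tendsto_add3 (tendsto_L2 (fun t => (S.sl t).vx2) limV)
      (tendsto_L2 (fun t => (S.sl t).ux2) limU) (tendsto_L2 (fun t => (S.sl t).θx2) limT)).congr' ?_
    filter_upwards [hev] with t ht
    simp only [S, mkSol, mkSl, ht]
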